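/- Let Q be a bipartite recurrent quiver on a finite vertex set V such that G(Q) is an admissible ADE bigraph, in which every connected component of Γ has Coxeter number h and every connected component of Δ has Coxeter number h'. Then the T-system associated with Q satisfies T(t + 2(h+h'), v) = T(t, v), and for every λ : V → ℝ the tropical T-system satisfies f^λ(t + 2(h+h'), v) = f^λ(t, v), for all v ∈ V and t ∈ ℤ with t + ε(v) even. -/

import Mathlib

/-!
# Periodicity of T-systems for admissible ADE bigraphs

The `T`-system is deformed by coefficients. Positive real variables `X` and coefficients `y`
evolve by `X(t+1) X(t-1) = ∏ X(t)^A + y(t) ∏ X(t)^B` and `y(t+1) y(t-1) = ∏ y(t)^A`, where all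
initial coefficients are `z` at one initial time and `z⁻¹` at the other. All vertices are updated at
every step, so that two bipartite halves run simultaneously. At `z = 1` this is the `T`-system.

* **Laurent phenomenon.** Since `A B = B A`, all variables are Laurent polynomials in the initial
  data (`laurent_phenomenon`). The property carried from one time to the next is that of the upper
  bound of a cluster algebra: being Laurent in the initial variables and after any single exchange.
  Its propagation (`isL_step_back`) needs that the variable `x3`, two exchanges ahead, is Laurent
  and prime to the exchange polynomial (`x3_eq`). Hence, for fixed positive initial values, every
  variable is a Laurent polynomial in `z` (`exists_polynomial`).
* **Asymptotics.** As `z → ∞` and as `z → 0`, one of the two monomials dominates at every step, and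
  the logarithms follow a linear recursion (`asymptotics`). Which monomial dominates is decided by
  the sign of the exponent of the coefficients (`phase_sign`), and the operators `A` and `B` are used
  in blocks of lengths `h, h', h, h'`, in the order `A B A B` at one end and `B A B A` at the other.
  On a block of length `h` a Dynkin diagram acts by an involution up to sign, so the initial values
  return after time `2 (h + h')` (`phase_periodic`), and the exponent of `z` is the same at both ends
  (`phase_driven`). A Laurent polynomial that is asymptotic to the same `c z ^ ρ` at both ends is
  `c z ^ ρ` (`eval_one_of_asymptotics`). Its value at `z = 1` is `c`, the initial value; this is the
  periodicity over the positive reals (`deformed_periodic`, `real_periodic`).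
* **Dynkin diagrams.** The facts on Dynkin diagrams that enter are those of the structure `Cox`. In
  type `A` they express the reflection of solutions of the discrete wave equation on a path, type `D`
  is reduced to a path of length `2 (n - 1)` by unfolding, and type `E` is a finite computation.
* **Transfer.** The `T`-variables are quotients of polynomials that are positive at positive points
  (`PosRep`), so they are determined by their values there. The tropical solution is the limit of
  `s⁻¹ log` of the values at the point `exp (s λ)` as `s → ∞`.
-/


open scoped BigOperators

/-- A bipartite quiver on a finite vertex set `V`, encoded by a bipartition `eps`
and the two symmetric edge-multiplicity matrices `A` (arrows from `eps = 0` to `eps = 1`)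
and `B` (arrows from `eps = 1` to `eps = 0`). -/
def BipartiteData {V : Type} [Fintype V] (eps : V → ℤ) (A B : V → V → ℕ) : Prop :=
  (∀ v, eps v = 0 ∨ eps v = 1) ∧
  (∀ u v, A u v = A v u) ∧
  (∀ u v, B u v = B v u) ∧
  (∀ v, A v v = 0) ∧
  (∀ v, B v v = 0) ∧
  (∀ u v, eps u = eps v → A u v = 0 ∧ B u v = 0) ∧
  (∀ u v, A u v * B u v = 0)

/-- A bipartite quiver is recurrent iff the matrices `A` and `B` commute. -/
def RecurrentQuiver {V : Type} [Fintype V] (A B : V → V → ℕ) : Prop :=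
  ∀ u v, (∑ w, A u w * B w v) = ∑ w, B u w * A w v

/-- The `T`-system associated with a bipartite quiver: a family `T t v` of elements of the
field of fractions of `ℚ[x_v : v ∈ V]` satisfying
`T (t+1) v * T (t-1) v = ∏ u, T t u ^ A v u + ∏ u, T t u ^ B v u` whenever `t + eps v` is odd,
with initial conditions `T (eps v) v = x_v`. -/
def IsTSystem {V : Type} [Fintype V] (eps : V → ℤ) (A B : V → V → ℕ)
    (T : ℤ → V → FractionRing (MvPolynomial V ℚ)) : Prop :=
  (∀ v, T (eps v) v =
      algebraMap (MvPolynomial V ℚ) (FractionRing (MvPolynomial V ℚ)) (MvPolynomial.X v)) ∧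
  (∀ (t : ℤ) (v : V), Odd (t + eps v) →
    T (t + 1) v * T (t - 1) v = (∏ u, T t u ^ A v u) + (∏ u, T t u ^ B v u))

/-- The tropical `T`-system associated with a bipartite quiver, with initial value `lam`. -/
def IsTropicalTSystem {V : Type} [Fintype V] (eps : V → ℤ) (A B : V → V → ℕ)
    (lam : V → ℝ) (f : ℤ → V → ℝ) : Prop :=
  (∀ v, f (eps v) v = lam v) ∧
  (∀ (t : ℤ) (v : V), Odd (t + eps v) →
    f (t + 1) v + f (t - 1) v =
      max (∑ u, (A v u : ℝ) * f t u) (∑ u, (B v u : ℝ) * f t u))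

/-- The Dynkin diagram `A_n`: vertices `0, …, n-1` with edges `{i, i+1}`. -/
def adeA (n : ℕ) : SimpleGraph (Fin n) :=
  SimpleGraph.fromRel (fun i j => (i : ℕ) + 1 = (j : ℕ))

/-- The Dynkin diagram `D_n` (`n ≥ 4`): a path on vertices `0, …, n-2`
together with the edge `{n-3, n-1}`. -/
def adeD (n : ℕ) : SimpleGraph (Fin n) :=
  SimpleGraph.fromRel (fun i j =>
    ((i : ℕ) + 1 = (j : ℕ) ∧ (j : ℕ) ≤ n - 2) ∨ ((i : ℕ) = n - 3 ∧ (j : ℕ) = n - 1))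

/-- The Dynkin diagram `E_n` (`n = 6, 7, 8`): a path on vertices `0, …, n-2`
together with the edge `{2, n-1}`. -/
def adeE (n : ℕ) : SimpleGraph (Fin n) :=
  SimpleGraph.fromRel (fun i j =>
    ((i : ℕ) + 1 = (j : ℕ) ∧ (j : ℕ) ≤ n - 2) ∨ ((i : ℕ) = 2 ∧ (j : ℕ) = n - 1))

/-- A graph is an ADE Dynkin diagram if it is isomorphic to some `A_n` (`n ≥ 1`),
`D_n` (`n ≥ 4`), or `E_n` (`n = 6, 7, 8`). -/
def IsADE {W : Type*} (G : SimpleGraph W) : Prop :=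
  (∃ n : ℕ, 1 ≤ n ∧ Nonempty (G ≃g adeA n)) ∨
  (∃ n : ℕ, 4 ≤ n ∧ Nonempty (G ≃g adeD n)) ∨
  (∃ n : ℕ, (n = 6 ∨ n = 7 ∨ n = 8) ∧ Nonempty (G ≃g adeE n))

/-- `G` is an ADE Dynkin diagram with Coxeter number `h`:
`h(A_n) = n+1`, `h(D_n) = 2n-2`, `h(E_6) = 12`, `h(E_7) = 18`, `h(E_8) = 30`. -/
def HasCoxeterNumber {W : Type*} (G : SimpleGraph W) (h : ℕ) : Prop :=
  (∃ n : ℕ, 1 ≤ n ∧ h = n + 1 ∧ Nonempty (G ≃g adeA n)) ∨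
  (∃ n : ℕ, 4 ≤ n ∧ h = 2 * n - 2 ∧ Nonempty (G ≃g adeD n)) ∨
  ((h = 12 ∧ Nonempty (G ≃g adeE 6)) ∨ (h = 18 ∧ Nonempty (G ≃g adeE 7)) ∨
    (h = 30 ∧ Nonempty (G ≃g adeE 8)))

/-- The simple graph on `V` whose edges are the pairs `{u, v}` with `A u v = 1`. -/
def graphOf {V : Type} (A : V → V → ℕ) : SimpleGraph V :=
  SimpleGraph.fromRel (fun u v => A u v = 1)

/-- `G(Q)` is an admissible ADE bigraph: `A` and `B` take values in `{0, 1}` and every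
connected component of `Γ` and of `Δ` is an ADE Dynkin diagram. -/
def AdmissibleADE {V : Type} [Fintype V] (A B : V → V → ℕ) : Prop :=
  (∀ u v, A u v ≤ 1) ∧ (∀ u v, B u v ≤ 1) ∧
  (∀ c : (graphOf A).ConnectedComponent, IsADE ((graphOf A).induce c.supp)) ∧
  (∀ c : (graphOf B).ConnectedComponent, IsADE ((graphOf B).induce c.supp))

set_option linter.unusedSectionVars false

/-! ### Laurent polynomial functions -/

/-- The positive reals, the domain over which all rational functions of the proof live. -/
abbrev PR := {x : ℝ // 0 < x}

/-- `f` is a Laurent polynomial function on the positive orthant. -/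
def IsL {ι : Type} [Fintype ι] (f : (ι → PR) → ℝ) : Prop :=
  ∃ (m : ℕ) (P : MvPolynomial ι ℝ), ∀ s : ι → PR,
    f s * (∏ i, (s i : ℝ)) ^ m = MvPolynomial.eval (fun i => (s i : ℝ)) P

section Laurent

variable {ι : Type} [Fintype ι]

theorem prodPos (s : ι → PR) : 0 < ∏ i, (s i : ℝ) := Finset.prod_pos fun i _ => (s i).2

theorem IsL.poly (P : MvPolynomial ι ℝ) :
    IsL (fun s : ι → PR => MvPolynomial.eval (fun i => (s i : ℝ)) P) :=
  ⟨0, P, fun s => by simp⟩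

theorem IsL.const (c : ℝ) : IsL (fun _ : ι → PR => c) := by
  simpa using IsL.poly (ι := ι) (MvPolynomial.C c)

theorem IsL.one : IsL (fun _ : ι → PR => (1 : ℝ)) := IsL.const 1

theorem IsL.coord (i : ι) : IsL (fun s : ι → PR => (s i : ℝ)) := by
  simpa using IsL.poly (ι := ι) (MvPolynomial.X i)

theorem IsL.mul {f g : (ι → PR) → ℝ} (hf : IsL f) (hg : IsL g) :
    IsL (fun s => f s * g s) := by
  obtain ⟨m, P, hP⟩ := hf
  obtain ⟨n, Q, hQ⟩ := hg
  refine ⟨m + n, P * Q, fun s => ?_⟩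
  rw [map_mul, ← hP, ← hQ]; ring

theorem IsL.add {f g : (ι → PR) → ℝ} (hf : IsL f) (hg : IsL g) :
    IsL (fun s => f s + g s) := by
  obtain ⟨m, P, hP⟩ := hf
  obtain ⟨n, Q, hQ⟩ := hg
  refine ⟨m + n, P * (∏ i, MvPolynomial.X i) ^ n + Q * (∏ i, MvPolynomial.X i) ^ m,
    fun s => ?_⟩
  simp only [map_add, map_mul, map_pow, map_prod, MvPolynomial.eval_X]
  rw [← hP, ← hQ]; ring

theorem IsL.sub {f g : (ι → PR) → ℝ} (hf : IsL f) (hg : IsL g) :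
    IsL (fun s => f s - g s) := by
  have := hf.add ((IsL.const (-1)).mul hg)
  convert this using 2; ring

theorem IsL.pow {f : (ι → PR) → ℝ} (hf : IsL f) (n : ℕ) : IsL (fun s => f s ^ n) := by
  induction n with
  | zero => simpa using IsL.one
  | succ n ih => simpa only [pow_succ] using ih.mul hf

theorem IsL.prod {κ : Type} (S : Finset κ) {f : κ → (ι → PR) → ℝ} (hf : ∀ k ∈ S, IsL (f k)) :
    IsL (fun s => ∏ k ∈ S, f k s) := by
  classical
  induction S using Finset.induction_on with
  | empty => simpa using IsL.one
  | insert a S ha ih =>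
    simp only [Finset.prod_insert ha]
    exact (hf a (by simp)).mul (ih fun k hk => hf k (by simp [hk]))

theorem IsL.coord_inv (i : ι) : IsL (fun s : ι → PR => (s i : ℝ)⁻¹) := by
  classical
  refine ⟨1, ∏ j ∈ Finset.univ.erase i, MvPolynomial.X j, fun s => ?_⟩
  rw [← Finset.mul_prod_erase _ _ (Finset.mem_univ i)]
  have := (s i).2.ne'
  simp [map_prod]; field_simp

/-- Polynomials are determined by their values on the positive orthant. -/
theorem poly_ext {P Q : MvPolynomial ι ℝ}
    (h : ∀ s : ι → PR, MvPolynomial.eval (fun i => (s i : ℝ)) P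
      = MvPolynomial.eval (fun i => (s i : ℝ)) Q) : P = Q := by
  refine MvPolynomial.funext_set (fun _ => Set.Ioi (0 : ℝ)) (fun _ => Set.Ioi_infinite 0) ?_
  intro x hx
  exact h fun i => ⟨x i, hx i (Set.mem_univ i)⟩

theorem IsL.eval_comp {ι' : Type} (P : MvPolynomial ι' ℝ) {φ : ι' → (ι → PR) → ℝ}
    (hφ : ∀ j, IsL (φ j)) : IsL (fun s => MvPolynomial.eval (fun j => φ j s) P) := by
  induction P using MvPolynomial.induction_on with
  | C a => simpa using IsL.const a
  | add p q hp hq => simpa using hp.add hq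
  | mul_X p i hp => simpa using hp.mul (hφ i)

/-- Substitution into a Laurent polynomial: the only denominators produced are powers of a common
multiple `D` of the substituted coordinates. -/
theorem IsL.comp {ι' : Type} [Fintype ι'] {f : (ι' → PR) → ℝ} (hf : IsL f)
    {κ : (ι → PR) → (ι' → PR)} (D : (ι → PR) → ℝ)
    (h1 : ∀ j, IsL (fun s => (κ s j : ℝ)))
    (h2 : ∀ j, IsL (fun s => D s * (κ s j : ℝ)⁻¹)) :
    ∃ m : ℕ, IsL (fun s => f (κ s) * D s ^ m) := by
  obtain ⟨m, P, hP⟩ := hf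
  refine ⟨Fintype.card ι' * m, ?_⟩
  have := (IsL.eval_comp P h1).mul ((IsL.prod Finset.univ (fun j _ => h2 j)).pow m)
  refine (congrArg IsL (funext fun s => ?_)).mp this
  rw [← hP, Finset.prod_mul_distrib, Finset.prod_inv_distrib, Finset.prod_const,
    Finset.card_univ]
  have := (prodPos (κ s)).ne'
  rw [mul_pow, ← pow_mul, inv_pow]
  field_simp

theorem IsL.comp_unit {ι' : Type} [Fintype ι'] {f : (ι' → PR) → ℝ} (hf : IsL f)
    {κ : (ι → PR) → (ι' → PR)}
    (h1 : ∀ j, IsL (fun s => (κ s j : ℝ)))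
    (h2 : ∀ j, IsL (fun s => (κ s j : ℝ)⁻¹)) : IsL (fun s => f (κ s)) := by
  obtain ⟨m, hm⟩ := hf.comp (fun _ => 1) h1 (by simpa using h2)
  simpa using hm

/-- `p` is a positive prime element of the ring of Laurent polynomial functions; since `p` never
vanishes, divisibility of `f` by `p` is the statement that `f / p` is again Laurent. -/
structure LPrime (p : (ι → PR) → ℝ) : Prop where
  isL : IsL p
  pos : ∀ s, 0 < p s
  not_unit : ¬ IsL (fun s => 1 / p s)
  dvd_mul : ∀ f g : (ι → PR) → ℝ, IsL f → IsL g → IsL (fun s => f s * g s / p s) →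
    IsL (fun s => f s / p s) ∨ IsL (fun s => g s / p s)

theorem lprime_of_prime (P : MvPolynomial ι ℝ) (hP : Prime P)
    (hpos : ∀ s : ι → PR, 0 < MvPolynomial.eval (fun i => (s i : ℝ)) P)
    (hX : ∀ i, ¬ P ∣ MvPolynomial.X i) :
    LPrime (fun s : ι → PR => MvPolynomial.eval (fun i => (s i : ℝ)) P) := by
  have hM : ∀ n, ¬ P ∣ (∏ i, (MvPolynomial.X i : MvPolynomial ι ℝ)) ^ n := by
    intro n hn
    obtain ⟨i, -, hi⟩ := (hP.dvd_finsetProd_iff _).1 (hP.dvd_of_dvd_pow hn)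
    exact hX i hi
  refine ⟨IsL.poly P, hpos, ?_, ?_⟩
  · rintro ⟨m, H, hH⟩
    refine hM m ⟨H, poly_ext fun s => ?_⟩
    rw [map_mul, ← hH]
    have := (hpos s).ne'
    simp only [map_prod, map_pow, MvPolynomial.eval_X]
    field_simp
  · rintro f g ⟨m, F, hF⟩ ⟨k, G, hG⟩ ⟨n, H, hH⟩
    have key : F * G * (∏ i, MvPolynomial.X i) ^ n
        = P * (H * (∏ i, MvPolynomial.X i) ^ (m + k)) := by
      refine poly_ext fun s => ?_
      simp only [map_prod, map_pow, map_mul, MvPolynomial.eval_X]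
      rw [← hF, ← hG, ← hH]
      have := (hpos s).ne'
      field_simp
      try ring
    rcases hP.dvd_or_dvd (Dvd.intro _ key.symm) with h | h
    · rcases hP.dvd_or_dvd h with ⟨F', h⟩ | ⟨F', h⟩
      · refine Or.inl ⟨m, F', fun s => ?_⟩
        have := (hpos s).ne'
        have e := hF s
        rw [h, map_mul] at e
        rw [div_mul_eq_mul_div, e]; field_simp
      · refine Or.inr ⟨k, F', fun s => ?_⟩
        have := (hpos s).ne'
        have e := hG s
        rw [h, map_mul] at e
        rw [div_mul_eq_mul_div, e]; field_simp
    · exact absurd h (hM n)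

/-- If `g / p` is Laurent then `g` vanishes at every zero of `p` in the (real, signed) torus. -/
theorem zero_of_dvd (P G : MvPolynomial ι ℝ)
    (hpos : ∀ s : ι → PR, 0 < MvPolynomial.eval (fun i => (s i : ℝ)) P)
    (h : IsL (fun s : ι → PR => MvPolynomial.eval (fun i => (s i : ℝ)) G /
      MvPolynomial.eval (fun i => (s i : ℝ)) P))
    (x : ι → ℝ) (hx : ∀ i, x i ≠ 0) (h0 : MvPolynomial.eval x P = 0) :
    MvPolynomial.eval x G = 0 := by
  obtain ⟨m, H, hH⟩ := h
  have key : G * (∏ i, MvPolynomial.X i) ^ m = H * P := by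
    refine poly_ext fun s => ?_
    simp only [map_prod, map_pow, map_mul, MvPolynomial.eval_X]
    rw [← hH]
    have := (hpos s).ne'
    field_simp
  have := congrArg (MvPolynomial.eval x) key
  simp only [map_prod, map_pow, map_mul, MvPolynomial.eval_X, h0, mul_zero] at this
  exact (mul_eq_zero.1 this).resolve_right
    (pow_ne_zero _ (Finset.prod_ne_zero_iff.2 fun i _ => hx i))

/-- A denominator `p ^ n` of `f` is cancelled if `f β` is Laurent for some Laurent `β` that is not
divisible by the prime `p`. -/
theorem LPrime.cancel {p f β : (ι → PR) → ℝ} (hp : LPrime p) (n : ℕ)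
    (h1 : IsL (fun s => f s * p s ^ n)) (h2 : IsL (fun s => f s * β s)) (hβ : IsL β)
    (h3 : ¬ IsL (fun s => β s / p s)) : IsL f := by
  induction n with
  | zero => simpa using h1
  | succ n ih =>
    refine ih ?_
    refine ((hp.dvd_mul _ β h1 hβ ?_).resolve_right h3).imp ?_
    · refine (congrArg IsL (funext fun s => ?_)).mp (h2.mul (hp.isL.pow n))
      have := (hp.pos s).ne'
      field_simp
      ring
    · rintro m ⟨P, hP⟩
      refine ⟨P, fun s => ?_⟩
      rw [← hP]
      have := (hp.pos s).ne'
      field_simp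
      ring

theorem LPrime.not_dvd_mul {p f g : (ι → PR) → ℝ} (hp : LPrime p) (hf : IsL f) (hg : IsL g)
    (h1 : ¬ IsL (fun s => f s / p s)) (h2 : ¬ IsL (fun s => g s / p s)) :
    ¬ IsL (fun s => f s * g s / p s) := fun h => (hp.dvd_mul f g hf hg h).elim h1 h2

theorem LPrime.not_dvd_unit {p u : (ι → PR) → ℝ} (hp : LPrime p)
    (hu0 : ∀ s, u s ≠ 0) (hu' : IsL (fun s => (u s)⁻¹)) : ¬ IsL (fun s => u s / p s) := by
  intro h
  refine hp.not_unit ((congrArg IsL (funext fun s => ?_)).mp (h.mul hu'))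
  have := hu0 s
  have := (hp.pos s).ne'
  field_simp

theorem LPrime.not_dvd_prod {p : (ι → PR) → ℝ} (hp : LPrime p) {κ : Type} (S : Finset κ)
    (f : κ → (ι → PR) → ℝ) (hf : ∀ k ∈ S, IsL (f k))
    (h : ∀ k ∈ S, ¬ IsL (fun s => f k s / p s)) :
    ¬ IsL (fun s => (∏ k ∈ S, f k s) / p s) := by
  classical
  induction S using Finset.induction_on with
  | empty => simpa using hp.not_unit
  | insert a S ha ih =>
    simp only [Finset.prod_insert ha]
    exact hp.not_dvd_mul (hf a (by simp)) (IsL.prod S fun k hk => hf k (by simp [hk]))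
      (h a (by simp)) (ih (fun k hk => hf k (by simp [hk])) fun k hk => h k (by simp [hk]))

theorem LPrime.not_dvd_pow {p f : (ι → PR) → ℝ} (hp : LPrime p) (hf : IsL f)
    (h : ¬ IsL (fun s => f s / p s)) (n : ℕ) : ¬ IsL (fun s => f s ^ n / p s) := by
  have := hp.not_dvd_prod (Finset.range n) (fun _ => f) (fun _ _ => hf) (fun _ _ => h)
  simpa using this

/-- The exchange binomial `∏ xᵤ^{aᵤ} + y ∏ xᵤ^{bᵤ}`, with the two monomials coprime. -/
noncomputable def exch {V : Type} [Fintype V] (x : V → ℝ) (y : ℝ) (a b : V → ℕ) : ℝ :=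
  ∏ u, x u ^ a u + y * ∏ u, x u ^ b u

/-- The exchange binomial as a polynomial. -/
noncomputable def exchPoly {V : Type} [Fintype V] (φ : V → ι) (j : ι) (a b : V → ℕ) :
    MvPolynomial ι ℝ :=
  (∏ u, MvPolynomial.X (φ u) ^ b u) * MvPolynomial.X j + ∏ u, MvPolynomial.X (φ u) ^ a u

theorem eval_exchPoly {V : Type} [Fintype V] (φ : V → ι) (j : ι) (a b : V → ℕ) (x : ι → ℝ) :
    MvPolynomial.eval x (exchPoly φ j a b) = exch (fun u => x (φ u)) (x j) a b := by
  simp [exchPoly, exch, map_prod]; ring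

theorem exchPoly_prime {V : Type} [Fintype V] (φ : V → ι) (hφ : Function.Injective φ) (j : ι)
    (hj : ∀ u, φ u ≠ j) (a b : V → ℕ) (hab : ∀ u, a u * b u = 0) :
    Prime (exchPoly φ j a b) := by
  classical
  have hnv : ∀ c : V → ℕ, j ∉ (∏ u, (MvPolynomial.X (φ u) : MvPolynomial ι ℝ) ^ c u).vars := by
    intro c hc
    have := MvPolynomial.vars_prod (fun u => (MvPolynomial.X (φ u) : MvPolynomial ι ℝ) ^ c u) hc
    simp only [Finset.mem_biUnion] at this
    obtain ⟨u, -, hu⟩ := this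
    have := MvPolynomial.vars_pow _ _ hu
    simp at this
    exact hj u this.symm
  refine (MvPolynomial.irreducible_mul_X_add _ _ j ?_ (hnv b) (hnv a) ?_).prime
  · exact Finset.prod_ne_zero_iff.2 fun u _ => pow_ne_zero _ (MvPolynomial.X_ne_zero _)
  · refine IsRelPrime.prod_left fun u _ => IsRelPrime.prod_right fun w _ => ?_
    by_cases huw : u = w
    · subst huw
      rcases mul_eq_zero.1 (hab u) with h | h
      · rw [h, pow_zero]; exact isRelPrime_one_right
      · rw [h, pow_zero]; exact isRelPrime_one_left
    · refine IsRelPrime.pow ?_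
      rw [(MvPolynomial.X_prime (R := ℝ)).irreducible.isRelPrime_iff_not_dvd]
      rw [MvPolynomial.X_dvd_X]
      simpa using fun h => huw (hφ h)

theorem exch_pos {V : Type} [Fintype V] {x : V → ℝ} {y : ℝ} (hx : ∀ u, 0 < x u) (hy : 0 < y)
    (a b : V → ℕ) : 0 < exch x y a b :=
  add_pos (Finset.prod_pos fun u _ => pow_pos (hx u) _)
    (mul_pos hy (Finset.prod_pos fun u _ => pow_pos (hx u) _))

theorem exch_lprime {V : Type} [Fintype V] (φ : V → ι) (hφ : Function.Injective φ) (j : ι)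
    (hj : ∀ u, φ u ≠ j) (a b : V → ℕ) (hab : ∀ u, a u * b u = 0) :
    LPrime (fun s : ι → PR => exch (fun u => (s (φ u) : ℝ)) (s j) a b) := by
  have := lprime_of_prime _ (exchPoly_prime φ hφ j hj a b hab) ?_ ?_
  · simpa only [eval_exchPoly] using this
  · intro s
    rw [eval_exchPoly]
    exact exch_pos (fun u => (s _).2) (s j).2 _ _
  · rintro i ⟨Q, hQ⟩
    classical
    have := congrArg (MvPolynomial.eval fun k => if k = j then (-1 : ℝ) else 1) hQ
    rw [map_mul, eval_exchPoly] at this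
    simp [exch, hj] at this
    split_ifs at this <;> norm_num at this

/-- Distinct exchange binomials do not divide each other: at the point with all coordinates `1`
except `y = -1` only the divisor vanishes. -/
theorem exch_not_dvd {V : Type} [Fintype V] (φ φ' : V → ι) (j j' : ι)
    (hj : ∀ u, φ u ≠ j) (hj' : ∀ u, φ' u ≠ j) (hjj : j' ≠ j) (a b a' b' : V → ℕ) :
    ¬ IsL (fun s : ι → PR => exch (fun u => (s (φ' u) : ℝ)) (s j') a' b' /
      exch (fun u => (s (φ u) : ℝ)) (s j) a b) := by
  classical
  intro h
  have := zero_of_dvd (exchPoly φ j a b) (exchPoly φ' j' a' b') ?_ ?_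
    (fun k => if k = j then (-1 : ℝ) else 1) ?_ ?_
  · rw [eval_exchPoly] at this
    simp [exch, hj', hjj] at this
  · intro s
    rw [eval_exchPoly]
    exact exch_pos (fun u => (s _).2) (s j).2 _ _
  · simpa only [eval_exchPoly] using h
  · intro i; split_ifs <;> norm_num
  · rw [eval_exchPoly]
    simp [exch, hj]

theorem IsL.exch {V : Type} [Fintype V] {x : V → (ι → PR) → ℝ} {y : (ι → PR) → ℝ}
    (hx : ∀ u, IsL (x u)) (hy : IsL y) (a b : V → ℕ) :
    IsL (fun s => exch (fun u => x u s) (y s) a b) :=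
  (IsL.prod _ fun u _ => (hx u).pow _).add (hy.mul (IsL.prod _ fun u _ => (hx u).pow _))

end Laurent

/-! ### The deformed system -/

section Phenomenon

variable {V : Type} [Fintype V] [DecidableEq V]

theorem PR.coe_div (x y : PR) : ((x / y : PR) : ℝ) = x / y := by
  rw [div_eq_mul_inv, div_eq_mul_inv, Positive.val_mul, Positive.coe_inv]

/-- The exchange binomial with values in the positive reals. -/
noncomputable def pexch (x : V → PR) (y : PR) (a b : V → ℕ) : PR :=
  ⟨exch (fun u => (x u : ℝ)) y a b, exch_pos (fun u => (x u).2) y.2 a b⟩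

/-- The monomial `∏ xᵤ^{aᵤ}` with values in the positive reals. -/
noncomputable def pmon (x : V → PR) (a : V → ℕ) : PR :=
  ⟨∏ u, (x u : ℝ) ^ a u, Finset.prod_pos fun u _ => pow_pos (x u).2 _⟩

theorem coe_pexch (x : V → PR) (y : PR) (a b : V → ℕ) :
    (pexch x y a b : ℝ) = exch (fun u => (x u : ℝ)) y a b := rfl

theorem coe_pmon (x : V → PR) (a : V → ℕ) : (pmon x a : ℝ) = ∏ u, (x u : ℝ) ^ a u := rfl

/-- The state of the deformed system with variables `a, b` at two consecutive times and
coefficients `c, d` at the same two times. -/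
def mk4 (a b c d : V → PR) : Fin 4 × V → PR := fun i => ![a i.2, b i.2, c i.2, d i.2] i.1

@[simp] theorem mk4_0 (a b c d : V → PR) (v : V) : mk4 a b c d (0, v) = a v := rfl
@[simp] theorem mk4_1 (a b c d : V → PR) (v : V) : mk4 a b c d (1, v) = b v := rfl
@[simp] theorem mk4_2 (a b c d : V → PR) (v : V) : mk4 a b c d (2, v) = c v := rfl
@[simp] theorem mk4_3 (a b c d : V → PR) (v : V) : mk4 a b c d (3, v) = d v := rfl

variable (A B : V → V → ℕ)

/-- The exchange polynomial `P_v(b, d_v)` producing the variables at the next time. -/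
noncomputable def pb (s : Fin 4 × V → PR) (v : V) : PR :=
  pexch (fun u => s (1, u)) (s (3, v)) (A v) (B v)

/-- The exchange polynomial `P_v(a, c_v)` producing the variables at the previous time. -/
noncomputable def pa (s : Fin 4 × V → PR) (v : V) : PR :=
  pexch (fun u => s (0, u)) (s (2, v)) (A v) (B v)

/-- The coefficients at the next time. -/
noncomputable def qn (s : Fin 4 × V → PR) (v : V) : PR :=
  pmon (fun u => s (3, u)) (A v) / s (2, v)

/-- One time step of the deformed system. -/
noncomputable def step (s : Fin 4 × V → PR) : Fin 4 × V → PR :=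
  mk4 (fun v => s (1, v)) (fun v => pb A B s v / s (0, v)) (fun v => s (3, v)) (qn A s)

/-- The monomial part of `step`. -/
noncomputable def rho (s : Fin 4 × V → PR) : Fin 4 × V → PR :=
  mk4 (fun v => s (1, v)) (fun v => s (0, v)) (fun v => s (3, v)) (qn A s)

/-- Simultaneous exchange of the variables `a_v`, `v ∈ S`. -/
noncomputable def kap (S : Finset V) (s : Fin 4 × V → PR) : Fin 4 × V → PR :=
  mk4 (fun v => if v ∈ S then pb A B s v / s (0, v) else s (0, v)) (fun v => s (1, v))
    (fun v => s (2, v)) (fun v => s (3, v))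

/-- Exchange of the variable `b_w`. -/
noncomputable def kap' (w : V) (s : Fin 4 × V → PR) : Fin 4 × V → PR :=
  mk4 (fun v => s (0, v)) (fun v => if v = w then pa A B s w / s (1, w) else s (1, v))
    (fun v => s (2, v)) (fun v => s (3, v))

theorem st_ext {s s' : Fin 4 × V → PR} (h0 : ∀ v, s (0, v) = s' (0, v))
    (h1 : ∀ v, s (1, v) = s' (1, v)) (h2 : ∀ v, s (2, v) = s' (2, v))
    (h3 : ∀ v, s (3, v) = s' (3, v)) : s = s' := by
  funext ⟨k, v⟩
  fin_cases k
  exacts [h0 v, h1 v, h2 v, h3 v]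

theorem forall_slot {p : Fin 4 × V → Prop} (h0 : ∀ v, p (0, v))
    (h1 : ∀ v, p (1, v)) (h2 : ∀ v, p (2, v)) (h3 : ∀ v, p (3, v)) : ∀ j, p j := by
  rintro ⟨k, v⟩
  fin_cases k
  exacts [h0 v, h1 v, h2 v, h3 v]

theorem kap_kap (S S' : Finset V) (s : Fin 4 × V → PR) :
    kap A B S (kap A B S' s) = kap A B (symmDiff S S') s := by
  refine st_ext (fun v => ?_) (fun v => rfl) (fun v => rfl) (fun v => rfl)
  have h : ∀ v, pb A B (kap A B S' s) v = pb A B s v := fun v => rfl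
  simp only [kap, mk4_0, Finset.mem_symmDiff] at h ⊢
  by_cases h1 : v ∈ S <;> by_cases h2 : v ∈ S' <;> simp [h1, h2, h]

theorem kap_self (S : Finset V) (s : Fin 4 × V → PR) : kap A B S (kap A B S s) = s := by
  rw [kap_kap, symmDiff_self]
  exact st_ext (fun v => by simp [kap]) (fun v => rfl) (fun v => rfl) (fun v => rfl)

theorem kap'_self (w : V) (s : Fin 4 × V → PR) : kap' A B w (kap' A B w s) = s := by
  refine st_ext (fun v => rfl) (fun v => ?_) (fun v => rfl) (fun v => rfl)
  have h : pa A B (kap' A B w s) w = pa A B s w := rfl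
  simp only [kap', mk4_1] at h ⊢
  by_cases h1 : v = w
  · subst h1; simp [h]
  · simp [h1]

theorem step_eq (s : Fin 4 × V → PR) : step A B s = rho A (kap A B Finset.univ s) := by
  refine st_ext (fun v => rfl) (fun v => ?_) (fun v => rfl) (fun v => rfl)
  simp [step, rho, kap]

theorem kap'_step (v : V) (s : Fin 4 × V → PR) :
    kap' A B v (step A B s) = rho A (kap A B (Finset.univ.erase v) s) := by
  refine st_ext (fun u => rfl) (fun u => ?_) (fun v => rfl) (fun v => rfl)
  have h : pa A B (step A B s) v = pb A B s v := rfl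
  by_cases h1 : u = v
  · subst h1
    simp only [kap', rho, kap, mk4_1, h]
    simp [step]
  · simp [kap', rho, kap, h1, step]

theorem isL_pb (v : V) : IsL (fun s : Fin 4 × V → PR => (pb A B s v : ℝ)) :=
  IsL.exch (fun _ => IsL.coord _) (IsL.coord _) _ _

theorem isL_pa (v : V) : IsL (fun s : Fin 4 × V → PR => (pa A B s v : ℝ)) :=
  IsL.exch (fun _ => IsL.coord _) (IsL.coord _) _ _

theorem isL_qn (v : V) : IsL (fun s : Fin 4 × V → PR => (qn A s v : ℝ)) := by
  simp only [qn, PR.coe_div, coe_pmon]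
  simp only [div_eq_mul_inv]
  exact (IsL.prod _ fun u _ => (IsL.coord _).pow _).mul (IsL.coord_inv _)

theorem isL_qn_inv (v : V) : IsL (fun s : Fin 4 × V → PR => (qn A s v : ℝ)⁻¹) := by
  simp only [qn, PR.coe_div, coe_pmon]
  simp only [div_eq_mul_inv, mul_inv, inv_inv, ← Finset.prod_inv_distrib]
  simp only [← inv_pow]
  exact (IsL.prod _ fun u _ => (IsL.coord_inv _).pow _).mul (IsL.coord _)

theorem IsL.comp_rho {g : (Fin 4 × V → PR) → ℝ} (hg : IsL g) : IsL (fun s => g (rho A s)) := by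
  refine hg.comp_unit ?_ ?_
  · exact forall_slot (fun v => IsL.coord _) (fun v => IsL.coord _) (fun v => IsL.coord _)
      (fun v => isL_qn A v)
  · exact forall_slot (fun v => IsL.coord_inv _) (fun v => IsL.coord_inv _)
      (fun v => IsL.coord_inv _) (fun v => isL_qn_inv A v)

theorem IsL.comp_kap {g : (Fin 4 × V → PR) → ℝ} (hg : IsL g) (S : Finset V) :
    ∃ m : ℕ, IsL (fun s => g (kap A B S s) * (∏ v ∈ S, (pb A B s v : ℝ)) ^ m) := by
  have hD : ∀ T : Finset V, IsL (fun s : Fin 4 × V → PR => ∏ v ∈ T, (pb A B s v : ℝ)) :=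
    fun T => IsL.prod T fun v _ => isL_pb A B v
  refine hg.comp (fun s => ∏ v ∈ S, (pb A B s v : ℝ)) ?_ ?_
  · refine forall_slot (fun v => ?_) (fun v => IsL.coord _) (fun v => IsL.coord _)
      (fun v => IsL.coord _)
    by_cases hv : v ∈ S
    · simp only [kap, mk4_0, if_pos hv, PR.coe_div]
      simp only [div_eq_mul_inv]
      exact (isL_pb A B v).mul (IsL.coord_inv _)
    · simp only [kap, mk4_0, if_neg hv]
      exact IsL.coord _
  · refine forall_slot (fun v => ?_) (fun v => (hD S).mul (IsL.coord_inv _))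
      (fun v => (hD S).mul (IsL.coord_inv _)) (fun v => (hD S).mul (IsL.coord_inv _))
    by_cases hv : v ∈ S
    · refine (congrArg IsL (funext fun s => ?_)).mp
        ((hD (S.erase v)).mul (IsL.coord (0, v)))
      simp only [kap, mk4_0, if_pos hv, PR.coe_div]
      rw [← Finset.mul_prod_erase S _ hv]
      have := (pb A B s v).2.ne'
      have := (s (0, v)).2.ne'
      field_simp
    · simp only [kap, mk4_0, if_neg hv]
      exact (hD S).mul (IsL.coord_inv _)

variable {A B}

theorem pb_lprime (hAB : ∀ u v, A u v * B u v = 0) (v : V) :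
    LPrime (fun s : Fin 4 × V → PR => (pb A B s v : ℝ)) :=
  exch_lprime (fun u => ((1, u) : Fin 4 × V)) (fun u v h => by simpa using h) (3, v)
    (by simp) _ _ (hAB v)

theorem pa_lprime (hAB : ∀ u v, A u v * B u v = 0) (v : V) :
    LPrime (fun s : Fin 4 × V → PR => (pa A B s v : ℝ)) :=
  exch_lprime (fun u => ((0, u) : Fin 4 × V)) (fun u v h => by simpa using h) (2, v)
    (by simp) _ _ (hAB v)

theorem pb_not_dvd {u v : V} (huv : u ≠ v) :
    ¬ IsL (fun s : Fin 4 × V → PR => (pb A B s u : ℝ) / pb A B s v) :=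
  exch_not_dvd (fun u => ((1, u) : Fin 4 × V)) (fun u => (1, u)) (3, v) (3, u)
    (by simp) (by simp) (by simpa using huv) _ _ _ _

theorem pa_not_dvd_pb {u v : V} :
    ¬ IsL (fun s : Fin 4 × V → PR => (pb A B s u : ℝ) / pa A B s v) :=
  exch_not_dvd (fun u => ((0, u) : Fin 4 × V)) (fun u => (1, u)) (2, v) (3, u)
    (by simp) (by simp) (by simp) _ _ _ _

/-- If `h` is obtained by exchanging all of `W` in a Laurent polynomial, and also by exchanging
all of `W` except any single vertex, then `h` is Laurent: the possible denominators in the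
different expressions are coprime. -/
theorem isL_of_erase (hAB : ∀ u v, A u v * B u v = 0) (W : Finset V)
    {h g : (Fin 4 × V → PR) → ℝ} (hg : IsL g) (hh : ∀ s, h s = g (kap A B W s))
    (hv : ∀ v ∈ W, ∃ g' : (Fin 4 × V → PR) → ℝ, IsL g' ∧
      ∀ s, h s = g' (kap A B (W.erase v) s)) : IsL h := by
  have key : ∀ T : Finset V, T ⊆ W → ∀ m : ℕ,
      IsL (fun s => h s * (∏ v ∈ T, (pb A B s v : ℝ)) ^ m) → IsL h := by
    intro T
    induction T using Finset.induction_on with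
    | empty => intro _ m hm; simpa using hm
    | insert v T hvT ih =>
      intro hT m hm
      refine ih (fun x hx => hT (by simp [hx])) m ?_
      obtain ⟨g', hg', hhg'⟩ := hv v (hT (by simp))
      obtain ⟨n, hn⟩ := hg'.comp_kap A B (W.erase v)
      have hD : ∀ T : Finset V, IsL (fun s : Fin 4 × V → PR => ∏ v ∈ T, (pb A B s v : ℝ)) :=
        fun T => IsL.prod T fun v _ => isL_pb A B v
      refine (pb_lprime hAB v).cancel
        (β := fun s => (∏ u ∈ W.erase v, (pb A B s u : ℝ)) ^ n) m ?_ ?_ ((hD _).pow n) ?_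
      · refine (congrArg IsL (funext fun s => ?_)).mp hm
        rw [Finset.prod_insert hvT]; ring
      · refine (congrArg IsL (funext fun s => ?_)).mp (hn.mul ((hD T).pow m))
        rw [hhg' s]; ring
      · refine (pb_lprime hAB v).not_dvd_pow (hD _) ?_ n
        refine (pb_lprime hAB v).not_dvd_prod _ (fun u s => (pb A B s u : ℝ))
          (fun u _ => isL_pb A B u) ?_
        intro u hu
        exact pb_not_dvd (Finset.ne_of_mem_erase hu)
  obtain ⟨m, hm⟩ := hg.comp_kap A B W
  exact key W subset_rfl m (by simpa only [hh] using hm)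

end Phenomenon

/-! ### Exchanging back: two time steps ahead -/

section BackExchange

variable {V : Type} [Fintype V] [DecidableEq V]

/-- Doubling of the coordinate `b_w`. -/
noncomputable def dbl (w : V) (s : Fin 4 × V → PR) : Fin 4 × V → PR :=
  mk4 (fun v => s (0, v)) (fun v => if v = w then s (1, v) + s (1, v) else s (1, v))
    (fun v => s (2, v)) (fun v => s (3, v))

variable (A B : V → V → ℕ)

/-- The exchanged variable `y = P_w(a, c_w) / b_w`. -/
noncomputable def yw (w : V) (s : Fin 4 × V → PR) : ℝ := (pa A B s w : ℝ) / s (1, w)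

/-- Laurent polynomials that depend on `b_w` only through multiples of `y`; this is expressed by
comparing with the values after doubling `b_w`. -/
def InC (w : V) (f : (Fin 4 × V → PR) → ℝ) : Prop :=
  IsL f ∧ ∃ k, IsL k ∧ ∀ s, f (dbl w s) = f s + yw A B w s * k s

/-- Congruence modulo `y` within the class `InC`. -/
def CongY (w : V) (f g : (Fin 4 × V → PR) → ℝ) : Prop :=
  InC A B w f ∧ InC A B w g ∧ ∃ k, InC A B w k ∧ ∀ s, f s = g s + yw A B w s * k s

variable {A B} {w : V}

theorem isL_yw : IsL (yw A B w) := by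
  have h : yw A B w = fun s => (pa A B s w : ℝ) * (s (1, w) : ℝ)⁻¹ := by
    funext s; rw [yw, div_eq_mul_inv]
  rw [h]
  exact (isL_pa A B w).mul (IsL.coord_inv _)

theorem InC.mul {f g : (Fin 4 × V → PR) → ℝ} (hf : InC A B w f) (hg : InC A B w g) :
    InC A B w (fun s => f s * g s) := by
  obtain ⟨hf, k, hk, hfk⟩ := hf
  obtain ⟨hg, l, hl, hgl⟩ := hg
  refine ⟨hf.mul hg, fun s => f s * l s + g s * k s + yw A B w s * (k s * l s),
    ((hf.mul hl).add (hg.mul hk)).add (isL_yw.mul (hk.mul hl)), fun s => ?_⟩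
  beta_reduce
  rw [hfk, hgl]; ring

theorem InC.add {f g : (Fin 4 × V → PR) → ℝ} (hf : InC A B w f) (hg : InC A B w g) :
    InC A B w (fun s => f s + g s) := by
  obtain ⟨hf, k, hk, hfk⟩ := hf
  obtain ⟨hg, l, hl, hgl⟩ := hg
  refine ⟨hf.add hg, fun s => k s + l s, hk.add hl, fun s => ?_⟩
  beta_reduce
  rw [hfk, hgl]; ring

theorem InC.of_inv {f : (Fin 4 × V → PR) → ℝ} (hf : IsL f) (h : ∀ s, f (dbl w s) = f s) :
    InC A B w f := ⟨hf, fun _ => 0, IsL.const 0, fun s => by simp [h]⟩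

theorem InC.const (c : ℝ) : InC A B w (fun _ => c) := InC.of_inv (IsL.const c) fun _ => rfl

theorem pa_dbl (u : V) (s : Fin 4 × V → PR) : pa A B (dbl w s) u = pa A B s u := rfl

theorem InC.yw : InC A B w (yw A B w) := by
  refine ⟨isL_yw, fun _ => -(1 / 2), IsL.const _, fun s => ?_⟩
  have := (s (1, w)).2.ne'
  simp only [_root_.yw, pa_dbl]
  simp only [dbl, mk4_1, if_true, Positive.coe_add]
  field_simp
  ring

theorem InC.pow {f : (Fin 4 × V → PR) → ℝ} (hf : InC A B w f) (n : ℕ) :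
    InC A B w (fun s => f s ^ n) := by
  induction n with
  | zero => simpa using InC.const 1
  | succ n ih => simpa only [pow_succ] using ih.mul hf

theorem CongY.refl {f : (Fin 4 × V → PR) → ℝ} (hf : InC A B w f) : CongY A B w f f :=
  ⟨hf, hf, fun _ => 0, InC.const 0, fun s => by simp⟩

theorem CongY.mul {f g f' g' : (Fin 4 × V → PR) → ℝ} (h : CongY A B w f g)
    (h' : CongY A B w f' g') : CongY A B w (fun s => f s * f' s) (fun s => g s * g' s) := by
  obtain ⟨hf, hg, k, hk, e⟩ := h
  obtain ⟨hf', hg', k', hk', e'⟩ := h'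
  refine ⟨hf.mul hf', hg.mul hg', fun s => g s * k' s + g' s * k s
    + _root_.yw A B w s * (k s * k' s),
    ((hg.mul hk').add (hg'.mul hk)).add (InC.yw.mul (hk.mul hk')), fun s => ?_⟩
  beta_reduce
  rw [e, e']; ring

theorem CongY.pow {f g : (Fin 4 × V → PR) → ℝ} (h : CongY A B w f g) (n : ℕ) :
    CongY A B w (fun s => f s ^ n) (fun s => g s ^ n) := by
  induction n with
  | zero => simpa using CongY.refl (InC.const 1)
  | succ n ih => simpa only [pow_succ] using ih.mul h

theorem CongY.prod {κ : Type} (S : Finset κ) {f g : κ → (Fin 4 × V → PR) → ℝ}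
    (h : ∀ k, CongY A B w (f k) (g k)) :
    CongY A B w (fun s => ∏ k ∈ S, f k s) (fun s => ∏ k ∈ S, g k s) := by
  classical
  induction S using Finset.induction_on with
  | empty => simpa using CongY.refl (InC.const 1)
  | insert a S ha ih =>
    simp only [Finset.prod_insert ha]
    exact (h a).mul ih

/-- The value of the variable `u` at the next time, after the exchange of `b_w`. -/
noncomputable def xx (A B : V → V → ℕ) (w u : V) (s : Fin 4 × V → PR) : ℝ :=
  (pb A B (kap' A B w s) u : ℝ) / s (0, u)

/-- The reduction of `xx` modulo `y`. -/
noncomputable def mm (A B : V → V → ℕ) (w u : V) (s : Fin 4 × V → PR) : ℝ :=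
  if A w u ≠ 0 then s (3, u) * (∏ v, (s (1, v) : ℝ) ^ B u v) / s (0, u)
  else if B w u ≠ 0 then (∏ v, (s (1, v) : ℝ) ^ A u v) / s (0, u)
  else (pb A B s u : ℝ) / s (0, u)

/-- The variable `w` two time steps ahead, after the exchange of `b_w`. -/
noncomputable def x3 (A B : V → V → ℕ) (w : V) (s : Fin 4 × V → PR) : ℝ :=
  exch (fun u => xx A B w u s) (qn A s w) (A w) (B w) / yw A B w s

/-- The unit monomial relating `x3` to the old `b_w` modulo `y`. -/
noncomputable def stuff (A B : V → V → ℕ) (w : V) (s : Fin 4 × V → PR) : ℝ :=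
  (∏ u, (s (3, u) : ℝ) ^ A w u) * (∏ u, ∏ v, (s (1, v) : ℝ) ^ (A w u * B u v)) /
    (s (2, w) * (∏ u, (s (0, u) : ℝ) ^ A w u) * ∏ u, (s (0, u) : ℝ) ^ B w u)

theorem b_dbl_of_zero {e : V → ℕ} (he : e w = 0) (s : Fin 4 × V → PR) (v : V) :
    ((dbl w s) (1, v) : ℝ) ^ e v = (s (1, v) : ℝ) ^ e v := by
  by_cases hv : v = w
  · subst hv; simp [he]
  · simp [dbl, hv]

theorem b_kap'_of_zero {e : V → ℕ} (he : e w = 0) (s : Fin 4 × V → PR) (v : V) :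
    ((kap' A B w s) (1, v) : ℝ) ^ e v = (s (1, v) : ℝ) ^ e v := by
  by_cases hv : v = w
  · subst hv; simp [he]
  · simp [kap', hv]

theorem b_kap'_split (e : V → ℕ) (s : Fin 4 × V → PR) :
    ∏ v, ((kap' A B w s) (1, v) : ℝ) ^ e v
      = yw A B w s ^ e w * ∏ v ∈ Finset.univ.erase w, (s (1, v) : ℝ) ^ e v := by
  rw [← Finset.mul_prod_erase _ _ (Finset.mem_univ w)]
  congr 1
  · simp [kap', yw, PR.coe_div]
  · refine Finset.prod_congr rfl fun v hv => ?_
    simp [kap', Finset.ne_of_mem_erase hv]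

theorem isL_bmon (S : Finset V) (e : V → ℕ) :
    IsL (fun s : Fin 4 × V → PR => ∏ v ∈ S, (s (1, v) : ℝ) ^ e v) :=
  IsL.prod _ fun v _ => (IsL.coord _).pow _

theorem isL_div_coord {f : (Fin 4 × V → PR) → ℝ} (hf : IsL f) (j : Fin 4 × V) :
    IsL (fun s => f s / (s j : ℝ)) := by
  simp only [div_eq_mul_inv]; exact hf.mul (IsL.coord_inv j)

theorem InC.div_coord {f : (Fin 4 × V → PR) → ℝ} (hf : InC A B w f) (u : V) :
    InC A B w (fun s => f s / (s (0, u) : ℝ)) := by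
  simp only [div_eq_mul_inv]
  exact hf.mul (InC.of_inv (IsL.coord_inv _) fun s => rfl)

theorem InC.bmon_erase (e : V → ℕ) :
    InC A B w (fun s => ∏ v ∈ Finset.univ.erase w, (s (1, v) : ℝ) ^ e v) := by
  refine InC.of_inv (isL_bmon _ _) fun s => Finset.prod_congr rfl fun v hv => ?_
  simp [dbl, Finset.ne_of_mem_erase hv]

theorem InC.bmon {e : V → ℕ} (he : e w = 0) :
    InC A B w (fun s => ∏ v, (s (1, v) : ℝ) ^ e v) :=
  InC.of_inv (isL_bmon _ _) fun s => Finset.prod_congr rfl fun v _ => b_dbl_of_zero he s v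

theorem InC.d (u : V) : InC A B w (fun s => (s (3, u) : ℝ)) :=
  InC.of_inv (IsL.coord _) fun s => rfl

/-- `xx` reduces modulo `y` to `mm`: of the two monomials of the numerator, the one containing the
exchanged `b_w`, which is a multiple of `y`, is dropped. -/
theorem xx_congY (hA : ∀ u v, A u v = A v u) (hB : ∀ u v, B u v = B v u)
    (hAB : ∀ u v, A u v * B u v = 0) (u : V) : CongY A B w (xx A B w u) (mm A B w u) := by
  have hz := hAB u w
  have hs : ∀ s, xx A B w u s = (∏ v, ((kap' A B w s) (1, v) : ℝ) ^ A u v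
      + s (3, u) * ∏ v, ((kap' A B w s) (1, v) : ℝ) ^ B u v) / s (0, u) := fun s => rfl
  have main : InC A B w (mm A B w u) ∧ ∃ k, InC A B w k ∧
      ∀ s, xx A B w u s = mm A B w u s + yw A B w s * k s := by
    by_cases h1 : A w u ≠ 0
    · have h1' : A u w ≠ 0 := by rwa [hA]
      have hb : B u w = 0 := by simpa [h1'] using hz
      have em : mm A B w u = fun s => s (3, u) * (∏ v, (s (1, v) : ℝ) ^ B u v) / s (0, u) := by
        funext s; simp only [mm, if_pos h1]
      rw [em]
      refine ⟨((InC.d u).mul (InC.bmon hb)).div_coord u, fun s => (yw A B w s ^ (A u w - 1) *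
        ∏ v ∈ Finset.univ.erase w, (s (1, v) : ℝ) ^ A u v) / s (0, u),
        ((InC.yw.pow _).mul (InC.bmon_erase _)).div_coord u, fun s => ?_⟩
      obtain ⟨n, hn⟩ := Nat.exists_eq_succ_of_ne_zero h1'
      rw [hs, b_kap'_split, b_kap'_split (B u), hb, hn]
      have e2 := Finset.mul_prod_erase Finset.univ (fun v => (s (1, v) : ℝ) ^ B u v)
        (Finset.mem_univ w)
      beta_reduce
      rw [← e2, hb]
      simp only [Nat.succ_eq_add_one, Nat.add_sub_cancel, pow_succ, pow_zero]
      ring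
    · have h1' : A u w = 0 := by rw [hA]; simpa using h1
      by_cases h2 : B w u ≠ 0
      · have h2' : B u w ≠ 0 := by rwa [hB]
        have em : mm A B w u = fun s => (∏ v, (s (1, v) : ℝ) ^ A u v) / s (0, u) := by
          funext s; simp only [mm, if_neg h1, if_pos h2]
        rw [em]
        refine ⟨(InC.bmon h1').div_coord u, fun s => (s (3, u) * (yw A B w s ^ (B u w - 1) *
          ∏ v ∈ Finset.univ.erase w, (s (1, v) : ℝ) ^ B u v)) / s (0, u),
          ((InC.d u).mul ((InC.yw.pow _).mul (InC.bmon_erase _))).div_coord u, fun s => ?_⟩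
        obtain ⟨n, hn⟩ := Nat.exists_eq_succ_of_ne_zero h2'
        rw [hs, b_kap'_split, b_kap'_split (B u), h1', hn]
        have e2 := Finset.mul_prod_erase Finset.univ (fun v => (s (1, v) : ℝ) ^ A u v)
          (Finset.mem_univ w)
        beta_reduce
        rw [← e2, h1']
        simp only [Nat.succ_eq_add_one, Nat.add_sub_cancel, pow_succ, pow_zero]
        ring
      · have h2' : B u w = 0 := by rw [hB]; simpa using h2
        have em : mm A B w u = fun s => (∏ v, (s (1, v) : ℝ) ^ A u v
            + s (3, u) * ∏ v, (s (1, v) : ℝ) ^ B u v) / s (0, u) := by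
          funext s; simp only [mm, if_neg h1, if_neg h2]; rfl
        rw [em]
        refine ⟨((InC.bmon h1').add ((InC.d u).mul (InC.bmon h2'))).div_coord u, fun _ => 0,
          InC.const 0, fun s => ?_⟩
        rw [hs]
        simp only [b_kap'_of_zero h1', b_kap'_of_zero h2', mul_zero, add_zero]
  obtain ⟨h1, k, hk, e⟩ := main
  refine ⟨?_, h1, k, hk, e⟩
  rw [funext e]
  exact h1.add (InC.yw.mul hk)

/-- The reduction modulo `y` of the exchange relation two time steps ahead is divisible by `y`;
this is where the commutation of `A` and `B` enters. -/
theorem mm_exch (hA : ∀ u v, A u v = A v u) (hB : ∀ u v, B u v = B v u)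
    (hAB : ∀ u v, A u v * B u v = 0)
    (hrec : ∀ u v, (∑ w, A u w * B w v) = ∑ w, B u w * A w v) (s : Fin 4 × V → PR) :
    exch (fun u => mm A B w u s) (qn A s w) (A w) (B w)
      = stuff A B w s * (yw A B w s * s (1, w)) := by
  have h1 : ∏ u, mm A B w u s ^ A w u = (∏ u, (s (3, u) : ℝ) ^ A w u) *
      (∏ u, ∏ v, (s (1, v) : ℝ) ^ (A w u * B u v)) / ∏ u, (s (0, u) : ℝ) ^ A w u := by
    rw [← Finset.prod_mul_distrib, ← Finset.prod_div_distrib]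
    refine Finset.prod_congr rfl fun u _ => ?_
    by_cases h : A w u ≠ 0
    · simp only [mm, if_pos h]
      rw [div_pow, mul_pow, ← Finset.prod_pow]
      simp only [← pow_mul, mul_comm (A w u)]
    · have h : A w u = 0 := by simpa using h
      simp [h]
  have h2 : ∏ u, mm A B w u s ^ B w u = 
      (∏ u, ∏ v, (s (1, v) : ℝ) ^ (A w u * B u v)) / ∏ u, (s (0, u) : ℝ) ^ B w u := by
    have : (∏ u, ∏ v, (s (1, v) : ℝ) ^ (A w u * B u v))
        = ∏ u, ∏ v, (s (1, v) : ℝ) ^ (B w u * A u v) := by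
      rw [Finset.prod_comm, Finset.prod_comm (f := fun u v => (s (1, v) : ℝ) ^ (B w u * A u v))]
      refine Finset.prod_congr rfl fun v _ => ?_
      rw [Finset.prod_pow_eq_pow_sum, Finset.prod_pow_eq_pow_sum, hrec]
    rw [this, ← Finset.prod_div_distrib]
    refine Finset.prod_congr rfl fun u _ => ?_
    by_cases h : B w u ≠ 0
    · have hz : ¬ (A w u ≠ 0) := by have := hAB w u; simpa [h] using this
      simp only [mm, if_pos h, if_neg hz]
      rw [div_pow, ← Finset.prod_pow]
      simp only [← pow_mul, mul_comm (B w u)]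
    · have h : B w u = 0 := by simpa using h
      simp [h]
  have hy : yw A B w s * s (1, w) = (∏ u, (s (0, u) : ℝ) ^ A w u)
      + s (2, w) * ∏ u, (s (0, u) : ℝ) ^ B w u := by
    have := (s (1, w)).2.ne'
    rw [yw, div_mul_cancel₀ _ this]; rfl
  rw [hy, exch, h1, h2, stuff, qn, PR.coe_div, coe_pmon]
  have p0 : ∀ e : V → ℕ, (∏ u, (s (0, u) : ℝ) ^ e u) ≠ 0 := fun e =>
    (Finset.prod_pos fun u _ => pow_pos (s (0, u)).2 _).ne'
  have := p0 (A w)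
  have := p0 (B w)
  have := (s (2, w)).2.ne'
  field_simp
  ring

theorem stuff_ne (s : Fin 4 × V → PR) : stuff A B w s ≠ 0 := by
  have p0 : ∀ (k : Fin 4) (e : V → ℕ), (∏ u, (s (k, u) : ℝ) ^ e u) ≠ 0 := fun k e =>
    (Finset.prod_pos fun u _ => pow_pos (s (k, u)).2 _).ne'
  exact div_ne_zero (mul_ne_zero (p0 _ _) (Finset.prod_ne_zero_iff.2 fun u _ => p0 1 _))
    (mul_ne_zero (mul_ne_zero (s (2, w)).2.ne' (p0 _ _)) (p0 _ _))

theorem isL_mon (k : Fin 4) (e : V → ℕ) :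
    IsL (fun s : Fin 4 × V → PR => ∏ v, (s (k, v) : ℝ) ^ e v) :=
  IsL.prod _ fun v _ => (IsL.coord _).pow _

theorem isL_mon_inv (k : Fin 4) (e : V → ℕ) :
    IsL (fun s : Fin 4 × V → PR => (∏ v, (s (k, v) : ℝ) ^ e v)⁻¹) := by
  simp only [← Finset.prod_inv_distrib, ← inv_pow]
  exact IsL.prod _ fun v _ => (IsL.coord_inv _).pow _

theorem isL_stuff : IsL (stuff A B w) := by
  have : stuff A B w = fun s => _ := rfl
  rw [this]
  simp only [stuff, div_eq_mul_inv, mul_inv]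
  exact ((isL_mon _ _).mul (IsL.prod _ fun u _ => isL_mon _ _)).mul
    (((IsL.coord_inv _).mul (isL_mon_inv _ _)).mul (isL_mon_inv _ _))

theorem isL_stuff_inv : IsL (fun s => (stuff A B w s)⁻¹) := by
  simp only [stuff, div_eq_mul_inv, mul_inv, inv_inv, ← Finset.prod_inv_distrib]
  simp only [← inv_pow]
  exact ((IsL.prod _ fun v _ => (IsL.coord_inv _).pow _).mul
    (IsL.prod _ fun u _ => IsL.prod _ fun v _ => (IsL.coord_inv _).pow _)).mul
    (((IsL.coord _).mul (isL_mon _ _)).mul (isL_mon _ _))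

theorem stuff_dbl (hB : ∀ u v, B u v = B v u)
    (hAB : ∀ u v, A u v * B u v = 0) (s : Fin 4 × V → PR) :
    stuff A B w (dbl w s) = stuff A B w s := by
  have : ∀ u, ∏ v, ((dbl w s) (1, v) : ℝ) ^ (A w u * B u v)
      = ∏ v, (s (1, v) : ℝ) ^ (A w u * B u v) := fun u =>
    Finset.prod_congr rfl fun v _ =>
      b_dbl_of_zero (e := fun v => A w u * B u v) (by rw [hB u w]; exact hAB w u) s v
  simp only [stuff, this]
  rfl

theorem yw_pos (s : Fin 4 × V → PR) : 0 < yw A B w s :=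
  div_pos (pa A B s w).2 (s (1, w)).2

/-- Up to a term of the class `InC`, the variable `x3` is the unit `stuff` times `b_w`. The main
term comes from `mm_exch`, which rests on the commutation `A B = B A`. -/
theorem x3_eq (hA : ∀ u v, A u v = A v u) (hB : ∀ u v, B u v = B v u)
    (hAB : ∀ u v, A u v * B u v = 0)
    (hrec : ∀ u v, (∑ w, A u w * B w v) = ∑ w, B u w * A w v) :
    ∃ N, InC A B w N ∧ ∀ s, x3 A B w s = stuff A B w s * s (1, w) + N s := by
  have hc := xx_congY (w := w) hA hB hAB
  obtain ⟨-, -, k1, hk1, e1⟩ := CongY.prod Finset.univ (fun u => (hc u).pow (A w u))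
  obtain ⟨-, -, k2, hk2, e2⟩ := CongY.prod Finset.univ (fun u => (hc u).pow (B w u))
  have hq : InC A B w (fun s => (qn A s w : ℝ)) := InC.of_inv (isL_qn A w) fun s => rfl
  refine ⟨fun s => k1 s + qn A s w * k2 s, hk1.add (hq.mul hk2), fun s => ?_⟩
  have hy := (yw_pos (A := A) (B := B) (w := w) s).ne'
  have := mm_exch (w := w) hA hB hAB hrec s
  rw [x3, div_eq_iff hy]
  simp only [exch] at this e1 e2 ⊢
  rw [e1, e2]
  linear_combination this

theorem isL_x3 (hA : ∀ u v, A u v = A v u) (hB : ∀ u v, B u v = B v u)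
    (hAB : ∀ u v, A u v * B u v = 0)
    (hrec : ∀ u v, (∑ w, A u w * B w v) = ∑ w, B u w * A w v) : IsL (x3 A B w) := by
  obtain ⟨N, hN, e⟩ := x3_eq (w := w) hA hB hAB hrec
  rw [funext e]
  exact (isL_stuff.mul (IsL.coord _)).add hN.1

theorem IsL.comp_dbl {f : (Fin 4 × V → PR) → ℝ} (hf : IsL f) : IsL (fun s => f (dbl w s)) := by
  refine hf.comp_unit ?_ ?_
  · refine forall_slot (fun v => IsL.coord _) (fun v => ?_) (fun v => IsL.coord _)
      (fun v => IsL.coord _)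
    by_cases h : v = w
    · simp only [dbl, mk4_1, if_pos h, Positive.coe_add]
      exact (IsL.coord _).add (IsL.coord _)
    · simp only [dbl, mk4_1, if_neg h]
      exact IsL.coord _
  · refine forall_slot (fun v => IsL.coord_inv _) (fun v => ?_) (fun v => IsL.coord_inv _)
      (fun v => IsL.coord_inv _)
    by_cases h : v = w
    · simp only [dbl, mk4_1, if_pos h, Positive.coe_add]
      simp only [← two_mul, mul_inv]
      exact (IsL.const _).mul (IsL.coord_inv _)
    · simp only [dbl, mk4_1, if_neg h]
      exact IsL.coord_inv _

/-- `y · k` is divisible by `P_w(a, c_w)`. -/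
theorem isL_yw_mul_div {k : (Fin 4 × V → PR) → ℝ} (hk : IsL k) :
    IsL (fun s => yw A B w s * k s / pa A B s w) := by
  refine (congrArg IsL (funext fun s => ?_)).mp (hk.mul (IsL.coord_inv (1, w)))
  have := (pa A B s w).2.ne'
  have := (s (1, w)).2.ne'
  rw [yw]; field_simp

/-- `P_w(a, c_w)` does not divide `x3`: comparing with the values after doubling `b_w`, it would
divide the unit `stuff · b_w`. -/
theorem x3_not_dvd (hA : ∀ u v, A u v = A v u) (hB : ∀ u v, B u v = B v u)
    (hAB : ∀ u v, A u v * B u v = 0)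
    (hrec : ∀ u v, (∑ w, A u w * B w v) = ∑ w, B u w * A w v) :
    ¬ IsL (fun s => x3 A B w s / pa A B s w) := by
  intro h
  obtain ⟨N, ⟨-, k, hk, eN⟩, e⟩ := x3_eq (w := w) hA hB hAB hrec
  refine (pa_lprime hAB w).not_dvd_unit (u := fun s => stuff A B w s * s (1, w)) ?_ ?_ ?_
  · exact fun s => mul_ne_zero (stuff_ne s) (s (1, w)).2.ne'
  · simp only [mul_inv]
    exact isL_stuff_inv.mul (IsL.coord_inv _)
  · refine (congrArg IsL (funext fun s => ?_)).mp (((h.comp_dbl (w := w)).sub h).sub (isL_yw_mul_div (A := A) (B := B) (w := w) hk))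
    simp only [pa_dbl, e, stuff_dbl hB hAB, eN]
    simp only [dbl, mk4_1, if_true, Positive.coe_add]
    have := (pa A B s w).2.ne'
    field_simp
    ring

theorem isL_xx (u : V) : IsL (xx A B w u) := by
  have : IsL (fun s => (pb A B (kap' A B w s) u : ℝ)) := by
    refine IsL.exch (fun v => ?_) (IsL.coord _) _ _
    by_cases h : v = w
    · simp only [kap', mk4_1, if_pos h, PR.coe_div]
      exact isL_yw
    · simp only [kap', mk4_1, if_neg h]
      exact IsL.coord _
  exact isL_div_coord this _

theorem xx_not_dvd (hA : ∀ u v, A u v = A v u) (hB : ∀ u v, B u v = B v u)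
    (hAB : ∀ u v, A u v * B u v = 0) (u : V) :
    ¬ IsL (fun s => xx A B w u s / pa A B s w) := by
  intro h
  have hp := pa_lprime (A := A) (B := B) hAB w
  obtain ⟨-, -, k, hk, e⟩ := xx_congY (w := w) hA hB hAB u
  have hm : IsL (fun s => mm A B w u s / pa A B s w) := by
    refine (congrArg IsL (funext fun s => ?_)).mp (h.sub (isL_yw_mul_div (A := A) (B := B) (w := w) hk.1))
    rw [e]; ring
  have mne : ∀ (e : V → ℕ) (s : Fin 4 × V → PR), (∏ v, (s (1, v) : ℝ) ^ e v) ≠ 0 := fun e s =>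
    (Finset.prod_pos fun u _ => pow_pos (s (1, u)).2 _).ne'
  by_cases h1 : A w u ≠ 0
  · simp only [mm, if_pos h1] at hm
    refine hp.not_dvd_unit (fun s => ?_) ?_ hm
    · exact div_ne_zero (mul_ne_zero (s (3, u)).2.ne' (mne _ s)) (s (0, u)).2.ne'
    · simp only [inv_div]
      simp only [div_eq_mul_inv, mul_inv]
      exact (IsL.coord _).mul ((IsL.coord_inv _).mul (isL_mon_inv _ _))
  · by_cases h2 : B w u ≠ 0
    · simp only [mm, if_neg h1, if_pos h2] at hm
      refine hp.not_dvd_unit (fun s => ?_) ?_ hm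
      · exact div_ne_zero (mne _ s) (s (0, u)).2.ne'
      · simp only [inv_div]
        simp only [div_eq_mul_inv]
        exact (IsL.coord _).mul (isL_mon_inv _ _)
    · simp only [mm, if_neg h1, if_neg h2] at hm
      refine pa_not_dvd_pb (A := A) (B := B) (u := u) (v := w) ?_
      refine (congrArg IsL (funext fun s => ?_)).mp (hm.mul (IsL.coord (0, u)))
      have := (s (0, u)).2.ne'
      field_simp

end BackExchange

/-! ### The Laurent phenomenon -/

section Propagation

variable {V : Type} [Fintype V] [DecidableEq V]

/-- `f` is Laurent in the initial variables, and also after any single exchange of one of the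
variables at either of the two initial times. -/
def UpperBound (A B : V → V → ℕ) (f : (Fin 4 × V → PR) → ℝ) : Prop :=
  IsL f ∧ (∀ v, IsL (fun s => f (kap A B {v} s))) ∧ ∀ w, IsL (fun s => f (kap' A B w s))

variable {A B : V → V → ℕ}

theorem IsL.comp_kap' {f : (Fin 4 × V → PR) → ℝ} (hf : IsL f) (w : V) :
    ∃ m : ℕ, IsL (fun s => f (kap' A B w s) * (pa A B s w : ℝ) ^ m) := by
  refine hf.comp (fun s => (pa A B s w : ℝ)) ?_ ?_
  · refine forall_slot (fun v => IsL.coord _) (fun v => ?_) (fun v => IsL.coord _)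
      (fun v => IsL.coord _)
    by_cases h : v = w
    · simp only [kap', mk4_1, if_pos h, PR.coe_div]
      exact isL_div_coord (isL_pa A B w) _
    · simp only [kap', mk4_1, if_neg h]
      exact IsL.coord _
  · refine forall_slot (fun v => (isL_pa A B w).mul (IsL.coord_inv _)) (fun v => ?_)
      (fun v => (isL_pa A B w).mul (IsL.coord_inv _))
      (fun v => (isL_pa A B w).mul (IsL.coord_inv _))
    by_cases h : v = w
    · refine (congrArg IsL (funext fun s => ?_)).mp (IsL.coord (1, w))
      simp only [kap', mk4_1, if_pos h, PR.coe_div]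
      have := (pa A B s w).2.ne'
      have := (s (1, w)).2.ne'
      field_simp
    · simp only [kap', mk4_1, if_neg h]
      exact (isL_pa A B w).mul (IsL.coord_inv _)

theorem Phi_0 (w : V) (s : Fin 4 × V → PR) :
    (kap A B {w} (step A B (kap' A B w s)) (0, w) : ℝ) = x3 A B w s := by
  simp only [kap, mk4_0, Finset.mem_singleton, if_true, PR.coe_div, pb, coe_pexch, x3]
  congr 1
  · simp [step, kap', yw, PR.coe_div]

/-- If `g ∘ step` is Laurent and `g` stays Laurent after exchanging `a_w`, then `g ∘ step` stays
Laurent after exchanging `b_w`: of the two resulting expressions one has only powers of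
`P_w(a, c_w)` as denominators, the other only powers of the `xx` and of `x3`, none of which is
divisible by `P_w(a, c_w)`. -/
theorem isL_step_back (hA : ∀ u v, A u v = A v u) (hB : ∀ u v, B u v = B v u)
    (hAB : ∀ u v, A u v * B u v = 0)
    (hrec : ∀ u v, (∑ w, A u w * B w v) = ∑ w, B u w * A w v)
    {g : (Fin 4 × V → PR) → ℝ} (w : V) (hg : IsL (fun s => g (kap A B {w} s)))
    (hf : IsL (fun s => g (step A B s))) :
    IsL (fun s => g (step A B (kap' A B w s))) := by
  have hp := pa_lprime (A := A) (B := B) hAB w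
  obtain ⟨m, hm⟩ := hf.comp_kap' (A := A) (B := B) w
  have hx : ∀ S : Finset V, IsL (fun s => ∏ u ∈ S, xx A B w u s) :=
    fun S => IsL.prod _ fun u _ => isL_xx u
  have hx3 : IsL (x3 A B w) := isL_x3 hA hB hAB hrec
  have hD : IsL (fun s => (∏ u, xx A B w u s) * x3 A B w s) := (hx _).mul hx3
  have key : ∃ n : ℕ, IsL (fun s => g (kap A B {w} (kap A B {w} (step A B (kap' A B w s))))
      * ((∏ u, xx A B w u s) * x3 A B w s) ^ n) := by
    refine hg.comp (κ := fun s => kap A B {w} (step A B (kap' A B w s)))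
      (fun s => (∏ u, xx A B w u s) * x3 A B w s) ?_ ?_
    · refine forall_slot (fun v => ?_) (fun v => ?_) (fun v => IsL.coord (3, v))
        (fun v => isL_qn A v)
      · by_cases h : v = w
        · subst h
          simp only [Phi_0]
          exact hx3
        · simp only [kap, step, kap', mk4_0, mk4_1, Finset.mem_singleton, if_neg h]
          exact IsL.coord _
      · simp only [kap, step, mk4_1, PR.coe_div]
        exact isL_xx v
    · refine forall_slot (fun v => ?_) (fun v => ?_) (fun v => hD.mul (IsL.coord_inv (3, v)))
        (fun v => hD.mul (isL_qn_inv A v))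
      · by_cases h : v = w
        · subst h
          refine (congrArg IsL (funext fun s => ?_)).mp (hx Finset.univ)
          rw [Phi_0]
          have : x3 A B v s ≠ 0 := by
            rw [← Phi_0]; exact (kap A B {v} (step A B (kap' A B v s)) (0, v)).2.ne'
          field_simp
        · simp only [kap, step, kap', mk4_0, mk4_1, Finset.mem_singleton, if_neg h]
          exact hD.mul (IsL.coord_inv _)
      · refine (congrArg IsL (funext fun s => ?_)).mp ((hx (Finset.univ.erase v)).mul hx3)
        have e : (kap A B {w} (step A B (kap' A B w s)) (1, v) : ℝ) = xx A B w v s := by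
          simp only [kap, step, mk4_1, PR.coe_div]
          rfl
        have : xx A B w v s ≠ 0 := by
          rw [← e]; exact (kap A B {w} (step A B (kap' A B w s)) (1, v)).2.ne'
        rw [e, ← Finset.mul_prod_erase _ _ (Finset.mem_univ v)]
        field_simp
  obtain ⟨n, hn⟩ := key
  simp only [kap_self] at hn
  refine hp.cancel (β := fun s => ((∏ u, xx A B w u s) * x3 A B w s) ^ n) m hm hn (hD.pow n) ?_
  refine hp.not_dvd_pow hD ?_ n
  refine hp.not_dvd_mul (hx _) hx3 ?_ (x3_not_dvd hA hB hAB hrec)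
  exact hp.not_dvd_prod _ _ (fun u _ => isL_xx u) fun u _ => xx_not_dvd hA hB hAB u

/-- The upper-bound property propagates along the time evolution. -/
theorem UpperBound.step (hA : ∀ u v, A u v = A v u) (hB : ∀ u v, B u v = B v u)
    (hAB : ∀ u v, A u v * B u v = 0)
    (hrec : ∀ u v, (∑ w, A u w * B w v) = ∑ w, B u w * A w v)
    {g : (Fin 4 × V → PR) → ℝ} (hg : UpperBound A B g) :
    UpperBound A B (fun s => g (step A B s)) := by
  obtain ⟨h0, h1, h2⟩ := hg
  have hr : ∀ v s, g (_root_.step A B s)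
      = g (kap' A B v (rho A (kap A B (Finset.univ.erase v) s))) := fun v s => by
    rw [← kap'_step, kap'_self]
  have hL : IsL (fun s => g (_root_.step A B s)) := by
    refine isL_of_erase hAB Finset.univ (g := fun s => g (rho A s)) (h0.comp_rho A)
      (fun s => by rw [step_eq]) fun v _ => ⟨fun s => g (kap' A B v (rho A s)),
        (h2 v).comp_rho A, fun s => hr v s⟩
  have hs1 : ∀ v : V, symmDiff (Finset.univ : Finset V) {v} = Finset.univ.erase v := by
    intro v; ext u; simp [Finset.mem_symmDiff]
  have hs2 : ∀ u v : V, u ≠ v → symmDiff (Finset.univ.erase u) {v}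
      = (Finset.univ.erase v).erase u := by
    intro u v huv; ext x
    simp only [Finset.mem_symmDiff, Finset.mem_erase, Finset.mem_univ, Finset.mem_singleton,
      and_true]
    constructor
    · rintro (h | ⟨h, h'⟩)
      · exact h
      · subst h; exact absurd (fun h => huv h.symm) h'
    · exact Or.inl
  refine ⟨hL, fun v => ?_, fun w => isL_step_back hA hB hAB hrec w (h1 w) hL⟩
  refine isL_of_erase hAB (Finset.univ.erase v) (g := fun s => g (rho A s)) (h0.comp_rho A)
    (fun s => by beta_reduce; rw [step_eq, kap_kap, hs1]) fun u hu =>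
      ⟨fun s => g (kap' A B u (rho A s)), (h2 u).comp_rho A, fun s => ?_⟩
  beta_reduce
  rw [hr u, kap_kap, hs2 u v (Finset.ne_of_mem_erase hu)]

theorem upperBound_a (v : V) : UpperBound A B (fun s => (s (0, v) : ℝ)) := by
  refine ⟨IsL.coord _, fun u => ?_, fun w => IsL.coord (0, v)⟩
  by_cases h : v = u
  · simp only [kap, mk4_0, Finset.mem_singleton, if_pos h, PR.coe_div]
    exact isL_div_coord (isL_pb A B v) _
  · simp only [kap, mk4_0, Finset.mem_singleton, if_neg h]
    exact IsL.coord _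

/-- The Laurent phenomenon for the deformed system. -/
theorem laurent_phenomenon (hA : ∀ u v, A u v = A v u) (hB : ∀ u v, B u v = B v u)
    (hAB : ∀ u v, A u v * B u v = 0)
    (hrec : ∀ u v, (∑ w, A u w * B w v) = ∑ w, B u w * A w v) (v : V) (n : ℕ) :
    IsL (fun s => ((step A B)^[n] s (0, v) : ℝ)) := by
  have : UpperBound A B (fun s => ((step A B)^[n] s (0, v) : ℝ)) := by
    induction n with
    | zero => exact upperBound_a v
    | succ n ih => exact ih.step hA hB hAB hrec
  exact this.1

end Propagation

/-! ### Linear recursions and phase dynamics -/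

section Linear

variable {E : Type} [AddCommGroup E] [Module ℝ E]

/-- The Chebyshev-type sequence `0, 1, M, M² - 1, …`, the fundamental solution of
`u (t + 1) + u (t - 1) = M (u t)`. -/
def cheb (M : Module.End ℝ E) : ℕ → Module.End ℝ E
  | 0 => 0
  | 1 => 1
  | n + 2 => M * cheb M (n + 1) - cheb M n

theorem cheb_succ_succ (M : Module.End ℝ E) (n : ℕ) :
    cheb M (n + 2) = M * cheb M (n + 1) - cheb M n := rfl

theorem cheb_commute {K M : Module.End ℝ E} (h : Commute K M) (n : ℕ) : Commute K (cheb M n) := by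
  induction n using Nat.twoStepInduction with
  | zero => exact Commute.zero_right K
  | one => exact Commute.one_right K
  | more n h1 h2 => exact (h.mul_right h2).sub_right h1

theorem cheb_sq (M : Module.End ℝ E) (n : ℕ) :
    cheb M (n + 1) * cheb M (n + 1) - cheb M n * cheb M (n + 2) = 1 := by
  induction n with
  | zero => simp [cheb]
  | succ n ih =>
    have hc : M * cheb M (n + 1) = cheb M (n + 1) * M := cheb_commute (Commute.refl M) _
    have e1 : cheb M (n + 1) * cheb M (n + 3)
        = (M * cheb M (n + 1)) * cheb M (n + 2) - cheb M (n + 1) * cheb M (n + 1) := by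
      rw [cheb_succ_succ M (n + 1), mul_sub, ← mul_assoc, hc]
    have e2 : M * cheb M (n + 1) = cheb M (n + 2) + cheb M n := by
      rw [cheb_succ_succ]; abel
    rw [e1, e2, add_mul, ← ih]
    abel

theorem cheb_sol (M : Module.End ℝ E) {u : ℕ → E} (t₀ : ℕ) (n : ℕ)
    (h : ∀ i < n, u (t₀ + i + 2) + u (t₀ + i) = M (u (t₀ + i + 1))) (i : ℕ) (hi : i ≤ n) :
    u (t₀ + i + 1) = cheb M (i + 1) (u (t₀ + 1)) - cheb M i (u t₀) := by
  induction i using Nat.twoStepInduction with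
  | zero => simp [cheb]
  | one =>
    have := h 0 (by omega)
    rw [eq_sub_of_add_eq this]
    simp [cheb]
  | more i h1 h2 =>
    have := h (i + 1) (by omega)
    have e := eq_sub_of_add_eq this
    rw [show t₀ + (i + 2) + 1 = t₀ + (i + 1) + 2 by ring, e, h2 (by omega),
      show t₀ + (i + 1) = t₀ + i + 1 by ring, h1 (by omega), cheb_succ_succ M (i + 1),
      cheb_succ_succ M i]
    simp only [LinearMap.sub_apply, Module.End.mul_apply, map_sub]
    abel

/-- The properties of the adjacency operator of a Dynkin diagram with Coxeter number `m + 1` used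
in the argument: the fundamental solution vanishes at time `m + 1`, the solution with initial values
`-1, 1` (constant on the vertices) is positive up to that time, and the involution `cheb M m` fixes
the all-ones vector. -/
structure Cox {V : Type} (M : Module.End ℝ (V → ℝ)) (m : ℕ) : Prop where
  zero : cheb M (m + 1) = 0
  pos : ∀ n ≤ m, ∀ v, 0 < (cheb M (n + 1) 1 + cheb M n 1) v
  fix : cheb M m 1 = 1

section CoxLemmas

variable {V : Type} {M : Module.End ℝ (V → ℝ)} {m : ℕ}

theorem Cox.sq (h : Cox M m) (x : V → ℝ) : cheb M m (cheb M m x) = x := by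
  have h2 : cheb M (m + 2) = - cheb M m := by rw [cheb_succ_succ, h.zero]; simp
  have := cheb_sq M m
  rw [h.zero, h2] at this
  have := congrArg (fun f => f x) this
  simpa using this

/-- After `h` steps a solution is transformed by the involution `-σ`. -/
theorem Cox.block (h : Cox M m) {u : ℕ → V → ℝ} {t₀ : ℕ}
    (hu : ∀ i < m + 1, u (t₀ + i + 2) + u (t₀ + i) = M (u (t₀ + i + 1))) :
    u (t₀ + (m + 1)) = - cheb M m (u t₀) ∧ u (t₀ + (m + 1) + 1) = - cheb M m (u (t₀ + 1)) := by
  have h2 : cheb M (m + 2) = - cheb M m := by rw [cheb_succ_succ, h.zero]; simp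
  constructor
  · have := cheb_sol M t₀ (m + 1) hu m (by omega)
    rw [h.zero] at this
    simpa [add_assoc] using this
  · have := cheb_sol M t₀ (m + 1) hu (m + 1) le_rfl
    rw [h.zero, h2] at this
    simpa [add_assoc] using this

/-- A solution starting from `(-1, 1)`, up to a sign `ε`, keeps its sign through a block and ends
with `(1, -1)`. -/
theorem Cox.block_sign (h : Cox M m) {u : ℕ → V → ℝ} {t₀ : ℕ} (ε : ℝ)
    (hu : ∀ i < m + 1, u (t₀ + i + 2) + u (t₀ + i) = M (u (t₀ + i + 1)))
    (h0 : u t₀ = (-ε) • 1) (h1 : u (t₀ + 1) = ε • 1) :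
    (∀ t, t₀ < t → t ≤ t₀ + (m + 1) → ∀ v, ∃ p > 0, u t v = ε * p) ∧
    u (t₀ + (m + 1)) = ε • 1 ∧ u (t₀ + (m + 1) + 1) = (-ε) • 1 := by
  obtain ⟨b0, b1⟩ := h.block hu
  refine ⟨fun t ht ht' v => ?_, ?_, ?_⟩
  · obtain ⟨i, rfl⟩ := Nat.exists_eq_add_of_lt ht
    refine ⟨_, h.pos i (by omega) v, ?_⟩
    rw [cheb_sol M t₀ (m + 1) hu i (by omega), h0, h1]
    simp [mul_add]
  · rw [b0, h0]; simp [h.fix]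
  · rw [b1, h1]; simp [h.fix]

end CoxLemmas

/-- Phase dynamics: at time `t` the operator `A` is used if `ph t`, and otherwise the affine
map `x ↦ B x + l t`. -/
structure IsPhase (A B : Module.End ℝ E) (ph : ℕ → Prop) (l F : ℕ → E) : Prop where
  yes : ∀ t, ph (t + 1) → F (t + 2) + F t = A (F (t + 1))
  no : ∀ t, ¬ ph (t + 1) → F (t + 2) + F t = B (F (t + 1)) + l (t + 1)

/-- A solution `u` of the driven recursion agrees on a block with the image under `K` (commuting
with `B`) of a shifted copy of the reference solution `k`, as soon as the driving terms and the two
initial values do. -/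
theorem driven_eq {B K : Module.End ℝ E} (hK : Commute K B) {u k l : ℕ → E} {t₀ i₀ n : ℕ}
    (hu : ∀ i < n, u (t₀ + i + 2) + u (t₀ + i) = B (u (t₀ + i + 1)) + l (t₀ + i + 1))
    (hk : ∀ i, k (i + 2) + k i = B (k (i + 1)) + l (i + 1))
    (hl : ∀ i, l (t₀ + i) = K (l (i₀ + i)))
    (h0 : u t₀ = K (k i₀)) (h1 : u (t₀ + 1) = K (k (i₀ + 1))) (i : ℕ) (hi : i ≤ n + 1) :
    u (t₀ + i) = K (k (i₀ + i)) := by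
  have hc : ∀ x, K (B x) = B (K x) := fun x => congrArg (fun f => f x) hK.eq
  induction i using Nat.twoStepInduction with
  | zero => exact h0
  | one => exact h1
  | more i ih1 ih2 =>
    have e1 := eq_sub_of_add_eq (hu i (by omega))
    have e2 := eq_sub_of_add_eq (hk (i₀ + i))
    rw [← add_assoc, e1, ← add_assoc, e2, ih1 (by omega), add_assoc t₀, ih2 (by omega), hl]
    simp only [map_sub, map_add, hc, add_assoc]

section Patterns

variable {V : Type} {A B : Module.End ℝ (V → ℝ)} {m m' : ℕ}

/-- The pattern `A B A B`. -/
def patP (m m' : ℕ) (t : ℕ) : Prop :=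
  t ≤ m + 1 ∨ ((m + 1) + (m' + 1) < t ∧ t ≤ (m + 1) + (m' + 1) + (m + 1))

/-- The pattern `B A B A`. -/
def patM (m m' : ℕ) (t : ℕ) : Prop :=
  (m' + 1 < t ∧ t ≤ (m' + 1) + (m + 1)) ∨ (m' + 1) + (m + 1) + (m' + 1) < t

/-- The undriven phase dynamics is periodic, for either pattern. -/
theorem phase_periodic (hA : Cox A m) (hB : Cox B m') (hAB : Commute A B) {ph : ℕ → Prop}
    (hph : ph = patP m m' ∨ ph = patM m m') {F : ℕ → V → ℝ} (hF : IsPhase A B ph 0 F) :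
    F (2 * (m + 1 + (m' + 1))) = F 0 ∧ F (2 * (m + 1 + (m' + 1)) + 1) = F 1 := by
  have hc : ∀ x, cheb A m (cheb B m' x) = cheb B m' (cheb A m x) := fun x =>
    congrArg (fun f => f x) (cheb_commute ((cheb_commute hAB.symm m).symm) m').eq
  have no : ∀ t, ¬ ph (t + 1) → F (t + 2) + F t = B (F (t + 1)) := fun t ht => by
    simpa using hF.no t ht
  rcases hph with rfl | rfl
  · obtain ⟨a0, a1⟩ := hA.block (u := F) (t₀ := 0) fun i hi =>
      hF.yes _ (Or.inl (by omega))
    obtain ⟨b0, b1⟩ := hB.block (u := F) (t₀ := 0 + (m + 1)) fun i hi =>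
      no _ (by unfold patP; omega)
    obtain ⟨c0, c1⟩ := hA.block (u := F) (t₀ := 0 + (m + 1) + (m' + 1)) fun i hi =>
      hF.yes _ (by unfold patP; omega)
    obtain ⟨d0, d1⟩ := hB.block (u := F) (t₀ := 0 + (m + 1) + (m' + 1) + (m + 1)) fun i hi =>
      no _ (by unfold patP; omega)
    rw [show 2 * (m + 1 + (m' + 1)) = 0 + (m + 1) + (m' + 1) + (m + 1) + (m' + 1) by ring,
      d0, d1, c0, c1, b0, b1, a0, a1]
    simp only [map_neg, neg_neg, hc, hA.sq, hB.sq, zero_add, and_self]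
  · obtain ⟨a0, a1⟩ := hB.block (u := F) (t₀ := 0) fun i hi =>
      no _ (by unfold patM; omega)
    obtain ⟨b0, b1⟩ := hA.block (u := F) (t₀ := 0 + (m' + 1)) fun i hi =>
      hF.yes _ (by unfold patM; omega)
    obtain ⟨c0, c1⟩ := hB.block (u := F) (t₀ := 0 + (m' + 1) + (m + 1)) fun i hi =>
      no _ (by unfold patM; omega)
    obtain ⟨d0, d1⟩ := hA.block (u := F) (t₀ := 0 + (m' + 1) + (m + 1) + (m' + 1)) fun i hi =>
      hF.yes _ (by unfold patM; omega)
    rw [show 2 * (m + 1 + (m' + 1)) = 0 + (m' + 1) + (m + 1) + (m' + 1) + (m + 1) by ring,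
      d0, d1, c0, c1, b0, b1, a0, a1]
    simp only [map_neg, neg_neg, hc, hA.sq, hB.sq, zero_add, and_self]

/-- The driven phase dynamics started from zero ends in the same state for both patterns, namely
in the state at time `2h'` of the dynamics driven all the time. -/
theorem phase_driven (hA : Cox A m) (hAB : Commute A B) {l k : ℕ → V → ℝ}
    (hl : ∀ t, l (t + 2) + l t = A (l (t + 1)))
    (hk : ∀ t, k (t + 2) + k t = B (k (t + 1)) + l (t + 1)) (hk0 : k 0 = 0) (hk1 : k 1 = 0)
    {ph : ℕ → Prop} (hph : ph = patP m m' ∨ ph = patM m m') {F : ℕ → V → ℝ}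
    (hF : IsPhase A B ph l F) (hF0 : F 0 = 0) (hF1 : F 1 = 0) :
    F (2 * (m + 1 + (m' + 1))) = k (2 * (m' + 1)) ∧
      F (2 * (m + 1 + (m' + 1)) + 1) = k (2 * (m' + 1) + 1) := by
  have hc : Commute (-cheb A m) B := (cheb_commute hAB.symm m).symm.neg_left
  have hl1 : ∀ t, l (t + (m + 1)) = (-cheb A m) (l t) := fun t =>
    (hA.block (u := l) (t₀ := t) fun i _ => hl _).1
  have hl2 : ∀ t, l (t + (m + 1) + (m + 1)) = l t := fun t => by
    rw [hl1, hl1]; simp [hA.sq]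
  have h1c : Commute (1 : Module.End ℝ (V → ℝ)) B := Commute.one_left B
  rcases hph with rfl | rfl
  · obtain ⟨a0, a1⟩ := hA.block (u := F) (t₀ := 0) fun i hi =>
      hF.yes _ (Or.inl (by omega))
    have b := driven_eq hc (u := F) (k := k) (l := l) (t₀ := m + 1) (i₀ := 0) (n := m' + 1)
      (fun i hi => hF.no _ (by unfold patP; omega)) hk
      (fun i => by rw [← hl1]; congr 1; ring)
      (by simpa [hF0, hk0] using a0) (by simpa [hF1, hk1] using a1)
    have b0 := b (m' + 1) (by omega)
    have b1 := b (m' + 1 + 1) (by omega)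
    obtain ⟨c0, c1⟩ := hA.block (u := F) (t₀ := (m + 1) + (m' + 1)) fun i hi =>
      hF.yes _ (by unfold patP; omega)
    rw [b0] at c0
    rw [show (m + 1) + (m' + 1) + 1 = m + 1 + (m' + 1 + 1) by ring, b1] at c1
    simp only [LinearMap.neg_apply, map_neg, neg_neg, hA.sq, zero_add] at c0 c1
    have d := driven_eq h1c (u := F) (k := k) (l := l) (t₀ := m + 1 + (m' + 1) + (m + 1))
      (i₀ := m' + 1) (n := m' + 1)
      (fun i hi => hF.no _ (by unfold patP; omega)) hk
      (fun i => by
        rw [Module.End.one_apply, ← hl2 (m' + 1 + i)]; congr 1; ring)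
      (by simpa using c0) (by simpa using c1)
    refine ⟨?_, ?_⟩
    · have := d (m' + 1) (by omega)
      rw [Module.End.one_apply] at this
      convert this using 2 <;> ring
    · have := d (m' + 1 + 1) (by omega)
      rw [Module.End.one_apply] at this
      convert this using 2 <;> ring
  · have a := driven_eq h1c (u := F) (k := k) (l := l) (t₀ := 0)
      (i₀ := 0) (n := m' + 1)
      (fun i hi => hF.no _ (by unfold patM; omega)) hk
      (fun i => rfl) (by simp [hF0, hk0]) (by simp [hF1, hk1])
    have a0 := a (m' + 1) (by omega)
    have a1 := a (m' + 1 + 1) (by omega)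
    simp only [zero_add, Module.End.one_apply] at a0 a1
    obtain ⟨b0, b1⟩ := hA.block (u := F) (t₀ := m' + 1) fun i hi =>
      hF.yes _ (by unfold patM; omega)
    rw [a0] at b0
    rw [a1] at b1
    have c := driven_eq hc (u := F) (k := k) (l := l) (t₀ := m' + 1 + (m + 1)) (i₀ := m' + 1)
      (n := m' + 1)
      (fun i hi => hF.no _ (by unfold patM; omega)) hk
      (fun i => by rw [← hl1]; congr 1; ring) b0 b1
    have c0 := c (m' + 1) (by omega)
    have c1 := c (m' + 1 + 1) (by omega)
    obtain ⟨d0, d1⟩ := hA.block (u := F) (t₀ := m' + 1 + (m + 1) + (m' + 1)) fun i hi =>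
      hF.yes _ (by unfold patM; omega)
    rw [c0] at d0
    rw [show m' + 1 + (m + 1) + (m' + 1) + 1 = m' + 1 + (m + 1) + (m' + 1 + 1) by ring, c1] at d1
    simp only [LinearMap.neg_apply, map_neg, neg_neg, hA.sq] at d0 d1
    refine ⟨?_, ?_⟩
    · convert d0 using 2 <;> ring
    · convert d1 using 2 <;> ring

/-- The sign condition: the difference `g` of the two competing exponents is positive in the
`A`-phases and negative in the `B`-phases (up to the sign `δ` attached to the pattern). -/
theorem phase_sign (hA : Cox A m) (hB : Cox B m') (hAB : Commute A B) {l : ℕ → V → ℝ}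
    (hl : ∀ t, l (t + 2) + l t = A (l (t + 1))) (hl0 : l 0 = 1) (hl1 : l 1 = -1)
    {ph : ℕ → Prop} {δ : ℝ} (hph : (ph = patP m m' ∧ δ = 1) ∨ (ph = patM m m' ∧ δ = -1))
    {F : ℕ → V → ℝ} (hF : IsPhase A B ph l F) (hF0 : F 0 = 0) (hF1 : F 1 = 0)
    (t : ℕ) (ht : 0 < t) (ht' : t ≤ 2 * (m + 1 + (m' + 1))) (v : V) :
    (ph t → 0 < δ * (A (F t) - B (F t) - l t) v) ∧
    (¬ ph t → δ * (A (F t) - B (F t) - l t) v < 0) := by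
  have hc : ∀ x, A (B x) = B (A x) := fun x => congrArg (fun f => f x) hAB.eq
  set g : ℕ → V → ℝ := fun t => A (F t) - B (F t) - l t with hg
  have gA : ∀ t, ph (t + 1) → g (t + 2) + g t = A (g (t + 1)) := fun t h => by
    have e1 := eq_sub_of_add_eq (hF.yes t h)
    have e2 := eq_sub_of_add_eq (hl t)
    simp only [hg, e1, e2, map_sub, hc]
    abel
  have gB : ∀ t, ¬ ph (t + 1) → g (t + 2) + g t = B (g (t + 1)) := fun t h => by
    have e1 := eq_sub_of_add_eq (hF.no t h)
    have e2 := eq_sub_of_add_eq (hl t)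
    simp only [hg, e1, e2, map_sub, map_add, hc]
    abel
  have g0 : g 0 = (-1 : ℝ) • 1 := by simp [hg, hF0, hl0]
  have g1 : g (0 + 1) = (1 : ℝ) • 1 := by simp [hg, hF1, hl1]
  have fin : ∀ (t : ℕ) (v : V) (ε : ℝ), ε * δ = 1 ∧ ph t ∨ ε * δ = -1 ∧ ¬ ph t →
      (∃ p > 0, g t v = ε * p) → (ph t → 0 < δ * g t v) ∧ (¬ ph t → δ * g t v < 0) := by
    rintro t v ε h ⟨p, hp, e⟩
    rw [e, show δ * (ε * p) = ε * δ * p by ring]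
    rcases h with ⟨h, h'⟩ | ⟨h, h'⟩
    · rw [h]; exact ⟨fun _ => by linarith, fun h => absurd h' h⟩
    · rw [h]; exact ⟨fun h => absurd h h', fun _ => by linarith⟩
  rcases hph with ⟨rfl, rfl⟩ | ⟨rfl, rfl⟩
  · obtain ⟨s1, a0, a1⟩ := hA.block_sign (u := g) (t₀ := 0) 1 (fun i hi =>
      gA _ (Or.inl (by omega))) g0 g1
    obtain ⟨s2, b0, b1⟩ := hB.block_sign (u := g) (t₀ := 0 + (m + 1)) (-1) (fun i hi =>
      gB _ (by unfold patP; omega)) (by simpa using a0) a1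
    obtain ⟨s3, c0, c1⟩ := hA.block_sign (u := g) (t₀ := 0 + (m + 1) + (m' + 1)) 1 (fun i hi =>
      gA _ (by unfold patP; omega)) b0 (by simpa using b1)
    obtain ⟨s4, -, -⟩ := hB.block_sign (u := g) (t₀ := 0 + (m + 1) + (m' + 1) + (m + 1)) (-1)
      (fun i hi => gB _ (by unfold patP; omega)) (by simpa using c0) c1
    by_cases h1 : t ≤ 0 + (m + 1)
    · exact fin t v 1 (Or.inl ⟨by norm_num, by unfold patP; omega⟩) (s1 t ht h1 v)
    by_cases h2 : t ≤ 0 + (m + 1) + (m' + 1)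
    · exact fin t v (-1) (Or.inr ⟨by norm_num, by unfold patP; omega⟩) (s2 t (by omega) h2 v)
    by_cases h3 : t ≤ 0 + (m + 1) + (m' + 1) + (m + 1)
    · exact fin t v 1 (Or.inl ⟨by norm_num, by unfold patP; omega⟩) (s3 t (by omega) h3 v)
    · exact fin t v (-1) (Or.inr ⟨by norm_num, by unfold patP; omega⟩)
        (s4 t (by omega) (by omega) v)
  · obtain ⟨s1, a0, a1⟩ := hB.block_sign (u := g) (t₀ := 0) 1 (fun i hi =>
      gB _ (by unfold patM; omega)) g0 g1
    obtain ⟨s2, b0, b1⟩ := hA.block_sign (u := g) (t₀ := 0 + (m' + 1)) (-1) (fun i hi =>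
      gA _ (by unfold patM; omega)) (by simpa using a0) a1
    obtain ⟨s3, c0, c1⟩ := hB.block_sign (u := g) (t₀ := 0 + (m' + 1) + (m + 1)) 1 (fun i hi =>
      gB _ (by unfold patM; omega)) b0 (by simpa using b1)
    obtain ⟨s4, -, -⟩ := hA.block_sign (u := g) (t₀ := 0 + (m' + 1) + (m + 1) + (m' + 1)) (-1)
      (fun i hi => gA _ (by unfold patM; omega)) (by simpa using c0) c1
    by_cases h1 : t ≤ 0 + (m' + 1)
    · exact fin t v 1 (Or.inr ⟨by norm_num, by unfold patM; omega⟩) (s1 t ht h1 v)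
    by_cases h2 : t ≤ 0 + (m' + 1) + (m + 1)
    · exact fin t v (-1) (Or.inl ⟨by norm_num, by unfold patM; omega⟩) (s2 t (by omega) h2 v)
    by_cases h3 : t ≤ 0 + (m' + 1) + (m + 1) + (m' + 1)
    · exact fin t v 1 (Or.inr ⟨by norm_num, by unfold patM; omega⟩) (s3 t (by omega) h3 v)
    · exact fin t v (-1) (Or.inl ⟨by norm_num, by unfold patM; omega⟩)
        (s4 t (by omega) (by omega) v)

end Patterns

end Linear

/-! ### Asymptotics at the ends of the parameter range -/

section Asymptotics

open Filter Topology

/-- A real polynomial `P` with `P(z) ~ c z^ρ` both as `z → ∞` and as `z → 0` is the monomial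
`c z^ρ`; in particular `P(1) = c`. -/
theorem eval_one_of_asymptotics (P : Polynomial ℝ) {c ρ : ℝ} (hc : 0 < c)
    (h1 : Tendsto (fun r => P.eval (Real.exp r) * Real.exp (-(ρ * r))) atTop (𝓝 c))
    (h2 : Tendsto (fun r => P.eval (Real.exp (-r)) * Real.exp (ρ * r)) atTop (𝓝 c)) :
    P.eval 1 = c := by
  have hP : P ≠ 0 := by
    rintro rfl
    simp only [Polynomial.eval_zero, zero_mul] at h1
    exact hc.ne (tendsto_nhds_unique tendsto_const_nhds h1)
  have hl : P.leadingCoeff ≠ 0 := Polynomial.leadingCoeff_ne_zero.mpr hP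
  have e1 : Tendsto (fun x => P.eval x / (P.leadingCoeff * x ^ P.natDegree)) atTop (𝓝 1) := by
    have := P.isEquivalent_atTop_lead
    refine (Asymptotics.isEquivalent_iff_tendsto_one ?_).mp this
    filter_upwards [eventually_gt_atTop 0] with x hx
    exact mul_ne_zero hl (pow_ne_zero _ hx.ne')
  have e2 := e1.comp Real.tendsto_exp_atTop
  have e3 : Tendsto (fun r => Real.exp ((P.natDegree - ρ) * r)) atTop
      (𝓝 (c / 1 / P.leadingCoeff)) := by
    refine ((h1.div e2 one_ne_zero).div_const P.leadingCoeff).congr' ?_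
    have hev : ∀ᶠ r in atTop, P.eval (Real.exp r) ≠ 0 := by
      have := e2.eventually_ne one_ne_zero
      filter_upwards [this] with r hr h0
      exact hr (by simp [h0])
    filter_upwards [hev] with r hr
    have : Real.exp r ^ P.natDegree = Real.exp (P.natDegree * r) := by
      rw [← Real.exp_nat_mul]
    simp only [Pi.div_apply, Function.comp_apply, this]
    rw [show ((P.natDegree : ℝ) - ρ) * r = P.natDegree * r + -(ρ * r) by ring, Real.exp_add]
    field_simp
  have hρ : ρ = P.natDegree := by
    rcases lt_trichotomy ρ P.natDegree with h | h | h
    · have : Tendsto (fun r => Real.exp ((P.natDegree - ρ) * r)) atTop atTop :=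
        Real.tendsto_exp_atTop.comp (tendsto_id.const_mul_atTop (sub_pos.mpr h))
      exact absurd e3 (not_tendsto_nhds_of_tendsto_atTop this _)
    · exact h
    · have : Tendsto (fun r => Real.exp ((P.natDegree - ρ) * r)) atTop (𝓝 0) :=
        Real.tendsto_exp_atBot.comp (tendsto_id.const_mul_atTop_of_neg (sub_neg.mpr h))
      have := tendsto_nhds_unique e3 this
      rw [div_one, div_eq_zero_iff] at this
      exact absurd this (by simp [hc.ne', hl])
  have hrev : ∀ x : ℝ, 0 < x → P.eval x⁻¹ * x ^ P.natDegree = P.reverse.eval x := by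
    intro x hx
    have hx' : x⁻¹ ≠ 0 := inv_ne_zero hx.ne'
    let _ : Invertible x⁻¹ := invertibleOfNonzero hx'
    have := Polynomial.eval₂_reverse_mul_pow (RingHom.id ℝ) x⁻¹ P
    rw [invOf_eq_inv, inv_inv] at this
    simp only [Polynomial.eval₂_id] at this
    rw [← this, mul_assoc, ← mul_pow, inv_mul_cancel₀ hx.ne', one_pow, mul_one]
  have e4 : Tendsto (fun x => P.reverse.eval x) atTop (𝓝 c) := by
    refine (h2.comp Real.tendsto_log_atTop).congr' ?_
    filter_upwards [eventually_gt_atTop 0] with x hx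
    rw [← hrev x hx, hρ]
    simp only [Function.comp]
    rw [Real.exp_neg, Real.exp_nat_mul, Real.exp_log hx]
  obtain ⟨h3, h4⟩ := (Polynomial.tendsto_nhds_iff _).mp e4
  have h5 := hrev 1 one_pos
  rw [inv_one, one_pow, mul_one] at h5
  rw [h5, Polynomial.eq_C_of_degree_le_zero h4, Polynomial.eval_C]
  rw [Polynomial.leadingCoeff, Polynomial.natDegree_eq_of_degree_eq_some
    (n := 0) (Polynomial.degree_eq_iff_natDegree_eq
      (by rintro h; rw [h] at h3; simp at h3; exact hc.ne h3) |>.mpr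
      (Polynomial.natDegree_eq_zero_iff_degree_le_zero.mpr h4))] at h3
  exact h3

theorem tendsto_log_add_exp {p q : ℝ → ℝ} (h : Tendsto (fun r => q r - p r) atTop atBot) :
    Tendsto (fun r => Real.log (Real.exp (p r) + Real.exp (q r)) - p r) atTop (𝓝 0) := by
  have h1 : Tendsto (fun r => 1 + Real.exp (q r - p r)) atTop (𝓝 (1 + 0)) :=
    tendsto_const_nhds.add (Real.tendsto_exp_atBot.comp h)
  rw [add_zero] at h1
  have h2 := h1.log one_ne_zero
  rw [Real.log_one] at h2
  refine h2.congr fun r => ?_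
  have : Real.exp (p r) + Real.exp (q r) = Real.exp (p r) * (1 + Real.exp (q r - p r)) := by
    rw [mul_add, ← Real.exp_add]; simp
  rw [this, Real.log_mul (Real.exp_pos _).ne' (by positivity), Real.log_exp]
  ring

variable {V : Type} [Fintype V]

/-- The adjacency operator `(A x)_v = ∑ᵤ A_{vu} xᵤ` on `ℝ^V`. -/
noncomputable def adjOp (A : V → V → ℕ) : Module.End ℝ (V → ℝ) :=
  Matrix.mulVecLin (Matrix.of fun v u => (A v u : ℝ))

theorem adjOp_apply (A : V → V → ℕ) (x : V → ℝ) (v : V) :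
    adjOp A x v = ∑ u, (A v u : ℝ) * x u := rfl

theorem adjOp_commute {A B : V → V → ℕ}
    (hrec : ∀ u v, (∑ w, A u w * B w v) = ∑ w, B u w * A w v) : Commute (adjOp A) (adjOp B) := by
  refine LinearMap.ext fun x => ?_
  simp only [adjOp, Module.End.mul_apply, Matrix.mulVecLin_apply, Matrix.mulVec_mulVec]
  congr 1
  ext u v
  simp only [Matrix.mul_apply, Matrix.of_apply]
  exact_mod_cast hrec u v

theorem adjOp_tendsto (A : V → V → ℕ) {D : ℝ → V → ℝ}
    (h : ∀ u, Tendsto (fun r => D r u) atTop (𝓝 0)) (v : V) :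
    Tendsto (fun r => adjOp A (D r) v) atTop (𝓝 0) := by
  simp only [adjOp_apply]
  simpa using tendsto_finsetSum (Finset.univ : Finset V) fun u _ =>
    (h u).const_mul (A v u : ℝ)

/-- Asymptotics of the logarithms of the deformed system: the solution follows the piecewise
linear dynamics in which, at each time, the dominant one of the two monomials is kept. -/
theorem asymptotics {A B : V → V → ℕ} {X : ℕ → ℝ → V → ℝ} {a l e : ℕ → V → ℝ} {δ : ℝ}
    {ph : ℕ → Prop} {N : ℕ}
    (ha : IsPhase (adjOp A) (adjOp B) ph 0 a) (he : IsPhase (adjOp A) (adjOp B) ph l e)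
    (he0 : e 0 = 0) (he1 : e 1 = 0) (hX0 : ∀ r, X 0 r = a 0) (hX1 : ∀ r, X 1 r = a 1)
    (hX : ∀ n r v, X (n + 2) r v + X n r v = Real.log (Real.exp (adjOp A (X (n + 1) r) v)
      + Real.exp (δ * r * l (n + 1) v + adjOp B (X (n + 1) r) v)))
    (hs : ∀ t, 0 < t → t ≤ N → ∀ v,
      (ph t → 0 < δ * (adjOp A (e t) - adjOp B (e t) - l t) v) ∧
      (¬ ph t → δ * (adjOp A (e t) - adjOp B (e t) - l t) v < 0))
    (n : ℕ) (hn : n ≤ N + 1) (v : V) :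
    Tendsto (fun r => X n r v - a n v - δ * r * e n v) atTop (𝓝 0) := by
  induction n using Nat.twoStepInduction generalizing v with
  | zero => simp [hX0, he0]
  | one => simp [hX1, he1]
  | more n ih1 ih2 =>
    set D : ℝ → V → ℝ := fun r => X (n + 1) r - a (n + 1) - (δ * r) • e (n + 1) with hD
    have hXD : ∀ r, X (n + 1) r = a (n + 1) + (δ * r) • e (n + 1) + D r := fun r => by
      simp [hD]
    have hDt : ∀ u, Tendsto (fun r => D r u) atTop (𝓝 0) := fun u => by
      simpa [hD] using ih2 (by omega) u
    have DA := adjOp_tendsto A hDt v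
    have DB := adjOp_tendsto B hDt v
    obtain ⟨s1, s2⟩ := hs (n + 1) (by omega) (by omega) v
    have eA : ∀ r, adjOp A (X (n + 1) r) v
        = adjOp A (a (n + 1)) v + δ * r * adjOp A (e (n + 1)) v + adjOp A (D r) v := fun r => by
      rw [hXD r]; simp
    have eB : ∀ r, adjOp B (X (n + 1) r) v
        = adjOp B (a (n + 1)) v + δ * r * adjOp B (e (n + 1)) v + adjOp B (D r) v := fun r => by
      rw [hXD r]; simp
    have ih := ih1 (by omega) v
    by_cases hp : ph (n + 1)
    · have h3 := s1 hp
      have a1 := congrFun (ha.yes n hp) v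
      have e1 := congrFun (he.yes n hp) v
      simp only [Pi.add_apply, Pi.sub_apply] at a1 e1 h3
      have key : Tendsto (fun r => (δ * r * l (n + 1) v + adjOp B (X (n + 1) r) v)
          - adjOp A (X (n + 1) r) v) atTop atBot := by
        have t1 : Tendsto (fun r : ℝ => (-(δ * (adjOp A (e (n + 1)) v - adjOp B (e (n + 1)) v
            - l (n + 1) v))) * r) atTop atBot :=
          tendsto_id.const_mul_atTop_of_neg (by linarith)
        have t2 := t1.atBot_add
          ((DB.sub DA).const_add (adjOp B (a (n + 1)) v - adjOp A (a (n + 1)) v))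
        refine t2.congr fun r => ?_
        rw [eA, eB]; ring
      have t := ((tendsto_log_add_exp key).add DA).sub ih
      simp only [add_zero, sub_zero] at t
      refine t.congr fun r => ?_
      have hx := hX n r v
      rw [eq_sub_of_add_eq hx, eq_sub_of_add_eq a1, eq_sub_of_add_eq e1, eA]
      ring
    · have h3 := s2 hp
      have a1 := congrFun (ha.no n hp) v
      have e1 := congrFun (he.no n hp) v
      simp only [Pi.add_apply, Pi.sub_apply, Pi.zero_apply, add_zero] at a1 e1 h3
      have key : Tendsto (fun r => adjOp A (X (n + 1) r) v -
          (δ * r * l (n + 1) v + adjOp B (X (n + 1) r) v)) atTop atBot := by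
        have t1 : Tendsto (fun r : ℝ => (δ * (adjOp A (e (n + 1)) v - adjOp B (e (n + 1)) v
            - l (n + 1) v)) * r) atTop atBot :=
          tendsto_id.const_mul_atTop_of_neg h3
        have t2 := t1.atBot_add
          ((DA.sub DB).const_add (adjOp A (a (n + 1)) v - adjOp B (a (n + 1)) v))
        refine t2.congr fun r => ?_
        rw [eA, eB]; ring
      have t := ((tendsto_log_add_exp key).add DB).sub ih
      simp only [add_zero, sub_zero] at t
      refine t.congr fun r => ?_
      have hx := hX n r v
      rw [eq_sub_of_add_eq hx, eq_sub_of_add_eq a1, eq_sub_of_add_eq e1,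
        add_comm (Real.exp (adjOp A _ _)), eB]
      ring

end Asymptotics

/-! ### Periodicity over the positive reals -/

section Deformed

open Filter Topology

variable {V : Type} [Fintype V]

theorem PR.ne (x : PR) : (x : ℝ) ≠ 0 := x.2.ne'

theorem exists_rec {E : Type} [AddCommGroup E] (G : ℕ → E → E) (x₀ x₁ : E) :
    ∃ F : ℕ → E, F 0 = x₀ ∧ F 1 = x₁ ∧ ∀ t, F (t + 2) + F t = G t (F (t + 1)) := by
  let p : ℕ → E × E := fun n => Nat.rec (x₀, x₁) (fun t q => (q.2, G t q.2 - q.1)) n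
  exact ⟨fun t => (p t).1, rfl, rfl, fun t => sub_add_cancel _ _⟩

theorem exists_phase (A B : Module.End ℝ (V → ℝ)) (ph : ℕ → Prop) (l : ℕ → V → ℝ)
    (x₀ x₁ : V → ℝ) : ∃ F : ℕ → V → ℝ, F 0 = x₀ ∧ F 1 = x₁ ∧ IsPhase A B ph l F := by
  classical
  obtain ⟨F, h0, h1, h⟩ := exists_rec
    (fun t x => if ph (t + 1) then A x else B x + l (t + 1)) x₀ x₁
  exact ⟨F, h0, h1, fun t ht => by rw [h, if_pos ht], fun t ht => by rw [h, if_neg ht]⟩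

variable [DecidableEq V]

/-- The state with variables `α₀, α₁` and coefficients `z, z⁻¹`. -/
noncomputable def start (α₀ α₁ : V → PR) (z : PR) : Fin 4 × V → PR :=
  mk4 α₀ α₁ (fun _ => z) (fun _ => z⁻¹)

variable (A B : V → V → ℕ)

theorem step_iter_one (s : Fin 4 × V → PR) (n : ℕ) (v : V) :
    (step A B)^[n] s (1, v) = (step A B)^[n + 1] s (0, v) := by
  rw [Function.iterate_succ_apply']; rfl

theorem step_iter_three (s : Fin 4 × V → PR) (n : ℕ) (v : V) :
    (step A B)^[n] s (3, v) = (step A B)^[n + 1] s (2, v) := by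
  rw [Function.iterate_succ_apply']; rfl

theorem step_iter_rec (s : Fin 4 × V → PR) (n : ℕ) (v : V) :
    ((step A B)^[n + 2] s (0, v) : ℝ) = exch (fun u => ((step A B)^[n + 1] s (0, u) : ℝ))
      ((step A B)^[n + 1] s (2, v)) (A v) (B v) / (step A B)^[n] s (0, v) := by
  have h : ∀ s, (step A B s (1, v) : ℝ) = exch (fun u => (s (1, u) : ℝ)) (s (3, v)) (A v) (B v)
      / s (0, v) := fun s => PR.coe_div _ _
  rw [← step_iter_one, Function.iterate_succ_apply', h]
  simp only [step_iter_one, step_iter_three, Function.iterate_succ_apply']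

theorem step_iter_coef (s : Fin 4 × V → PR) (n : ℕ) (v : V) :
    ((step A B)^[n + 2] s (2, v) : ℝ) =
      (∏ u, ((step A B)^[n + 1] s (2, u) : ℝ) ^ A v u) / (step A B)^[n] s (2, v) := by
  have h : ∀ s, (step A B s (3, v) : ℝ) = (∏ u, (s (3, u) : ℝ) ^ A v u) / s (2, v) :=
    fun s => PR.coe_div _ _
  rw [← step_iter_three, Function.iterate_succ_apply', h]
  simp only [step_iter_three, Function.iterate_succ_apply']

theorem log_prod_pow (x : V → PR) (a : V → ℕ) :
    Real.log (∏ u, (x u : ℝ) ^ a u) = ∑ u, (a u : ℝ) * Real.log (x u) := by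
  rw [Real.log_prod fun u _ => (pow_pos (x u).2 _).ne']
  simp only [Real.log_pow]

theorem prod_pow_eq_exp (x : V → PR) (a : V → ℕ) :
    (∏ u, (x u : ℝ) ^ a u) = Real.exp (∑ u, (a u : ℝ) * Real.log (x u)) := by
  rw [← log_prod_pow, Real.exp_log (Finset.prod_pos fun u _ => pow_pos (x u).2 _)]

variable {A B}

/-- The coefficients are powers of the deformation parameter `z`. -/
theorem coef_log {l : ℕ → V → ℝ} (hl : ∀ t, l (t + 2) + l t = adjOp A (l (t + 1)))
    (hl0 : l 0 = 1) (hl1 : l 1 = -1) (α₀ α₁ : V → PR) (z : PR) (n : ℕ) (v : V) :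
    Real.log ((step A B)^[n] (start α₀ α₁ z) (2, v)) = Real.log z * l n v := by
  induction n using Nat.twoStepInduction generalizing v with
  | zero => simp [start, hl0]
  | one => rw [← step_iter_three]; simp [start, hl1]
  | more n ih1 ih2 =>
    rw [step_iter_coef, Real.log_div (Finset.prod_pos fun u _ => pow_pos (Subtype.prop _) _).ne'
      (PR.ne _), log_prod_pow, ih1, eq_sub_of_add_eq (hl n)]
    simp only [ih2, Pi.sub_apply, adjOp_apply, mul_sub, Finset.mul_sum]
    congr 1
    exact Finset.sum_congr rfl fun u _ => by ring

/-- Along the one-parameter family of initial states each variable of the deformed system is a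
Laurent polynomial of the parameter. -/
theorem exists_polynomial (hA : ∀ u v, A u v = A v u) (hB : ∀ u v, B u v = B v u)
    (hAB : ∀ u v, A u v * B u v = 0)
    (hrec : ∀ u v, (∑ w, A u w * B w v) = ∑ w, B u w * A w v) (α₀ α₁ : V → PR) (n : ℕ) (v : V) :
    ∃ (m : ℕ) (P : Polynomial ℝ), ∀ z : PR,
      ((step A B)^[n] (start α₀ α₁ z) (0, v) : ℝ) * (z : ℝ) ^ m = P.eval (z : ℝ) := by
  have h := laurent_phenomenon hA hB hAB hrec v n
  have h2 : IsL (fun s : Unit → PR =>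
      ((step A B)^[n] (start α₀ α₁ (s ())) (0, v) : ℝ)) := by
    refine h.comp_unit (κ := fun s : Unit → PR => start α₀ α₁ (s ())) ?_ ?_
    · refine forall_slot (fun v => IsL.const (α₀ v : ℝ)) (fun v => IsL.const (α₁ v : ℝ))
        (fun v => IsL.coord ())
        (fun v => ?_)
      simpa [start] using IsL.coord_inv ()
    · refine forall_slot (fun v => IsL.const (α₀ v : ℝ)⁻¹) (fun v => IsL.const (α₁ v : ℝ)⁻¹)
        (fun v => IsL.coord_inv ()) (fun v => ?_)
      simpa [start] using IsL.coord ()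
  obtain ⟨m, P, hP⟩ := h2
  refine ⟨m, MvPolynomial.aeval (fun _ => Polynomial.X) P, fun z => ?_⟩
  have := hP fun _ => z
  simp only [Finset.univ_unique, Finset.prod_singleton] at this
  rw [this, ← Polynomial.coe_evalRingHom, MvPolynomial.aeval_def, MvPolynomial.eval₂_eq',
    MvPolynomial.eval_eq']
  simp

/-- If a variable of the deformed system has the asymptotics `c z^K` at both ends of the parameter
range, then its value at `z = 1` is `c`. -/
theorem value_at_one {g : PR → ℝ} {m : ℕ} {P : Polynomial ℝ}
    (hpos : ∀ z, 0 < g z) (hP : ∀ z : PR, g z * (z : ℝ) ^ m = P.eval (z : ℝ)) {c K : ℝ}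
    (h : ∀ δ : ℝ, δ = 1 ∨ δ = -1 → Tendsto (fun r =>
      Real.log (g ⟨Real.exp (δ * r), Real.exp_pos _⟩) - c - δ * r * K) atTop (𝓝 0)) :
    g 1 = Real.exp c := by
  have h' : ∀ δ : ℝ, δ = 1 ∨ δ = -1 → Tendsto (fun r =>
      P.eval (Real.exp (δ * r)) * Real.exp (-(δ * ((K + m) * r)))) atTop (𝓝 (Real.exp c)) := by
    intro δ hδ
    have h1 := (Real.continuous_exp.tendsto _).comp ((h δ hδ).add_const c)
    rw [zero_add] at h1
    refine h1.congr fun r => ?_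
    have := hP ⟨Real.exp (δ * r), Real.exp_pos _⟩
    simp only at this
    rw [← this, ← Real.exp_nat_mul]
    conv_rhs => rw [← Real.exp_log (hpos ⟨Real.exp (δ * r), Real.exp_pos _⟩)]
    rw [← Real.exp_add, ← Real.exp_add]
    simp only [Function.comp]
    congr 1
    ring
  have h1 := eval_one_of_asymptotics P (ρ := K + m) (Real.exp_pos c)
    (by simpa using h' 1 (Or.inl rfl)) (by simpa using h' (-1) (Or.inr rfl))
  have h2 := hP 1
  simpa [h1] using h2

/-- At `z = 1` the deformed system returns to its initial values after `2 (h + h')` steps, where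
`h = m + 1` and `h' = m' + 1` are the Coxeter numbers. -/
theorem deformed_periodic (hA : ∀ u v, A u v = A v u) (hB : ∀ u v, B u v = B v u)
    (hAB : ∀ u v, A u v * B u v = 0)
    (hrec : ∀ u v, (∑ w, A u w * B w v) = ∑ w, B u w * A w v)
    {m m' : ℕ} (cA : Cox (adjOp A) m) (cB : Cox (adjOp B) m') (α₀ α₁ : V → PR) (v : V) :
    ((step A B)^[2 * (m + 1 + (m' + 1))] (start α₀ α₁ 1) (0, v) : ℝ) = α₀ v ∧
    ((step A B)^[2 * (m + 1 + (m' + 1)) + 1] (start α₀ α₁ 1) (0, v) : ℝ) = α₁ v := by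
  have hc := adjOp_commute hrec
  obtain ⟨l, hl0, hl1, hl⟩ := exists_rec (fun _ x => adjOp A x) (1 : V → ℝ) (-1)
  obtain ⟨k, hk0, hk1, hk⟩ := exists_rec (fun t x => adjOp B x + l (t + 1)) (0 : V → ℝ) 0
  -- for either end of the parameter range the phase pattern has the same outcome
  have key : ∀ δ : ℝ, δ = 1 ∨ δ = -1 → ∃ a e : ℕ → V → ℝ,
      (∀ n ≤ 2 * (m + 1 + (m' + 1)) + 1, ∀ v, Tendsto (fun r =>
        Real.log ((step A B)^[n] (start α₀ α₁ ⟨Real.exp (δ * r), Real.exp_pos _⟩) (0, v))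
          - a n v - δ * r * e n v) atTop (𝓝 0)) ∧
      a (2 * (m + 1 + (m' + 1))) = (fun v => Real.log (α₀ v)) ∧
      a (2 * (m + 1 + (m' + 1)) + 1) = (fun v => Real.log (α₁ v)) ∧
      e (2 * (m + 1 + (m' + 1))) = k (2 * (m' + 1)) ∧
      e (2 * (m + 1 + (m' + 1)) + 1) = k (2 * (m' + 1) + 1) := by
    intro δ hδ
    obtain ⟨ph, hph⟩ : ∃ ph, (ph = patP m m' ∧ δ = 1) ∨ (ph = patM m m' ∧ δ = -1) := by
      rcases hδ with h | h
      · exact ⟨_, Or.inl ⟨rfl, h⟩⟩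
      · exact ⟨_, Or.inr ⟨rfl, h⟩⟩
    have hph' : ph = patP m m' ∨ ph = patM m m' := hph.imp And.left And.left
    obtain ⟨a, ha0, ha1, ha⟩ := exists_phase (adjOp A) (adjOp B) ph 0
      (fun v => Real.log (α₀ v)) (fun v => Real.log (α₁ v))
    obtain ⟨e, he0, he1, he⟩ := exists_phase (adjOp A) (adjOp B) ph l 0 0
    obtain ⟨p0, p1⟩ := phase_periodic cA cB hc hph' ha
    obtain ⟨d0, d1⟩ := phase_driven cA hc hl hk hk0 hk1 hph' he he0 he1
    refine ⟨a, e, fun n hn v => ?_, by rw [p0, ha0], by rw [p1, ha1], d0, d1⟩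
    refine asymptotics (X := fun n r v => Real.log
      ((step A B)^[n] (start α₀ α₁ ⟨Real.exp (δ * r), Real.exp_pos _⟩) (0, v)))
      ha he he0 he1 ?_ ?_ ?_ (fun t ht ht' v => phase_sign cA cB hc hl hl0 hl1 hph he he0 he1
        t ht ht' v) n hn v
    · intro r; simp [start, ha0]
    · intro r; funext v; rw [← step_iter_one, ha1]; simp [start]
    · intro n r v
      have hz : Real.log ((step A B)^[n + 1]
          (start α₀ α₁ ⟨Real.exp (δ * r), Real.exp_pos _⟩) (2, v)) = δ * r * l (n + 1) v := by
        rw [coef_log hl hl0 hl1, Real.log_exp]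
      rw [step_iter_rec, Real.log_div (exch_pos (fun u => Subtype.prop _)
        (Subtype.prop _) _ _).ne' (PR.ne _), sub_add_cancel, exch, prod_pow_eq_exp,
        prod_pow_eq_exp, Real.exp_add, ← hz, Real.exp_log (Subtype.prop _)]
      rfl
  obtain ⟨a, e, h1, a0, a1, e0, e1⟩ := key 1 (Or.inl rfl)
  obtain ⟨a', e', h1', a0', a1', e0', e1'⟩ := key (-1) (Or.inr rfl)
  constructor
  · obtain ⟨m₀, P, hP⟩ := exists_polynomial hA hB hAB hrec α₀ α₁ (2 * (m + 1 + (m' + 1))) v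
    rw [value_at_one (fun z => Subtype.prop _) hP (c := Real.log (α₀ v))
      (K := k (2 * (m' + 1)) v) ?_, Real.exp_log (α₀ v).2]
    rintro δ (rfl | rfl)
    · simpa only [a0, e0] using h1 (2 * (m + 1 + (m' + 1))) (by omega) v
    · simpa only [a0', e0'] using h1' (2 * (m + 1 + (m' + 1))) (by omega) v
  · obtain ⟨m₀, P, hP⟩ := exists_polynomial hA hB hAB hrec α₀ α₁ (2 * (m + 1 + (m' + 1)) + 1) v
    rw [value_at_one (fun z => Subtype.prop _) hP (c := Real.log (α₁ v))
      (K := k (2 * (m' + 1) + 1) v) ?_, Real.exp_log (α₁ v).2]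
    rintro δ (rfl | rfl)
    · simpa only [a1, e1] using h1 (2 * (m + 1 + (m' + 1)) + 1) (by omega) v
    · simpa only [a1', e1'] using h1' (2 * (m + 1 + (m' + 1)) + 1) (by omega) v

/-- Periodicity for families of positive real numbers. -/
theorem real_periodic (hA : ∀ u v, A u v = A v u) (hB : ∀ u v, B u v = B v u)
    (hAB : ∀ u v, A u v * B u v = 0)
    (hrec : ∀ u v, (∑ w, A u w * B w v) = ∑ w, B u w * A w v)
    {m m' : ℕ} (cA : Cox (adjOp A) m) (cB : Cox (adjOp B) m') {X : ℤ → V → ℝ}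
    (hpos : ∀ t v, 0 < X t v)
    (hX : ∀ t v, X (t + 1) v * X (t - 1) v = (∏ u, X t u ^ A v u) + ∏ u, X t u ^ B v u)
    (t : ℤ) (v : V) : X (t + 2 * ((m + 1 : ℤ) + (m' + 1))) v = X t v := by
  have key : ∀ n : ℕ, (step A B)^[n] (start (fun v => ⟨X t v, hpos t v⟩)
      (fun v => ⟨X (t + 1) v, hpos _ v⟩) 1) = start (fun v => ⟨X (t + n) v, hpos _ v⟩)
      (fun v => ⟨X (t + n + 1) v, hpos _ v⟩) 1 := by
    intro n
    induction n with
    | zero => simp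
    | succ n ih =>
      rw [Function.iterate_succ_apply', ih]
      refine st_ext (fun v => ?_) (fun v => ?_) (fun v => ?_) (fun v => ?_)
      · simp [step, start, add_assoc]
      · refine Subtype.ext ?_
        have := hX (t + n + 1) v
        rw [add_sub_cancel_right] at this
        simp only [step, start, mk4_1, mk4_0, PR.coe_div, pb, coe_pexch, mk4_3, exch]
        rw [div_eq_iff (hpos _ _).ne']
        push_cast
        rw [show t + ((n : ℤ) + 1) + 1 = t + n + 1 + 1 by ring, this]
        simp
      · simp [step, start]
      · refine Subtype.ext ?_
        simp [step, start, qn, coe_pmon]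
  have h := (deformed_periodic hA hB hAB hrec cA cB (fun v => ⟨X t v, hpos t v⟩)
    (fun v => ⟨X (t + 1) v, hpos _ v⟩) v).1
  rw [key] at h
  simp only [start, mk4_0] at h
  rw [← h]
  push_cast
  rfl

end Deformed

/-! ### Waves on a path and type A -/

section Paths

/-- A solution of the discrete wave equation on the path `0, …, h` vanishing at both ends. -/
structure IsPath (h : ℕ) (u : ℕ → ℕ → ℝ) : Prop where
  left : ∀ t, u t 0 = 0
  right : ∀ t, u t h = 0
  wave : ∀ t y, y + 2 ≤ h → u (t + 2) (y + 1) + u t (y + 1) = u (t + 1) y + u (t + 1) (y + 2)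

variable {h : ℕ} {u : ℕ → ℕ → ℝ}

theorem IsPath.rect_one (hu : IsPath h u) (q t y : ℕ) (hy : y + 1 + q ≤ h) :
    u (t + 1 + q) (y + 1) + u t (y + q) = u (t + 1) (y + 1 + q) + u (t + q) y := by
  induction q generalizing y with
  | zero => simp
  | succ q ih =>
    have e1 := ih (y + 1) (by omega)
    have e2 := hu.wave (t + q) y (by omega)
    rw [show t + 1 + (q + 1) = t + q + 2 by ring, show t + (q + 1) = t + q + 1 by ring,
      show y + (q + 1) = y + 1 + q by ring, show y + 1 + (q + 1) = y + 1 + 1 + q by ring]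
    rw [show t + 1 + q = t + q + 1 by ring, show y + 1 + 1 = y + 2 by ring] at e1
    rw [show y + 1 + 1 = y + 2 by ring]
    linarith

/-- The parallelogram rule for the wave equation. -/
theorem IsPath.rect (hu : IsPath h u) (p q t y : ℕ) (hy : y + p + q ≤ h) :
    u (t + p + q) (y + p) + u t (y + q) = u (t + p) (y + p + q) + u (t + q) y := by
  induction p generalizing t y with
  | zero => simp [add_comm]
  | succ p ih =>
    have e1 := ih (t + 1) (y + 1) (by omega)
    have e2 := hu.rect_one q t y (by omega)
    rw [show t + (p + 1) + q = t + 1 + p + q by ring, show t + (p + 1) = t + 1 + p by ring,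
      show y + (p + 1) + q = y + 1 + p + q by ring, show y + (p + 1) = y + 1 + p by ring]
    linarith

/-- After `h` steps a wave on the path is reflected, with the opposite sign. -/
theorem IsPath.reflect (hu : IsPath h u) (y : ℕ) (hy : y ≤ h) : u h y = - u 0 (h - y) := by
  have := hu.rect y (h - y) 0 0 (by omega)
  rw [show 0 + y + (h - y) = h by omega, hu.right, hu.left] at this
  simp only [zero_add] at this
  linarith

/-- On the times `0, …, h` a wave is determined by its two initial values, and hence equals any
explicit integer solution with the same initial and boundary values. -/
theorem IsPath.eq_closed (hu : IsPath h u) {c : ℕ → ℕ → ℤ}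
    (h0 : ∀ y, 1 ≤ y → y < h → u 0 y = c 0 y) (h1 : ∀ y, 1 ≤ y → y < h → u 1 y = c 1 y)
    (hl : ∀ t, 1 ≤ t → t ≤ h → c t 0 = 0) (hr : ∀ t, 1 ≤ t → t ≤ h → c t h = 0)
    (hc : ∀ t y, t + 2 ≤ h → y + 2 ≤ h →
      c (t + 2) (y + 1) + c t (y + 1) = c (t + 1) y + c (t + 1) (y + 2))
    (t : ℕ) (ht : t ≤ h) (y : ℕ) (hy : 1 ≤ y) (hy' : y < h) : u t y = c t y := by
  induction t using Nat.twoStepInduction generalizing y with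
  | zero => exact h0 y hy hy'
  | one => exact h1 y hy hy'
  | more t ih1 ih2 =>
    obtain ⟨y, rfl⟩ : ∃ z, y = z + 1 := ⟨y - 1, by omega⟩
    have e : ∀ z ≤ h, u (t + 1) z = c (t + 1) z := by
      intro z hz
      rcases Nat.eq_zero_or_pos z with rfl | hz0
      · rw [hu.left, hl _ (by omega) (by omega), Int.cast_zero]
      rcases eq_or_lt_of_le hz with rfl | hz1
      · rw [hu.right, hr _ (by omega) (by omega), Int.cast_zero]
      · exact ih2 (by omega) z hz0 hz1
    have e1 := hu.wave t y (by omega)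
    have e2 : (c (t + 2) (y + 1) : ℝ) + c t (y + 1) = c (t + 1) y + c (t + 1) (y + 2) := by
      exact_mod_cast hc t y (by omega) (by omega)
    rw [e y (by omega), e (y + 2) (by omega), ih1 (by omega) _ hy hy'] at e1
    linarith

/-- The solution on the path with initial values `-1, 1`. -/
def solA (h t y : ℕ) : ℤ :=
  min (min (2 * (t : ℤ) - 1) (2 * y)) (min (2 * ((h : ℤ) - y)) (2 * (h : ℤ) - 2 * t + 1))

/-- The solution on the path `0, …, 2c` with initial values `-1, 1` at the midpoint `c`, and
zero elsewhere. -/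
def solMid (c t y : ℕ) : ℤ :=
  if t = 0 then (if y = c then -1 else 0) else
    (if c + 1 ≤ y + t ∧ y + 1 ≤ c + t then 1 else 0) - (if y + c + 1 ≤ t then 1 else 0)
      - (if 3 * c + 1 ≤ t + y then 1 else 0)

theorem solA_wave (h t y : ℕ) (_ht : t + 2 ≤ h) (_hy : y + 2 ≤ h) :
    solA h (t + 2) (y + 1) + solA h t (y + 1) = solA h (t + 1) y + solA h (t + 1) (y + 2) := by
  unfold solA; push_cast; omega

theorem solMid_succ (c t y : ℕ) : solMid c (t + 1) y =
    (if c + 1 ≤ y + (t + 1) ∧ y + 1 ≤ c + (t + 1) then 1 else 0)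
      - (if y + c + 1 ≤ t + 1 then 1 else 0) - (if 3 * c + 1 ≤ t + 1 + y then 1 else 0) := by
  rw [solMid, if_neg (Nat.succ_ne_zero t)]

theorem solMid_wave (c t y : ℕ) (ht : t + 2 ≤ 2 * c) (hy : y + 2 ≤ 2 * c) :
    solMid c (t + 2) (y + 1) + solMid c t (y + 1)
      = solMid c (t + 1) y + solMid c (t + 1) (y + 2) := by
  rcases t with - | t
  · rw [solMid_succ c 1, solMid_succ c 0, solMid_succ c 0, solMid, if_pos rfl,
      if_neg (c := y + 1 + c + 1 ≤ 1 + 1) (by omega),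
      if_neg (c := 3 * c + 1 ≤ 1 + 1 + (y + 1)) (by omega),
      if_neg (c := y + c + 1 ≤ 0 + 1) (by omega),
      if_neg (c := 3 * c + 1 ≤ 0 + 1 + y) (by omega),
      if_neg (c := y + 2 + c + 1 ≤ 0 + 1) (by omega),
      if_neg (c := 3 * c + 1 ≤ 0 + 1 + (y + 2)) (by omega)]
    split_ifs <;> omega
  · have f1 : (if c + 1 ≤ y + 1 + (t + 1 + 2) ∧ y + 1 + 1 ≤ c + (t + 1 + 2) then (1 : ℤ) else 0)
        + (if c + 1 ≤ y + 1 + (t + 1) ∧ y + 1 + 1 ≤ c + (t + 1) then 1 else 0)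
        = (if c + 1 ≤ y + (t + 1 + 1) ∧ y + 1 ≤ c + (t + 1 + 1) then 1 else 0)
        + (if c + 1 ≤ y + 2 + (t + 1 + 1) ∧ y + 2 + 1 ≤ c + (t + 1 + 1) then 1 else 0) := by
      split_ifs <;> omega
    have f2 : (if y + 1 + c + 1 ≤ t + 1 + 2 then (1 : ℤ) else 0) + (if y + 1 + c + 1 ≤ t + 1 then 1 else 0)
        = (if y + c + 1 ≤ t + 1 + 1 then 1 else 0) + (if y + 2 + c + 1 ≤ t + 1 + 1 then 1 else 0) := by
      split_ifs <;> omega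
    have f3 : (if 3 * c + 1 ≤ t + 1 + 2 + (y + 1) then (1 : ℤ) else 0)
        + (if 3 * c + 1 ≤ t + 1 + (y + 1) then 1 else 0)
        = (if 3 * c + 1 ≤ t + 1 + 1 + y then 1 else 0)
        + (if 3 * c + 1 ≤ t + 1 + 1 + (y + 2) then 1 else 0) := by
      split_ifs <;> omega
    rw [solMid_succ c (t + 2), solMid_succ, solMid_succ c (t + 1), solMid_succ c (t + 1)]
    linarith

theorem solA_pos (h t y : ℕ) (ht : 1 ≤ t) (ht' : t ≤ h) (hy : 1 ≤ y) (hy' : y < h) :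
    0 < solA h t y := by
  unfold solA; omega

theorem solMid_nonneg (c t y : ℕ) (ht : 1 ≤ t) (ht' : t ≤ 2 * c) (hy : 1 ≤ y) (hy' : y < 2 * c) :
    0 ≤ solMid c t y := by
  unfold solMid
  split_ifs <;> omega

/-- The wave with initial values `-1, 1` is positive from time `1` to time `h`. -/
theorem IsPath.solA (hu : IsPath h u) (h0 : ∀ y, 1 ≤ y → y < h → u 0 y = -1)
    (h1 : ∀ y, 1 ≤ y → y < h → u 1 y = 1) (t : ℕ) (ht : 1 ≤ t) (ht' : t ≤ h) (y : ℕ)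
    (hy : 1 ≤ y) (hy' : y < h) : 0 < u t y := by
  rw [hu.eq_closed (c := _root_.solA h) ?_ ?_ ?_ ?_ (solA_wave h) t ht' y hy hy']
  · exact_mod_cast solA_pos h t y ht ht' hy hy'
  · intro y hy hy'
    rw [h0 y hy hy', show _root_.solA h 0 y = -1 by unfold _root_.solA; omega]; simp
  · intro y hy hy'
    rw [h1 y hy hy', show _root_.solA h 1 y = 1 by unfold _root_.solA; omega]; simp
  · intro t ht ht'; unfold _root_.solA; omega
  · intro t ht ht'; unfold _root_.solA; omega

/-- The wave with initial values `-1, 1`, doubled at the midpoint, is positive from time `1` to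
time `2c`. -/
theorem IsPath.solMid {c : ℕ} (hu : IsPath (2 * c) u)
    (h0 : ∀ y, 1 ≤ y → y < 2 * c → u 0 y = if y = c then -2 else -1)
    (h1 : ∀ y, 1 ≤ y → y < 2 * c → u 1 y = if y = c then 2 else 1)
    (t : ℕ) (ht : 1 ≤ t) (ht' : t ≤ 2 * c) (y : ℕ)
    (hy : 1 ≤ y) (hy' : y < 2 * c) : 0 < u t y := by
  rw [hu.eq_closed (c := fun t y => _root_.solA (2 * c) t y + _root_.solMid c t y)
    ?_ ?_ ?_ ?_ ?_ t ht' y hy hy']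
  · exact_mod_cast add_pos_of_pos_of_nonneg (solA_pos _ t y ht ht' hy hy')
      (solMid_nonneg c t y ht ht' hy hy')
  · intro y hy hy'
    rw [h0 y hy hy', show _root_.solA (2 * c) 0 y = -1 by unfold _root_.solA; omega,
      _root_.solMid, if_pos rfl]
    split_ifs <;> norm_num
  · intro y hy hy'
    rw [h1 y hy hy', show _root_.solA (2 * c) 1 y = 1 by unfold _root_.solA; omega,
      show _root_.solMid c 1 y = if y = c then 1 else 0 by
        unfold _root_.solMid; split_ifs <;> omega]
    split_ifs <;> norm_num
  · intro t ht ht'; unfold _root_.solA _root_.solMid; split_ifs <;> omega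
  · intro t ht ht'; unfold _root_.solA _root_.solMid; split_ifs <;> omega
  · intro t y ht hy
    have e1 := solA_wave (2 * c) t y ht hy
    have e2 := solMid_wave c t y ht hy
    linarith

end Paths

section Graphs

open Classical in
/-- Sum over the neighbours of a vertex. -/
noncomputable def nsum {W : Type} [Fintype W] (G : SimpleGraph W) (x : W → ℝ) (v : W) : ℝ :=
  ∑ w, if G.Adj v w then x w else 0

/-- The two properties of a Dynkin diagram with Coxeter number `h` that are used, stated for the
solutions of `u (t + 1) + u (t - 1) = (sum over neighbours of) u t`. -/
def GoodCox {W : Type} [Fintype W] (G : SimpleGraph W) (h : ℕ) : Prop :=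
  ∀ u : ℕ → W → ℝ, (∀ t v, u (t + 2) v + u t v = nsum G (u (t + 1)) v) →
    ((∀ v, u 0 v = 0) → ∀ v, u h v = 0) ∧
    ((∀ v, u 0 v = -1) → (∀ v, u 1 v = 1) →
      (∀ t, 1 ≤ t → t ≤ h → ∀ v, 0 < u t v) ∧ ∀ v, u h v = 1)

theorem GoodCox.iso {W W' : Type} [Fintype W] [Fintype W'] {G : SimpleGraph W}
    {G' : SimpleGraph W'} (e : G ≃g G') {h : ℕ} (hG : GoodCox G' h) : GoodCox G h := by
  intro u hu
  have := hG (fun t w => u t (e.symm w)) (fun t w => by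
    rw [hu, nsum, nsum, ← e.symm.toEquiv.sum_comp]
    refine Finset.sum_congr rfl fun x _ => ?_
    have : G.Adj (e.symm w) (e.symm.toEquiv x) ↔ G'.Adj w x := e.symm.map_adj_iff
    by_cases hh : G'.Adj w x
    · rw [if_pos (this.2 hh), if_pos hh]; rfl
    · rw [if_neg (mt this.1 hh), if_neg hh])
  obtain ⟨h1, h2⟩ := this
  refine ⟨fun h0 v => ?_, fun h0 h0' => ⟨fun t ht ht' v => ?_, fun v => ?_⟩⟩
  · rw [← e.symm_apply_apply v]; exact h1 (fun v => h0 _) (e v)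
  · rw [← e.symm_apply_apply v]; exact (h2 (fun v => h0 _) (fun v => h0' _)).1 t ht ht' (e v)
  · rw [← e.symm_apply_apply v]; exact (h2 (fun v => h0 _) (fun v => h0' _)).2 (e v)

/-- Extension by zero of a function on `Fin n`, shifted by one. -/
noncomputable def ext1 {n : ℕ} (x : Fin n → ℝ) (y : ℕ) : ℝ :=
  ∑ w : Fin n, if (w : ℕ) + 1 = y then x w else 0

theorem ext1_succ {n : ℕ} (x : Fin n → ℝ) (i : Fin n) : ext1 x (i + 1) = x i := by
  have : ∀ w : Fin n, ((w : ℕ) + 1 = i + 1) ↔ w = i := fun w => by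
    rw [Fin.ext_iff]; omega
  rw [ext1]
  simp only [this]
  simp

theorem ext1_of_pos {n : ℕ} (x : Fin n → ℝ) {y : ℕ} (h1 : 1 ≤ y) (h2 : y ≤ n) :
    ext1 x y = x ⟨y - 1, by omega⟩ := by
  rw [← ext1_succ x ⟨y - 1, by omega⟩]
  congr 1
  simp only
  omega

theorem ext1_zero {n : ℕ} (x : Fin n → ℝ) : ext1 x 0 = 0 := by simp [ext1]

theorem ext1_last {n : ℕ} (x : Fin n → ℝ) : ext1 x (n + 1) = 0 :=
  Finset.sum_eq_zero fun w _ => if_neg (by have := w.2; omega)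

theorem nsum_adeA {n : ℕ} (x : Fin n → ℝ) (i : Fin n) :
    nsum (adeA n) x i = ext1 x i + ext1 x (i + 2) := by
  rw [nsum, ext1, ext1, ← Finset.sum_add_distrib]
  refine Finset.sum_congr rfl fun w _ => ?_
  have : (adeA n).Adj i w ↔ (w : ℕ) + 1 = i ∨ (w : ℕ) + 1 = i + 2 := by
    simp only [adeA, SimpleGraph.fromRel_adj, ne_eq, Fin.ext_iff]
    omega
  rw [this]
  split_ifs <;> first | omega | simp

theorem goodCox_A (n : ℕ) : GoodCox (adeA n) (n + 1) := by
  intro u hu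
  have hP : IsPath (n + 1) (fun t => ext1 (u t)) := by
    refine ⟨fun t => ext1_zero _, fun t => ext1_last _, fun t y hy => ?_⟩
    have := hu t ⟨y, by omega⟩
    rw [nsum_adeA, ← ext1_succ (u (t + 2)), ← ext1_succ (u t)] at this
    exact this
  refine ⟨fun h0 v => ?_, fun h0 h1 => ⟨fun t ht ht' v => ?_, fun v => ?_⟩⟩
  · have := hP.reflect (v + 1) (by have := v.2; omega)
    beta_reduce at this
    rw [ext1_succ, ext1_of_pos _ (by have := v.2; omega) (by omega), h0, neg_zero] at this
    exact this
  · have := hP.solA (fun y h1 h2 => by rw [ext1_of_pos _ h1 (by omega), h0])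
      (fun y hy h2 => by rw [ext1_of_pos _ hy (by omega), h1])
      t ht ht' (v + 1) (by omega) (by have := v.2; omega)
    beta_reduce at this
    rwa [ext1_succ] at this
  · have := hP.reflect (v + 1) (by have := v.2; omega)
    beta_reduce at this
    rw [ext1_succ, ext1_of_pos _ (by have := v.2; omega) (by omega), h0, neg_neg] at this
    exact this

end Graphs

/-! ### Type D -/

section TypeD

theorem nsum_adeD_path {k : ℕ} (x : Fin (k + 4) → ℝ) (i : Fin (k + 4)) (hi : (i : ℕ) ≤ k) :
    nsum (adeD (k + 4)) x i = ext1 x i + ext1 x (i + 2) := by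
  rw [nsum, ext1, ext1, ← Finset.sum_add_distrib]
  refine Finset.sum_congr rfl fun w _ => ?_
  have : (adeD (k + 4)).Adj i w ↔ (w : ℕ) + 1 = i ∨ (w : ℕ) + 1 = i + 2 := by
    simp only [adeD, SimpleGraph.fromRel_adj, ne_eq, Fin.ext_iff]
    omega
  rw [this]
  split_ifs <;> first | omega | simp

theorem nsum_adeD_branch {k : ℕ} (x : Fin (k + 4) → ℝ) (i : Fin (k + 4)) (hi : (i : ℕ) = k + 1) :
    nsum (adeD (k + 4)) x i = ext1 x (k + 1) + (ext1 x (k + 3) + ext1 x (k + 4)) := by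
  rw [nsum, ext1, ext1, ext1, ← Finset.sum_add_distrib, ← Finset.sum_add_distrib]
  refine Finset.sum_congr rfl fun w _ => ?_
  have : (adeD (k + 4)).Adj i w ↔
      (w : ℕ) + 1 = k + 1 ∨ (w : ℕ) + 1 = k + 3 ∨ (w : ℕ) + 1 = k + 4 := by
    simp only [adeD, SimpleGraph.fromRel_adj, ne_eq, Fin.ext_iff]
    have := w.2
    omega
  rw [this]
  split_ifs <;> first | omega | simp

theorem nsum_adeD_leaf {k : ℕ} (x : Fin (k + 4) → ℝ) (i : Fin (k + 4)) (hi : k + 2 ≤ (i : ℕ)) :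
    nsum (adeD (k + 4)) x i = ext1 x (k + 2) := by
  rw [nsum, ext1]
  refine Finset.sum_congr rfl fun w _ => ?_
  have : (adeD (k + 4)).Adj i w ↔ (w : ℕ) + 1 = k + 2 := by
    simp only [adeD, SimpleGraph.fromRel_adj, ne_eq, Fin.ext_iff]
    have := w.2
    have := i.2
    omega
  simp only [this]

/-- Unfolding of a function on `D_{k+4}` to the path of length `2 (k + 3)`: the two leaves at the
fork are added up at the midpoint and the long leg is reflected. -/
noncomputable def unfoldD {k : ℕ} (x : Fin (k + 4) → ℝ) (y : ℕ) : ℝ :=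
  if y < k + 3 then ext1 x y else if y = k + 3 then ext1 x (k + 3) + ext1 x (k + 4)
  else ext1 x (2 * (k + 3) - y)

theorem unfoldD_lt {k : ℕ} (x : Fin (k + 4) → ℝ) {y : ℕ} (hy : y < k + 3) :
    unfoldD x y = ext1 x y := if_pos hy

theorem unfoldD_mid {k : ℕ} (x : Fin (k + 4) → ℝ) :
    unfoldD x (k + 3) = ext1 x (k + 3) + ext1 x (k + 4) := by
  rw [unfoldD, if_neg (by omega), if_pos rfl]

theorem unfoldD_gt {k : ℕ} (x : Fin (k + 4) → ℝ) {y z : ℕ} (hy : k + 3 < y)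
    (hz : y + z = 2 * (k + 3)) : unfoldD x y = ext1 x z := by
  rw [unfoldD, if_neg (by omega), if_neg (by omega)]
  congr 1
  omega

theorem isPath_unfoldD {k : ℕ} {u : ℕ → Fin (k + 4) → ℝ}
    (hu : ∀ t v, u (t + 2) v + u t v = nsum (adeD (k + 4)) (u (t + 1)) v) :
    IsPath (2 * (k + 3)) (fun t => unfoldD (u t)) := by
  have wave : ∀ t y, y ≤ k + 1 → unfoldD (u (t + 2)) (y + 1) + unfoldD (u t) (y + 1) =
      unfoldD (u (t + 1)) y + unfoldD (u (t + 1)) (y + 2) := by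
    intro t y hy
    have := hu t ⟨y, by omega⟩
    rw [← ext1_succ (u (t + 2)), ← ext1_succ (u t)] at this
    rw [unfoldD_lt _ (by omega), unfoldD_lt _ (by omega), unfoldD_lt _ (by omega)]
    refine this.trans ?_
    rcases Nat.lt_or_ge y (k + 1) with h | h
    · rw [nsum_adeD_path _ _ (by simp only; omega), unfoldD_lt _ (by omega)]
    · obtain rfl : y = k + 1 := by omega
      rw [nsum_adeD_branch _ _ rfl, unfoldD_mid]
  refine ⟨fun t => ?_, fun t => ?_, fun t y hy => ?_⟩
  · rw [unfoldD_lt _ (by omega), ext1_zero]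
  · rw [unfoldD_gt (z := 0) _ (by omega) (by omega), ext1_zero]
  · rcases lt_trichotomy y (k + 2) with h | rfl | h
    · exact wave t y (by omega)
    · have e1 := hu t ⟨k + 2, by omega⟩
      have e2 := hu t ⟨k + 3, by omega⟩
      rw [← ext1_succ (u (t + 2)), ← ext1_succ (u t), nsum_adeD_leaf _ _ (by simp)] at e1 e2
      rw [unfoldD_mid, unfoldD_mid, unfoldD_lt _ (by omega),
        unfoldD_gt (z := k + 2) _ (by omega) (by omega)]
      change ext1 _ (k + 3) + ext1 _ (k + 3) = _ at e1
      change ext1 _ (k + 4) + ext1 _ (k + 4) = _ at e2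
      linarith
    · obtain ⟨z, hz⟩ : ∃ z, y + z + 2 = 2 * (k + 3) := ⟨2 * (k + 3) - 2 - y, by omega⟩
      have := wave t z (by omega)
      rw [unfoldD_lt (u (t + 2)) (by omega), unfoldD_lt (u t) (by omega),
        unfoldD_lt (u (t + 1)) (y := z) (by omega)] at this
      rw [unfoldD_gt (z := z + 1) (u (t + 2)) (by omega) (by omega),
        unfoldD_gt (z := z + 1) (u t) (by omega) (by omega),
        unfoldD_gt (z := z) (u (t + 1)) (y := y + 2) (by omega) (by omega), this]
      rcases Nat.lt_or_ge (k + 3) y with h' | h'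
      · rw [unfoldD_gt (y := y) (z := z + 2) (u (t + 1)) (by omega) (by omega),
          unfoldD_lt (y := z + 2) _ (by omega)]
        ring
      · rw [show z + 2 = y by omega]
        ring

/-- The difference `d` of the values at the two leaves of the fork satisfies `d (t + 2) = - d t`;
hence equality of the two values persists every two steps. -/
theorem leafD_eq {k : ℕ} {u : ℕ → Fin (k + 4) → ℝ}
    (hu : ∀ t v, u (t + 2) v + u t v = nsum (adeD (k + 4)) (u (t + 1)) v) (s : ℕ)
    (hs : ext1 (u s) (k + 3) = ext1 (u s) (k + 4)) (j : ℕ) :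
    ext1 (u (s + 2 * j)) (k + 3) = ext1 (u (s + 2 * j)) (k + 4) := by
  induction j with
  | zero => exact hs
  | succ j ih =>
    have e1 := hu (s + 2 * j) ⟨k + 2, by omega⟩
    have e2 := hu (s + 2 * j) ⟨k + 3, by omega⟩
    rw [← ext1_succ (u (s + 2 * j + 2)), ← ext1_succ (u (s + 2 * j)),
      nsum_adeD_leaf _ _ (by simp)] at e1 e2
    change ext1 _ (k + 3) + ext1 _ (k + 3) = _ at e1
    change ext1 _ (k + 4) + ext1 _ (k + 4) = _ at e2
    rw [show s + 2 * (j + 1) = s + 2 * j + 2 by ring]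
    linarith

/-- A function on `D_{k+4}` with equal values at the two leaves is determined by its unfolding. -/
theorem eq_of_unfoldD {k : ℕ} {x : Fin (k + 4) → ℝ} (hx : ext1 x (k + 3) = ext1 x (k + 4))
    (v : Fin (k + 4)) : x v = if (v : ℕ) < k + 2 then unfoldD x (v + 1) else
      unfoldD x (k + 3) / 2 := by
  rw [← ext1_succ x v, unfoldD_mid]
  split_ifs with h
  · rw [unfoldD_lt _ (by omega)]
  · have hv : (v : ℕ) + 1 = k + 3 ∨ (v : ℕ) + 1 = k + 4 := by have := v.2; omega
    rcases hv with hv | hv <;> rw [hv] <;> linarith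

theorem unfoldD_const {k : ℕ} {x : Fin (k + 4) → ℝ} {a : ℝ} (hx : ∀ v, x v = a) {y : ℕ}
    (h1 : 1 ≤ y) (h2 : y < 2 * (k + 3)) : unfoldD x y = if y = k + 3 then 2 * a else a := by
  have : ∀ z, 1 ≤ z → z ≤ k + 4 → ext1 x z = a := fun z h1 h2 => by rw [ext1_of_pos _ h1 h2, hx]
  rcases lt_trichotomy y (k + 3) with h | rfl | h
  · rw [unfoldD_lt _ h, if_neg h.ne, this y h1 (by omega)]
  · rw [unfoldD_mid, if_pos rfl, this _ (by omega) (by omega), this _ (by omega) (by omega)]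
    ring
  · rw [unfoldD_gt (z := 2 * (k + 3) - y) _ h (by omega), if_neg h.ne',
      this _ (by omega) (by omega)]

theorem goodCox_D (k : ℕ) : GoodCox (adeD (k + 4)) (2 * (k + 3)) := by
  intro u hu
  have hP := isPath_unfoldD hu
  have leaf : ∀ (s : ℕ) (a : ℝ), (∀ v, u s v = a) →
      ext1 (u s) (k + 3) = ext1 (u s) (k + 4) := fun s a ha => by
    rw [ext1_of_pos _ (by omega) (by omega), ext1_of_pos _ (by omega) (by omega), ha, ha]
  have key : ∀ a : ℝ, (∀ v, u 0 v = -a) → ∀ v, u (2 * (k + 3)) v = a := by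
    intro a ha v
    have d : ext1 (u (2 * (k + 3))) (k + 3) = ext1 (u (2 * (k + 3))) (k + 4) := by
      have := leafD_eq hu 0 (leaf 0 _ ha) (k + 3)
      rwa [zero_add] at this
    have r : ∀ y, 1 ≤ y → y < 2 * (k + 3) →
        unfoldD (u (2 * (k + 3))) y = if y = k + 3 then 2 * a else a := by
      intro y h1 h2
      have := hP.reflect y h2.le
      beta_reduce at this
      rw [this, unfoldD_const ha (by omega) (by omega)]
      split_ifs <;> first | omega | ring
    rw [eq_of_unfoldD d v]
    split_ifs with h
    · rw [r _ (by omega) (by omega), if_neg (by omega)]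
    · rw [r _ (by omega) (by omega), if_pos rfl]
      ring
  refine ⟨fun h0 v => key 0 (by simpa using h0) v, fun h0 h1 => ⟨fun t ht ht' v => ?_, key 1 h0⟩⟩
  have d : ext1 (u t) (k + 3) = ext1 (u t) (k + 4) := by
    rcases Nat.even_or_odd' t with ⟨j, rfl | rfl⟩
    · have := leafD_eq hu 0 (leaf 0 _ h0) j
      rwa [zero_add] at this
    · have := leafD_eq hu 1 (leaf 1 _ h1) j
      rwa [add_comm 1] at this
  have pos := hP.solMid
    (fun y h1 h2 => by rw [unfoldD_const h0 h1 h2]; norm_num)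
    (fun y hy h2 => by rw [unfoldD_const h1 hy h2]; norm_num) t ht ht'
  rw [eq_of_unfoldD d v]
  split_ifs with h
  · exact pos _ (by omega) (by omega)
  · exact half_pos (pos _ (by omega) (by omega))

end TypeD

/-! ### Type E -/

section TypeE

/-- Adjacency in `E_n`, in a form suitable for computation. -/
def eAdj (n v w : ℕ) : Bool :=
  (v + 1 == w && decide (w ≤ n - 2)) || (v == 2 && w == n - 1) ||
  (w + 1 == v && decide (v ≤ n - 2)) || (w == 2 && v == n - 1)

/-- One step of the recursion on `E_n`, for functions stored as lists of values. -/
def eNext (n : ℕ) (a b : List ℤ) : List ℤ :=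
  (List.range n).map fun v =>
    ((List.range n).map fun w => if eAdj n v w then b.getD w 0 else 0).sum - a.getD v 0

/-- The `t`-th and `(t+1)`-st term of the solution on `E_n` with initial terms `a` and `b`. -/
def eRun (n : ℕ) (a b : List ℤ) : ℕ → List ℤ × List ℤ
  | 0 => (a, b)
  | t + 1 => let p := eRun n a b t; (p.2, eNext n p.1 p.2)

theorem eAdj_iff {n : ℕ} (hn : 4 ≤ n) (v w : Fin n) : (adeE n).Adj v w ↔ eAdj n v w := by
  simp only [adeE, SimpleGraph.fromRel_adj, ne_eq, Fin.ext_iff, eAdj, Bool.or_eq_true,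
    Bool.and_eq_true, beq_iff_eq, decide_eq_true_eq]
  have := v.2
  have := w.2
  omega

theorem eNext_getD (n : ℕ) (a b : List ℤ) (v : Fin n) : (eNext n a b).getD v 0 =
    (∑ w : Fin n, if eAdj n v w then b.getD w 0 else 0) - a.getD v 0 := by
  rw [eNext, List.getD_eq_getElem _ _ (by simp)]
  simp only [List.getElem_map, List.getElem_range]
  rw [Fin.sum_univ_eq_sum_range (fun w => if eAdj n v w then b.getD w 0 else 0)]
  rfl

theorem eRun_eq {n : ℕ} (hn : 4 ≤ n) {u : ℕ → Fin n → ℝ}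
    (hu : ∀ t v, u (t + 2) v + u t v = nsum (adeE n) (u (t + 1)) v) {a b : List ℤ}
    (h0 : ∀ v : Fin n, u 0 v = (a.getD v 0 : ℤ)) (h1 : ∀ v : Fin n, u 1 v = (b.getD v 0 : ℤ))
    (t : ℕ) : (∀ v : Fin n, u t v = ((eRun n a b t).1.getD v 0 : ℤ)) ∧
      ∀ v : Fin n, u (t + 1) v = ((eRun n a b t).2.getD v 0 : ℤ) := by
  induction t with
  | zero => exact ⟨h0, h1⟩
  | succ t ih =>
    refine ⟨ih.2, fun v => ?_⟩
    have := hu t v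
    rw [ih.1 v, nsum] at this
    rw [eRun, eNext_getD, Int.cast_sub, Int.cast_sum, eq_sub_iff_add_eq, this]
    refine Finset.sum_congr rfl fun w _ => ?_
    rw [ih.2 w]
    by_cases h : (adeE n).Adj v w
    · rw [if_pos h, if_pos ((eAdj_iff hn v w).1 h)]
    · rw [if_neg h, if_neg (mt (eAdj_iff hn v w).2 h), Int.cast_zero]

/-- The `j`-th unit vector of length `n`. -/
def eUnit (n j : ℕ) : List ℤ := (List.range n).map fun i => if i = j then 1 else 0

theorem nsum_sum {n : ℕ} (G : SimpleGraph (Fin n)) (c : Fin n → ℝ) (x : Fin n → Fin n → ℝ)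
    (v : Fin n) : nsum G (fun w => ∑ j, c j * x j w) v = ∑ j, c j * nsum G (x j) v := by
  simp only [nsum, Finset.mul_sum]
  rw [Finset.sum_comm]
  refine Finset.sum_congr rfl fun w _ => ?_
  split_ifs
  · rfl
  · simp

/-- A finite computation that implies the two properties of the Dynkin diagram `E_n`. -/
theorem goodCox_E {n h : ℕ} (hn : 4 ≤ n)
    (hz : ∀ j < n, ∀ v < n, (eRun n (List.replicate n 0) (eUnit n j) h).1.getD v 0 = 0)
    (hp : ∀ t < h, ∀ v < n, 0 < (eRun n (List.replicate n (-1)) (List.replicate n 1) t).2.getD v 0)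
    (hf : ∀ v < n, (eRun n (List.replicate n (-1)) (List.replicate n 1) h).1.getD v 0 = 1) :
    GoodCox (adeE n) h := by
  have rep : ∀ (a : ℤ) (v : Fin n), (List.replicate n a).getD v 0 = a := fun a v => by
    rw [List.getD_eq_getElem _ _ (by simp), List.getElem_replicate]
  have uni : ∀ (j : ℕ) (v : Fin n), (eUnit n j).getD v 0 = if (v : ℕ) = j then 1 else 0 :=
    fun j v => by
      rw [eUnit, List.getD_eq_getElem _ _ (by simp)]
      simp
  intro u hu
  refine ⟨fun h0 v => ?_, fun h0 h1 => ⟨fun t ht ht' v => ?_, fun v => ?_⟩⟩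
  · -- `u` is the combination, with coefficients `u 1 j`, of the solutions starting from `0, e_j`
    choose F F0 F1 hF using fun j : Fin n => exists_rec
      (fun _ (x : Fin n → ℝ) => nsum (adeE n) x) (0 : Fin n → ℝ) (fun v => if v = j then 1 else 0)
    have hF' : ∀ j t v, F j (t + 2) v + F j t v = nsum (adeE n) (F j (t + 1)) v :=
      fun j t v => congrFun (hF j t) v
    have key : ∀ t, (∀ v, u t v = ∑ j, u 1 j * F j t v) ∧
        ∀ v, u (t + 1) v = ∑ j, u 1 j * F j (t + 1) v := by
      intro t
      induction t with
      | zero => exact ⟨fun v => by simp [h0, F0], fun v => by simp [F1]⟩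
      | succ t ih =>
        refine ⟨ih.2, fun v => ?_⟩
        have e := hu t v
        rw [show u (t + 1) = fun w => ∑ j, u 1 j * F j (t + 1) w from funext ih.2, nsum_sum,
          ih.1 v] at e
        simp only [← hF', mul_add, Finset.sum_add_distrib] at e
        exact add_right_cancel e
    rw [(key h).1 v]
    refine Finset.sum_eq_zero fun j _ => ?_
    rw [(eRun_eq hn (hF' j) (a := List.replicate n 0) (b := eUnit n j)
      (fun v => by rw [rep, F0]; simp) (fun v => by rw [uni, F1]; simp [Fin.ext_iff]) h).1 v,
      hz j j.2 v v.2]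
    simp
  · obtain ⟨t, rfl⟩ : ∃ s, t = s + 1 := ⟨t - 1, by omega⟩
    rw [(eRun_eq hn hu (a := List.replicate n (-1)) (b := List.replicate n 1)
      (fun v => by rw [rep, h0]; simp) (fun v => by rw [rep, h1]; simp) t).2 v]
    exact_mod_cast hp t (by omega) v v.2
  · rw [(eRun_eq hn hu (a := List.replicate n (-1)) (b := List.replicate n 1)
      (fun v => by rw [rep, h0]; simp) (fun v => by rw [rep, h1]; simp) h).1 v, hf v v.2]
    simp

theorem goodCox_E6 : GoodCox (adeE 6) 12 :=
  goodCox_E (by norm_num) (by decide +kernel) (by decide +kernel) (by decide +kernel)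

theorem goodCox_E7 : GoodCox (adeE 7) 18 :=
  goodCox_E (by norm_num) (by decide +kernel) (by decide +kernel) (by decide +kernel)

theorem goodCox_E8 : GoodCox (adeE 8) 30 :=
  goodCox_E (by norm_num) (by decide +kernel) (by decide +kernel) (by decide +kernel)

theorem goodCox_of_hasCoxeterNumber {W : Type} [Fintype W] {G : SimpleGraph W} {h : ℕ}
    (hG : HasCoxeterNumber G h) : 1 ≤ h ∧ GoodCox G h := by
  rcases hG with ⟨n, hn, rfl, ⟨e⟩⟩ | ⟨n, hn, rfl, ⟨e⟩⟩ | ⟨rfl, ⟨e⟩⟩ | ⟨rfl, ⟨e⟩⟩ | ⟨rfl, ⟨e⟩⟩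
  · exact ⟨by omega, (goodCox_A n).iso e⟩
  · obtain ⟨k, rfl⟩ : ∃ k, n = k + 4 := ⟨n - 4, by omega⟩
    rw [show 2 * (k + 4) - 2 = 2 * (k + 3) by omega]
    exact ⟨by omega, (goodCox_D k).iso e⟩
  · exact ⟨by omega, goodCox_E6.iso e⟩
  · exact ⟨by omega, goodCox_E7.iso e⟩
  · exact ⟨by omega, goodCox_E8.iso e⟩

end TypeE

/-! ### From components to the adjacency operator -/

section Assemble

variable {V : Type} [Fintype V] [DecidableEq V]

/-- On a component, the adjacency operator is the sum over the neighbours inside the component. -/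
theorem nsum_component {A : V → V → ℕ} (hA : ∀ u v, A u v = A v u) (hA0 : ∀ v, A v v = 0)
    (hA1 : ∀ u v, A u v ≤ 1) (c : (graphOf A).ConnectedComponent) [Fintype c.supp]
    (x : V → ℝ) (v : c.supp) :
    nsum ((graphOf A).induce c.supp) (fun w => x w) v = adjOp A x v := by
  classical
  have hadj : ∀ v w, (graphOf A).Adj v w ↔ A v w = 1 := by
    intro v w
    rw [graphOf, SimpleGraph.fromRel_adj, hA w v, or_self, and_iff_right_iff_imp]
    rintro h rfl
    rw [hA0] at h
    exact zero_ne_one h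
  have hterm : ∀ w, (A v w : ℝ) * x w = if (graphOf A).Adj v w then x w else 0 := by
    intro w
    rw [hadj]
    split_ifs with h
    · rw [h]; simp
    · rw [show A v w = 0 by have := hA1 v w; omega]; simp
  rw [adjOp_apply, nsum]
  simp only [hterm, SimpleGraph.comap_adj, Function.Embedding.subtype_apply]
  rw [← Finset.sum_subset (Finset.subset_univ c.supp.toFinset) (fun w _ hw => if_neg fun h => hw ?_)]
  · rw [Finset.sum_subtype (p := (· ∈ c.supp)) c.supp.toFinset (fun w => Set.mem_toFinset)]
  · rw [Set.mem_toFinset, SimpleGraph.ConnectedComponent.mem_supp_iff,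
      ← SimpleGraph.ConnectedComponent.sound h.reachable]
    exact v.2

/-- If all components have Coxeter number `h = m + 1`, the adjacency operator has the property
`Cox`. -/
theorem cox_of_components [Nonempty V] {A : V → V → ℕ} (hA : ∀ u v, A u v = A v u)
    (hA0 : ∀ v, A v v = 0) (hA1 : ∀ u v, A u v ≤ 1) {h : ℕ}
    (hcox : ∀ c : (graphOf A).ConnectedComponent,
      HasCoxeterNumber ((graphOf A).induce c.supp) h) :
    ∃ m, h = m + 1 ∧ Cox (adjOp A) m := by
  classical
  have hgood : ∀ c : (graphOf A).ConnectedComponent, 1 ≤ h ∧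
      GoodCox ((graphOf A).induce c.supp) h := fun c =>
    goodCox_of_hasCoxeterNumber (hcox c)
  obtain ⟨v₀⟩ := ‹Nonempty V›
  obtain ⟨m, rfl⟩ : ∃ m, h = m + 1 :=
    ⟨h - 1, by have := (hgood ((graphOf A).connectedComponentMk v₀)).1; omega⟩
  have comp : ∀ u : ℕ → V → ℝ, (∀ t, u (t + 2) + u t = adjOp A (u (t + 1))) →
      ((∀ v, u 0 v = 0) → ∀ v, u (m + 1) v = 0) ∧
      ((∀ v, u 0 v = -1) → (∀ v, u 1 v = 1) →
        (∀ t, 1 ≤ t → t ≤ m + 1 → ∀ v, 0 < u t v) ∧ ∀ v, u (m + 1) v = 1) := by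
    intro u hu
    have := fun v : V => (hgood ((graphOf A).connectedComponentMk v)).2 (fun t w => u t w)
      (fun t w => by
        rw [nsum_component hA hA0 hA1, ← hu]; rfl)
    refine ⟨fun h0 v => ?_, fun h0 h1 => ⟨fun t ht ht' v => ?_, fun v => ?_⟩⟩
    · exact (this v).1 (fun w => h0 _) ⟨v, rfl⟩
    · exact ((this v).2 (fun w => h0 _) (fun w => h1 _)).1 t ht ht' ⟨v, rfl⟩
    · exact ((this v).2 (fun w => h0 _) (fun w => h1 _)).2 ⟨v, rfl⟩
  have sol : ∀ x y : V → ℝ, ∃ u : ℕ → V → ℝ, u 0 = x ∧ u 1 = y ∧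
      (∀ t, u (t + 2) + u t = adjOp A (u (t + 1))) ∧
      ∀ t, u (t + 1) = cheb (adjOp A) (t + 1) y - cheb (adjOp A) t x := by
    intro x y
    obtain ⟨u, u0, u1, hu⟩ := exists_rec (fun _ z => adjOp A z) x y
    refine ⟨u, u0, u1, hu, fun t => ?_⟩
    have := cheb_sol (adjOp A) (u := u) 0 t (fun i _ => ?_) t le_rfl
    · simpa [u0, u1] using this
    · have := hu i
      simpa using this
  obtain ⟨u, u0, u1, hu, huc⟩ := sol (-1) 1
  obtain ⟨pos, fix⟩ := (comp u hu).2 (fun v => by rw [u0]; rfl) (fun v => by rw [u1]; rfl)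
  have zero : cheb (adjOp A) (m + 1) = 0 := by
    refine LinearMap.ext fun y => ?_
    obtain ⟨w, w0, w1, hw, hwc⟩ := sol 0 y
    have := funext ((comp w hw).1 (fun v => by rw [w0]; rfl))
    rw [hwc, map_zero, sub_zero] at this
    rw [this]; rfl
  refine ⟨m, rfl, zero, fun n hn v => ?_, ?_⟩
  · have := pos (n + 1) (by omega) (by omega) v
    rw [huc, map_neg, sub_neg_eq_add] at this
    exact this
  · have := funext fix
    rw [huc, map_neg, sub_neg_eq_add, zero, LinearMap.zero_apply, zero_add] at this
    exact this

end Assemble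

/-! ### Positive rational functions and tropical limits -/

section Transfer

open Filter Topology

variable {V : Type} [Fintype V]

/-- The rational function `τ` is a quotient of two polynomials that are positive at all positive
real points, and `X` is the function it defines on these points. -/
def PosRep (τ : FractionRing (MvPolynomial V ℚ)) (X : (V → PR) → ℝ) : Prop :=
  ∃ P Q : MvPolynomial V ℚ, (∀ α : V → PR, 0 < MvPolynomial.aeval (fun v => (α v : ℝ)) P ∧
      0 < MvPolynomial.aeval (fun v => (α v : ℝ)) Q ∧
      X α = MvPolynomial.aeval (fun v => (α v : ℝ)) P / MvPolynomial.aeval (fun v => (α v : ℝ)) Q) ∧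
    τ = algebraMap _ _ P / algebraMap _ _ Q

variable {τ σ : FractionRing (MvPolynomial V ℚ)} {X Y : (V → PR) → ℝ}

theorem poly_eq {P Q : MvPolynomial V ℚ} (h : ∀ α : V → PR,
    MvPolynomial.aeval (fun v => (α v : ℝ)) P = MvPolynomial.aeval (fun v => (α v : ℝ)) Q) :
    P = Q := by
  apply MvPolynomial.map_injective (algebraMap ℚ ℝ) (algebraMap ℚ ℝ).injective
  refine MvPolynomial.funext_set (fun _ => Set.Ioi (0 : ℝ)) (fun _ => Set.Ioi_infinite 0)
    fun x hx => ?_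
  have := h (fun v => ⟨x v, hx v (Set.mem_univ v)⟩)
  simpa only [MvPolynomial.aeval_def, MvPolynomial.eval₂_eq_eval_map] using this

theorem algebraMap_ne {P : MvPolynomial V ℚ}
    (h : ∀ α : V → PR, 0 < MvPolynomial.aeval (fun v => (α v : ℝ)) P) :
    algebraMap _ (FractionRing (MvPolynomial V ℚ)) P ≠ 0 := by
  intro h0
  have : P = 0 := (IsFractionRing.injective (MvPolynomial V ℚ)
    (FractionRing (MvPolynomial V ℚ))) (h0.trans (map_zero _).symm)
  have h1 := h (fun _ => ⟨1, one_pos⟩)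
  rw [this, map_zero] at h1
  exact h1.false

theorem PosRep.pos (h : PosRep τ X) (α : V → PR) : 0 < X α := by
  obtain ⟨P, Q, hPQ, -⟩ := h
  rw [(hPQ α).2.2]
  exact div_pos (hPQ α).1 (hPQ α).2.1

theorem PosRep.ne (h : PosRep τ X) : τ ≠ 0 := by
  obtain ⟨P, Q, hPQ, rfl⟩ := h
  exact div_ne_zero (algebraMap_ne fun α => (hPQ α).1) (algebraMap_ne fun α => (hPQ α).2.1)

theorem PosRep.coord (v : V) : PosRep (V := V)
    (algebraMap (MvPolynomial V ℚ) (FractionRing (MvPolynomial V ℚ)) (MvPolynomial.X v)) fun α => (α v : ℝ) :=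
  ⟨MvPolynomial.X v, 1, fun α => by simp [(α v).2], by simp⟩

theorem PosRep.one : PosRep (1 : FractionRing (MvPolynomial V ℚ)) fun _ => 1 :=
  ⟨1, 1, fun α => by simp, by simp⟩

theorem PosRep.add (h : PosRep τ X) (h' : PosRep σ Y) : PosRep (τ + σ) fun α => X α + Y α := by
  obtain ⟨P, Q, hPQ, rfl⟩ := h
  obtain ⟨P', Q', hPQ', rfl⟩ := h'
  refine ⟨P * Q' + Q * P', Q * Q', fun α => ?_, ?_⟩
  · obtain ⟨h1, h2, h3⟩ := hPQ α
    obtain ⟨h1', h2', h3'⟩ := hPQ' α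
    simp only [map_add, map_mul]
    refine ⟨by positivity, by positivity, ?_⟩
    rw [h3, h3', div_add_div _ _ h2.ne' h2'.ne']
  · rw [div_add_div _ _ (algebraMap_ne fun α => (hPQ α).2.1) (algebraMap_ne fun α => (hPQ' α).2.1)]
    simp only [map_add, map_mul]

theorem PosRep.mul (h : PosRep τ X) (h' : PosRep σ Y) : PosRep (τ * σ) fun α => X α * Y α := by
  obtain ⟨P, Q, hPQ, rfl⟩ := h
  obtain ⟨P', Q', hPQ', rfl⟩ := h'
  refine ⟨P * P', Q * Q', fun α => ?_, ?_⟩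
  · obtain ⟨h1, h2, h3⟩ := hPQ α
    obtain ⟨h1', h2', h3'⟩ := hPQ' α
    simp only [map_mul]
    refine ⟨by positivity, by positivity, ?_⟩
    rw [h3, h3', div_mul_div_comm]
  · rw [div_mul_div_comm]
    simp only [map_mul]

theorem PosRep.div (h : PosRep τ X) (h' : PosRep σ Y) : PosRep (τ / σ) fun α => X α / Y α := by
  obtain ⟨P, Q, hPQ, rfl⟩ := h
  obtain ⟨P', Q', hPQ', rfl⟩ := h'
  refine ⟨P * Q', Q * P', fun α => ?_, ?_⟩
  · obtain ⟨h1, h2, h3⟩ := hPQ α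
    obtain ⟨h1', h2', h3'⟩ := hPQ' α
    simp only [map_mul]
    refine ⟨by positivity, by positivity, ?_⟩
    rw [h3, h3', div_div_div_eq]
  · rw [div_div_div_eq]
    simp only [map_mul]

theorem PosRep.pow (h : PosRep τ X) (n : ℕ) : PosRep (τ ^ n) fun α => X α ^ n := by
  induction n with
  | zero => simpa using PosRep.one
  | succ n ih => simpa only [pow_succ] using ih.mul h

theorem PosRep.prod {ι : Type} (s : Finset ι) {τ : ι → FractionRing (MvPolynomial V ℚ)}
    {X : ι → (V → PR) → ℝ} (e : ι → ℕ) (h : ∀ i, e i ≠ 0 → PosRep (τ i) (X i)) :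
    PosRep (∏ i ∈ s, τ i ^ e i) fun α => ∏ i ∈ s, X i α ^ e i := by
  classical
  induction s using Finset.induction_on with
  | empty => simpa using PosRep.one
  | insert i s hi ih =>
    simp only [Finset.prod_insert hi]
    refine PosRep.mul ?_ ih
    by_cases he : e i = 0
    · simpa [he] using PosRep.one
    · exact (h i he).pow _

theorem PosRep.fun_eq (h : PosRep τ X) (h' : PosRep τ Y) (α : V → PR) : X α = Y α := by
  obtain ⟨P, Q, hPQ, rfl⟩ := h
  obtain ⟨P', Q', hPQ', he⟩ := h'
  rw [div_eq_div_iff (algebraMap_ne fun α => (hPQ α).2.1) (algebraMap_ne fun α => (hPQ' α).2.1),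
    ← map_mul, ← map_mul] at he
  have := IsFractionRing.injective (MvPolynomial V ℚ) (FractionRing (MvPolynomial V ℚ)) he
  rw [(hPQ α).2.2, (hPQ' α).2.2, div_eq_div_iff (hPQ α).2.1.ne' (hPQ' α).2.1.ne', ← map_mul, this,
    map_mul]

theorem PosRep.eq (h : PosRep τ X) (h' : PosRep σ X) : τ = σ := by
  obtain ⟨P, Q, hPQ, rfl⟩ := h
  obtain ⟨P', Q', hPQ', rfl⟩ := h'
  rw [div_eq_div_iff (algebraMap_ne fun α => (hPQ α).2.1) (algebraMap_ne fun α => (hPQ' α).2.1),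
    ← map_mul, ← map_mul]
  congr 1
  refine poly_eq fun α => ?_
  rw [map_mul, map_mul, ← div_eq_div_iff (hPQ α).2.1.ne' (hPQ' α).2.1.ne', ← (hPQ α).2.2,
    ← (hPQ' α).2.2]

theorem PosRep.congr (h : PosRep τ X) (hXY : ∀ α, X α = Y α) : PosRep τ Y := by
  rwa [show Y = X from funext fun α => (hXY α).symm]

/-- Induction in both directions of time for a statement about the pairs with `t + ε(v)` even. -/
theorem two_sided {eps : V → ℤ} (heps : ∀ v, eps v = 0 ∨ eps v = 1) {p : ℤ → V → Prop}
    (h0 : ∀ v, p (eps v) v)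
    (hs : ∀ t : ℤ, (∀ v, Even (t + eps v) → p t v) →
      ∀ v, Odd (t + eps v) → (p (t - 1) v → p (t + 1) v) ∧ (p (t + 1) v → p (t - 1) v))
    (t : ℤ) : ∀ v, Even (t + eps v) → p t v := by
  have key : ∀ t : ℤ, (∀ v, Even (t + eps v) → p t v) ∧
      ∀ v, Even (t + 1 + eps v) → p (t + 1) v := by
    intro t
    induction t using Int.induction_on with
    | zero =>
      refine ⟨fun v hv => ?_, fun v hv => ?_⟩ <;> have h := h0 v <;>
        rcases heps v with he | he <;> rw [he] at h hv
      · exact h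
      · exact absurd hv (by decide)
      · exact absurd hv (by decide)
      · exact h
    | succ t ih =>
      refine ⟨ih.2, fun v hv => ((hs _ ih.2 v ?_).1 ?_)⟩
      · rw [Int.even_iff] at hv; rw [Int.odd_iff]; omega
      · rw [add_sub_cancel_right]
        refine ih.1 v ?_
        rw [Int.even_iff] at hv ⊢; omega
    | pred t ih =>
      rw [sub_add_cancel]
      refine ⟨fun v hv => ((hs _ ih.1 v ?_).2 (ih.2 v ?_)), ih.1⟩
      · rw [Int.even_iff] at hv; rw [Int.odd_iff]; omega
      · rw [Int.even_iff] at hv ⊢; omega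
  exact (key t).1

/-- For two vertices joined by an edge, exactly one has `t + ε` even. -/
theorem parity_of_edge {eps : V → ℤ} (heps : ∀ v, eps v = 0 ∨ eps v = 1) {A : V → V → ℕ}
    (hA : ∀ u v, eps u = eps v → A u v = 0) {u v : V} (h : A v u ≠ 0) (t : ℤ) :
    (Odd (t + eps v) ↔ Even (t + eps u)) := by
  have h1 : eps v ≠ eps u := fun he => h (hA v u he)
  rw [Int.even_iff, Int.odd_iff]
  rcases heps u with hu | hu <;> rcases heps v with hv | hv <;> rw [hu, hv] at h1 ⊢ <;> omega

theorem tendsto_log_add_exp_div {p q : ℝ → ℝ} {a b : ℝ}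
    (hp : Tendsto (fun s => p s / s) atTop (𝓝 a)) (hq : Tendsto (fun s => q s / s) atTop (𝓝 b)) :
    Tendsto (fun s => Real.log (Real.exp (p s) + Real.exp (q s)) / s) atTop (𝓝 (max a b)) := by
  have h1 := hp.max hq
  have h2 : Tendsto (fun s : ℝ => Real.log 2 / s) atTop (𝓝 0) :=
    tendsto_const_nhds.div_atTop tendsto_id
  have h3 := h1.add h2
  rw [add_zero] at h3
  refine tendsto_of_tendsto_of_tendsto_of_le_of_le' h1 h3 ?_ ?_ <;>
    filter_upwards [eventually_gt_atTop 0] with s hs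
  · have hm : max (p s) (q s) ≤ Real.log (Real.exp (p s) + Real.exp (q s)) := by
      rw [Real.le_log_iff_exp_le (by positivity)]
      rcases max_choice (p s) (q s) with h | h <;> rw [h] <;>
        linarith [Real.exp_pos (p s), Real.exp_pos (q s)]
    rw [max_div_div_right hs.le]
    exact div_le_div_of_nonneg_right hm hs.le
  · have hm : Real.log (Real.exp (p s) + Real.exp (q s)) ≤ max (p s) (q s) + Real.log 2 := by
      rw [Real.log_le_iff_le_exp (by positivity), Real.exp_add, Real.exp_log two_pos]
      linarith [Real.exp_le_exp.2 (le_max_left (p s) (q s)),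
        Real.exp_le_exp.2 (le_max_right (p s) (q s))]
    rw [max_div_div_right hs.le, ← add_div]
    exact div_le_div_of_nonneg_right hm hs.le

end Transfer

/-! ### The theorem on T-systems -/

section Main

open Filter Topology

variable {V : Type} [Fintype V] [DecidableEq V]

/-- Periodicity of the `T`-systems, with the input on Dynkin diagrams in the form of the property
`Cox` of the two adjacency operators. -/
theorem periodicity_of_cox {eps : V → ℤ} {A B : V → V → ℕ} (hbip : BipartiteData eps A B)
    (hrec : RecurrentQuiver A B) {m m' : ℕ} (cA : Cox (adjOp A) m) (cB : Cox (adjOp B) m')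
    {T : ℤ → V → FractionRing (MvPolynomial V ℚ)} (hT : IsTSystem eps A B T) :
    (∀ (v : V) (t : ℤ), Even (t + eps v) → T (t + 2 * ((m + 1 : ℤ) + (m' + 1))) v = T t v) ∧
    (∀ (lam : V → ℝ) (f : ℤ → V → ℝ), IsTropicalTSystem eps A B lam f →
      ∀ (v : V) (t : ℤ), Even (t + eps v) → f (t + 2 * ((m + 1 : ℤ) + (m' + 1))) v = f t v) := by
  classical
  obtain ⟨heps, hA, hB, -, -, hAB0, hAB⟩ := hbip
  obtain ⟨T0, hTrec⟩ := hT
  have pA : ∀ {v u : V} (t : ℤ), A v u ≠ 0 → (Odd (t + eps v) ↔ Even (t + eps u)) :=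
    fun t h => parity_of_edge heps (fun u v he => (hAB0 u v he).1) h t
  have pB : ∀ {v u : V} (t : ℤ), B v u ≠ 0 → (Odd (t + eps v) ↔ Even (t + eps u)) :=
    fun t h => parity_of_edge heps (fun u v he => (hAB0 u v he).2) h t
  -- the right-hand side of the recursion, evaluated at positive points
  have rhs : ∀ (t : ℤ) (X : V → (V → PR) → ℝ), (∀ v, Even (t + eps v) → PosRep (T t v) (X v)) →
      ∀ v, Odd (t + eps v) → PosRep (T (t + 1) v * T (t - 1) v)
        fun α => (∏ u, X u α ^ A v u) + ∏ u, X u α ^ B v u := by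
    intro t X hX v hv
    rw [hTrec t v hv]
    exact (PosRep.prod _ _ fun u hu => hX u ((pA t hu).1 hv)).add
      (PosRep.prod _ _ fun u hu => hX u ((pB t hu).1 hv))
  have ex : ∀ (t : ℤ) (v : V), ∃ X, Even (t + eps v) → PosRep (T t v) X := by
    intro t v
    by_cases hv : Even (t + eps v)
    · have := two_sided heps (p := fun t v => ∃ X, PosRep (T t v) X)
        (fun v => ⟨_, by rw [T0]; exact PosRep.coord v⟩) ?_ t v hv
      · exact this.imp fun X h _ => h
      · intro t ht v hv
        have ht' : ∀ v, ∃ X, Even (t + eps v) → PosRep (T t v) X := fun v => by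
          by_cases hv : Even (t + eps v)
          · exact (ht v hv).imp fun X h _ => h
          · exact ⟨0, fun h => absurd h hv⟩
        choose X hX using ht'
        have key := rhs t X hX v hv
        constructor
        · rintro ⟨Y, hY⟩
          have := key.div hY
          rw [mul_div_cancel_right₀ _ hY.ne] at this
          exact ⟨_, this⟩
        · rintro ⟨Y, hY⟩
          have := key.div hY
          rw [mul_div_cancel_left₀ _ hY.ne] at this
          exact ⟨_, this⟩
    · exact ⟨0, fun h => absurd h hv⟩
  choose X hX using ex
  have Xrec : ∀ t v, Odd (t + eps v) → ∀ α,
      X (t + 1) v α * X (t - 1) v α = (∏ u, X t u α ^ A v u) + ∏ u, X t u α ^ B v u := by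
    intro t v hv α
    refine ((hX (t + 1) v ?_).mul (hX (t - 1) v ?_)).fun_eq (rhs t (X t) (hX t) v hv) α <;>
      rw [Int.odd_iff] at hv <;> rw [Int.even_iff] <;> omega
  -- extend the positive real solution to all pairs `(t, v)`
  have Xper : ∀ (v : V) (t : ℤ), Even (t + eps v) → ∀ α,
      X (t + 2 * ((m + 1 : ℤ) + (m' + 1))) v α = X t v α := by
    intro v t hv α
    let Y : ℤ → V → ℝ := fun t v => if Even (t + eps v) then X t v α else X (t + 1) v α
    have Ye : ∀ t v, Even (t + eps v) → Y t v = X t v α := fun t v h => if_pos h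
    have Yo : ∀ t v, Odd (t + eps v) → Y t v = X (t + 1) v α := fun t v h =>
      if_neg (Int.not_even_iff_odd.2 h)
    have Ypos : ∀ t v, 0 < Y t v := by
      intro t v
      rcases Int.even_or_odd (t + eps v) with h | h
      · rw [Ye t v h]; exact (hX t v h).pos α
      · rw [Yo t v h]
        refine (hX (t + 1) v ?_).pos α
        rw [Int.odd_iff] at h; rw [Int.even_iff]; omega
    have prod_congr' : ∀ (C : V → V → ℕ) (t s : ℤ) (v : V),
        (∀ u, C v u ≠ 0 → Y t u = X s u α) → ∏ u, Y t u ^ C v u = ∏ u, X s u α ^ C v u := by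
      intro C t s v h
      refine Finset.prod_congr rfl fun u _ => ?_
      by_cases hu : C v u = 0
      · rw [hu, pow_zero, pow_zero]
      · rw [h u hu]
    have Yrec : ∀ t v, Y (t + 1) v * Y (t - 1) v = (∏ u, Y t u ^ A v u) + ∏ u, Y t u ^ B v u := by
      intro t v
      rcases Int.even_or_odd (t + eps v) with h | h
      · have h1 : Odd (t + 1 + eps v) := by rw [Int.even_iff] at h; rw [Int.odd_iff]; omega
        have h2 : Odd (t - 1 + eps v) := by rw [Int.even_iff] at h; rw [Int.odd_iff]; omega
        have odd_of : ∀ u, Even (t + 1 + eps u) → Odd (t + eps u) := fun u hu => by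
          rw [Int.even_iff] at hu; rw [Int.odd_iff]; omega
        rw [Yo _ _ h1, Yo _ _ h2,
          prod_congr' A t (t + 1) v fun u hu => Yo t u (odd_of u ((pA (t + 1) hu).1 h1)),
          prod_congr' B t (t + 1) v fun u hu => Yo t u (odd_of u ((pB (t + 1) hu).1 h1)),
          ← Xrec (t + 1) v h1 α, sub_add_cancel, add_sub_cancel_right]
      · have h1 : Even (t + 1 + eps v) := by rw [Int.odd_iff] at h; rw [Int.even_iff]; omega
        have h2 : Even (t - 1 + eps v) := by rw [Int.odd_iff] at h; rw [Int.even_iff]; omega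
        rw [Ye _ _ h1, Ye _ _ h2, prod_congr' A t t v fun u hu => Ye t u ((pA t hu).1 h),
          prod_congr' B t t v fun u hu => Ye t u ((pB t hu).1 h), ← Xrec t v h α]
    have := real_periodic hA hB hAB hrec cA cB Ypos Yrec t v
    rwa [Ye t v hv, Ye _ v] at this
    rw [Int.even_iff] at hv ⊢
    omega
  have shift : ∀ (v : V) (t : ℤ), Even (t + eps v) →
      Even (t + 2 * ((m + 1 : ℤ) + (m' + 1)) + eps v) := by
    intro v t hv
    rw [Int.even_iff] at hv ⊢
    omega
  refine ⟨fun v t hv => ?_, fun lam f hf v t hv => ?_⟩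
  · exact ((hX _ v (shift v t hv)).congr (Xper v t hv)).eq (hX t v hv)
  · -- rescaled logarithms of the solution with initial values `exp (s * lam v)` tend to `f`
    obtain ⟨f0, hfrec⟩ := hf
    let α : ℝ → V → PR := fun s v => ⟨Real.exp (s * lam v), Real.exp_pos _⟩
    have lim : ∀ (t : ℤ) (v : V), Even (t + eps v) →
        Tendsto (fun s => Real.log (X t v (α s)) / s) atTop (𝓝 (f t v)) := by
      intro t
      refine two_sided heps
        (p := fun t v => Tendsto (fun s => Real.log (X t v (α s)) / s) atTop (𝓝 (f t v)))
        (fun v => ?_) (fun t ht v hv => ?_) t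
      · rw [f0]
        refine tendsto_const_nhds.congr' ?_
        filter_upwards [eventually_gt_atTop 0] with s hs
        have h : PosRep (T (eps v) v) fun α => (α v : ℝ) := by rw [T0]; exact PosRep.coord v
        rw [(hX (eps v) v ⟨eps v, rfl⟩).fun_eq h (α s)]
        change _ = Real.log (Real.exp (s * lam v)) / s
        rw [Real.log_exp, mul_div_cancel_left₀ _ hs.ne']
      · have hp : ∀ u, Even (t + eps u) → ∀ s, 0 < X t u (α s) := fun u hu s => (hX t u hu).pos _
        have h1 : Even (t + 1 + eps v) := by rw [Int.odd_iff] at hv; rw [Int.even_iff]; omega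
        have h2 : Even (t - 1 + eps v) := by rw [Int.odd_iff] at hv; rw [Int.even_iff]; omega
        have side : ∀ C : V → V → ℕ, (∀ u, C v u ≠ 0 → Even (t + eps u)) →
            (∀ s, ∏ u, X t u (α s) ^ C v u =
              Real.exp (∑ u, (C v u : ℝ) * Real.log (X t u (α s)))) ∧
            Tendsto (fun s => (∑ u, (C v u : ℝ) * Real.log (X t u (α s))) / s) atTop
              (𝓝 (∑ u, (C v u : ℝ) * f t u)) := by
          intro C hC
          refine ⟨fun s => ?_, ?_⟩
          · rw [Real.exp_sum]
            refine Finset.prod_congr rfl fun u _ => ?_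
            by_cases hu : C v u = 0
            · simp [hu]
            · rw [← Real.log_pow, Real.exp_log (pow_pos (hp u (hC u hu) s) _)]
          · simp only [Finset.sum_div]
            refine tendsto_finsetSum _ fun u _ => ?_
            by_cases hu : C v u = 0
            · simp [hu]
            · simp only [mul_div_assoc]
              exact (ht u (hC u hu)).const_mul _
        obtain ⟨eA, lA⟩ := side A fun u hu => (pA t hu).1 hv
        obtain ⟨eB, lB⟩ := side B fun u hu => (pB t hu).1 hv
        have L := tendsto_log_add_exp_div lA lB
        rw [← hfrec t v hv] at L
        have eq : ∀ s, Real.log (Real.exp (∑ u, (A v u : ℝ) * Real.log (X t u (α s))) +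
            Real.exp (∑ u, (B v u : ℝ) * Real.log (X t u (α s)))) / s =
            Real.log (X (t + 1) v (α s)) / s + Real.log (X (t - 1) v (α s)) / s := by
          intro s
          rw [← eA, ← eB, ← Xrec t v hv, Real.log_mul ((hX _ v h1).pos _).ne'
            ((hX _ v h2).pos _).ne', add_div]
        simp only [eq] at L
        refine ⟨fun h => ?_, fun h => ?_⟩
        · simpa using L.sub h
        · simpa using L.sub h
    have l1 := lim _ v (shift v t hv)
    simp only [Xper v t hv] at l1
    exact tendsto_nhds_unique l1 (lim t v hv)

end Main

/-- if `G(Q)` is an admissible ADE bigraph in which every connected component of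
`Γ` has Coxeter number `h` and every connected component of `Δ` has Coxeter number `h'`, then
the `T`-system and all tropical `T`-systems are periodic with period `2(h + h')`. -/
theorem tsystem_periodicity_of_admissibleADE
    {V : Type} [Fintype V] [DecidableEq V]
    (eps : V → ℤ) (A B : V → V → ℕ)
    (hbip : BipartiteData eps A B) (hrec : RecurrentQuiver A B)
    (hadm : AdmissibleADE A B)
    (h h' : ℕ)
    (hcoxG : ∀ c : (graphOf A).ConnectedComponent,
      HasCoxeterNumber ((graphOf A).induce c.supp) h)
    (hcoxD : ∀ c : (graphOf B).ConnectedComponent,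
      HasCoxeterNumber ((graphOf B).induce c.supp) h')
    (T : ℤ → V → FractionRing (MvPolynomial V ℚ))
    (hT : IsTSystem eps A B T) :
    (∀ (v : V) (t : ℤ), Even (t + eps v) → T (t + 2 * ((h : ℤ) + h')) v = T t v) ∧
    (∀ (lam : V → ℝ) (f : ℤ → V → ℝ), IsTropicalTSystem eps A B lam f →
      ∀ (v : V) (t : ℤ), Even (t + eps v) → f (t + 2 * ((h : ℤ) + h')) v = f t v) := by
  rcases isEmpty_or_nonempty V with hV | hV
  · exact ⟨fun v => isEmptyElim v, fun _ _ _ v => isEmptyElim v⟩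
  obtain ⟨-, hA, hB, hA0, hB0, -, -⟩ := id hbip
  obtain ⟨m, rfl, cA⟩ := cox_of_components hA hA0 hadm.1 hcoxG
  obtain ⟨m', rfl, cB⟩ := cox_of_components hB hB0 hadm.2.1 hcoxD
  have := periodicity_of_cox hbip hrec cA cB hT
  exact_mod_cast this
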